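/- (Theorem B, case ν > 0) Assume the integrality condition on (μ,ν) with ν > 0, let j ∈ ℕ, and let u : ℝ_+ → ℝ be a smooth function in L²(ℝ_+, x^{μ+ν+1}dx) satisfying D_{μ,ν}u = 4j(j+μ+1)u on ℝ_+. Suppose the limit B := lim_{x→0+} x^ν u(x) exists. Then for all ϑ, φ ∈ [0,π] with cos ϑ + cos φ > 0, ∫₀^∞ u(x) J̃_{μ/2}(ax) J̃_{ν/2}(bx) x^{μ+ν+1} dx = A · ((cos ϑ + cos φ)/2)^{(μ+ν+2)/2} · C̃_j^{(μ+1)/2}(cos ϑ) · C̃_{j+(μ−ν)/2}^{(ν+1)/2}(cos φ), where a = sin ϑ/(cos ϑ + cos φ), b = sin φ/(cos ϑ + cos φ), and the constant A equals A = (−1)^j · (j! 2^{2μ+ν} Γ((μ+2)/2) Γ((μ−ν+2)/2) Γ(j+(μ−ν+2)/2))/(Γ(j+(μ−ν+2)/2) π Γ(j+μ+1)) · (2/Γ(ν/2)) · B. -/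

import Mathlib

open MeasureTheory Real Filter Set Metric

noncomputable section

/-- Normalized Bessel function of the first kind: `J̃_α(x) = (x/2)^{-α} J_α(x)`,
given by its (entire) power series. -/
def besselJt (α x : ℝ) : ℝ :=
  ∑' m : ℕ, (-1) ^ m / (m.factorial * Real.Gamma (m + α + 1)) * (x / 2) ^ (2 * m)

/-- Bessel function of the first kind `J_α`. -/
def besselJ (α x : ℝ) : ℝ :=
  ∑' m : ℕ, (-1) ^ m / (m.factorial * Real.Gamma (m + α + 1)) * (x / 2) ^ (2 * (m : ℝ) + α)

/-- Normalized modified Bessel function `Ĩ_α(x) = (x/2)^{-α} I_α(x)`,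
given by its (entire, even) power series. -/
def besselIt (α x : ℝ) : ℝ :=
  ∑' m : ℕ, (x / 2) ^ (2 * m) / (m.factorial * Real.Gamma (m + α + 1))

/-- Modified Bessel function of the first kind `I_α`. -/
def besselI (α x : ℝ) : ℝ :=
  ∑' m : ℕ, (x / 2) ^ (2 * (m : ℝ) + α) / (m.factorial * Real.Gamma (m + α + 1))

/-- Modified Bessel function of the second kind,
`K_α(x) = lim_{β→α} (π/2)(I_{−β}(x) − I_β(x))/sin(βπ)`. -/
def besselK (α x : ℝ) : ℝ :=
  limUnder (nhdsWithin α {α}ᶜ) fun β =>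
    Real.pi / 2 * (besselI (-β) x - besselI β x) / Real.sin (β * Real.pi)

/-- Normalized K-Bessel function `K̃_α(x) = (x/2)^{-α} K_α(x)`. -/
def besselKt (α x : ℝ) : ℝ := (x / 2) ^ (-α) * besselK α x

/-- Normalized Gegenbauer polynomial `C̃_n^λ = Γ(λ) C_n^λ`, where `C_n^λ` is defined via the
generating function `(1 − 2xt + t²)^{−λ} = Σ_{n≥0} C_n^λ(x) tⁿ`; explicitly,
`C̃_n^λ(x) = Σ_{k=0}^{⌊n/2⌋} (−1)^k Γ(λ+n−k)/(k!(n−2k)!) (2x)^{n−2k}`.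
This expression also gives the limit value `C̃_n^0 = lim_{λ→0+} Γ(λ) C_n^λ` for `n ≥ 1`. -/
def gegenbauerCt (n : ℕ) (l x : ℝ) : ℝ :=
  ∑ k ∈ Finset.range (n / 2 + 1),
    (-1) ^ k * Real.Gamma (l + n - k) / (k.factorial * (n - 2 * k).factorial)
      * (2 * x) ^ (n - 2 * k)

/-- Laguerre polynomial `L_n^μ(x) = Σ_{k=0}^n (−1)^k binom(n+μ, n−k) x^k/k!`
(with nonnegative integer parameter `μ`). -/
def laguerreL (n μ : ℕ) (x : ℝ) : ℝ :=
  ∑ k ∈ Finset.range (n + 1),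
    (-1) ^ k * (Nat.choose (n + μ) (n - k)) * x ^ k / k.factorial

/-- The Euler operator `θ = x d/dx`. -/
def eulerOp (u : ℝ → ℝ) : ℝ → ℝ := fun x => x * deriv u x

/-- `(θ+c)(θ+c+ν)u − x² u`, i.e. the operator `Q_ν(θ+c)` applied to `u`. -/
def besselQ (ν c : ℝ) (u : ℝ → ℝ) : ℝ → ℝ := fun x =>
  eulerOp (fun y => eulerOp u y + (c + ν) * u y) x
    + c * (eulerOp u x + (c + ν) * u x) - x ^ 2 * u x

/-- The fourth order differential operator
`D_{μ,ν} = x^{−2}((θ+μ)(θ+μ+ν) − x²)(θ(θ+ν) − x²)`. -/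
def Dop (μ ν : ℝ) (u : ℝ → ℝ) : ℝ → ℝ := fun x =>
  besselQ ν μ (besselQ ν 0 u) x / x ^ 2

/-- The generating function
`G^{μ,ν}(t,x) = (1−t)^{−(μ+ν+2)/2} Ĩ_{μ/2}(tx/(1−t)) K̃_{ν/2}(x/(1−t))`. -/
def genFun (μ ν t x : ℝ) : ℝ :=
  (1 - t) ^ (-(μ + ν + 2) / 2) * besselIt (μ / 2) (t * x / (1 - t))
    * besselKt (ν / 2) (x / (1 - t))

/-- The eigenfunctions `Λ_j^{μ,ν}`, defined as the Taylor coefficients in `t` at `t = 0` of the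
generating function `G^{μ,ν}(t,x) = Σ_{j≥0} Λ_j^{μ,ν}(x) t^j`. -/
def LambdaF (μ ν : ℝ) (j : ℕ) (x : ℝ) : ℝ :=
  iteratedDeriv j (fun t => genFun μ ν t x) 0 / j.factorial

/-- The integrality condition: `μ ≥ ν ≥ −1` are integers of the same parity,
not both equal to `−1`. -/
def IntCond (μ ν : ℤ) : Prop :=
  -1 ≤ ν ∧ ν ≤ μ ∧ Even (μ - ν) ∧ ¬(μ = -1 ∧ ν = -1)

end

lemma mono_of {F F' : ℝ → ℝ} {X : ℝ} (h : ∀ x ≥ X, HasDerivAt F (F' x) x)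
    (h' : ∀ x ≥ X, 0 ≤ F' x) {x y : ℝ} (hx : X ≤ x) (hxy : x ≤ y) : F x ≤ F y := by
  have : MonotoneOn F (Ici X) := by
    apply monotoneOn_of_deriv_nonneg (convex_Ici X)
    · exact fun z hz => (h z hz).continuousAt.continuousWithinAt
    · intro z hz
      rw [interior_Ici] at hz
      exact (h z (le_of_lt hz)).differentiableAt.differentiableWithinAt
    · intro z hz
      rw [interior_Ici] at hz
      rw [(h z (le_of_lt hz)).deriv]
      exact h' z (le_of_lt hz)
  exact this hx (le_trans hx hxy) hxy

/-- No square-integrable function can satisfy the growth inequality below. -/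
lemma no_growth {p p1 p2 P : ℝ → ℝ} {X c C0 : ℝ} (hX : 1 ≤ X) (hc : 0 ≤ c) (hcX : c ≤ X)
    (hp : ∀ x ≥ X, HasDerivAt p (p1 x) x) (hp1 : ∀ x ≥ X, HasDerivAt p1 (p2 x) x)
    (hP : ∀ x ≥ X, HasDerivAt P (p x ^ 2) x) (hPb : ∀ x ≥ X, P x ≤ C0) (hP0 : ∀ x ≥ X, 0 ≤ P x)
    (hge : ∀ x ≥ X, p x + 1 ≤ p2 x + c / x * p1 x) : False := by
  -- the auxiliary function R is nondecreasing
  have hR : ∀ x ≥ X, p1 X + c / X * p X + P X / 2 - X / 2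
      ≤ p1 x + c / x * p x + P x / 2 - x / 2 := by
    intro x hx
    refine mono_of (F := fun x => p1 x + c / x * p x + P x / 2 - x / 2)
      (F' := fun x => p2 x + (-(c / x ^ 2) * p x + c / x * p1 x) + p x ^ 2 / 2 - 1 / 2) (X := X)
      ?_ ?_ le_rfl hx
    · intro y hy
      have hy0 : y ≠ 0 := by linarith
      have h1 : HasDerivAt (fun y : ℝ => c / y) (-(c / y ^ 2)) y := by
        have := (hasDerivAt_inv hy0).const_mul c
        exact this.congr_deriv (by field_simp)
      exact (((hp1 y hy).add (h1.mul (hp y hy))).add ((hP y hy).div_const 2)).sub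
        ((hasDerivAt_id y).div_const 2)
    · intro y hy
      have hy1 : 1 ≤ y := le_trans hX hy
      have h2 : 0 ≤ c / y ^ 2 := by positivity
      have h3 : c / y ^ 2 ≤ 1 := by
        rw [div_le_one (by positivity)]; nlinarith
      have := hge y hy
      set d := c / y ^ 2
      nlinarith [sq_nonneg (p y + (1 - d)), sq_nonneg (p y)]
  set R0 := p1 X + c / X * p X + P X / 2 - X / 2 with hR0
  set Y := max X (2 * (C0 / 2 - R0 + c + 1)) with hY
  have hYX : X ≤ Y := le_max_left _ _
  have hS : ∀ x ≥ Y, p Y + c * P Y - Y ≤ p x + c * P x - x := by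
    intro x hx
    refine mono_of (F := fun x => p x + c * P x - x)
      (F' := fun x => p1 x + c * p x ^ 2 - 1) (X := Y) ?_ ?_ le_rfl hx
    · intro y hy
      exact ((hp y (hYX.trans hy)).add ((hP y (hYX.trans hy)).const_mul c)).sub (hasDerivAt_id y)
    · intro y hy
      have hy1 : 1 ≤ y := by linarith
      have h1 := hR y (hYX.trans hy)
      have h2 := hPb y (hYX.trans hy)
      have h3 : 2 * (C0 / 2 - R0 + c + 1) ≤ y := (le_max_right _ _).trans hy
      have h4 : 0 ≤ c / y := by positivity
      have h5 : c / y ≤ c := div_le_self hc hy1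
      set d := c / y
      have : d * p y ≤ c * p y ^ 2 + c := by
        nlinarith [sq_nonneg (p y - 1), sq_nonneg (p y), mul_nonneg h4 (sq_nonneg (p y - 1)), mul_nonneg (sub_nonneg.2 h5) (sq_nonneg (p y)), mul_nonneg h4 (sq_nonneg (p y))]
      linarith
  set Z := max Y (1 - (p Y + c * P Y - Y) + c * C0) with hZ
  have hp_big : ∀ x ≥ Z, 1 ≤ p x := by
    intro x hx
    have hxY : Y ≤ x := (le_max_left _ _).trans hx
    have h1 := hS x hxY
    have h2 := hPb x (hYX.trans hxY)
    have h3 : 1 - (p Y + c * P Y - Y) + c * C0 ≤ x := (le_max_right _ _).trans hx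
    nlinarith
  have hZX : X ≤ Z := hYX.trans (le_max_left _ _)
  have hlast : ∀ x ≥ Z, P Z - Z ≤ P x - x := by
    intro x hx
    refine mono_of (F := fun x => P x - x) (F' := fun x => p x ^ 2 - 1) (X := Z) ?_ ?_ le_rfl hx
    · intro y hy
      exact (hP y (hZX.trans hy)).sub (hasDerivAt_id y)
    · intro y hy
      nlinarith [hp_big y hy]
  have h1 := hlast (Z + C0 + 1) (by have := hP0 Z hZX; have := hPb Z hZX; show Z ≤ _; linarith)
  have h2 := hPb (Z + C0 + 1) (by have := hP0 Z hZX; have := hPb Z hZX; show X ≤ _; linarith)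
  have h3 := hP0 Z hZX
  linarith

set_option maxHeartbeats 4000000 in
lemma decay_aux (c1 c2 c3 l : ℝ) (h1 : 0 ≤ c1) (h2 : 0 ≤ c2) (h3 : 0 ≤ c3) (hl : 0 ≤ l)
    (p p1 q q1 : ℝ → ℝ)
    (hp : ∀ x ≥ 1, HasDerivAt p (p1 x) x)
    (hp1 : ∀ x ≥ 1, HasDerivAt p1 (p x - c1 / x * p1 x + q x / x) x)
    (hq : ∀ x ≥ 1, HasDerivAt q (q1 x) x)
    (hq1 : ∀ x ≥ 1, HasDerivAt q1 (q x - c2 / x * q1 x - c3 / x ^ 2 * q x + l / x * p x) x)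
    (hL : IntegrableOn (fun x => p x ^ 2) (Ioi 1)) :
    ∃ C X, 1 ≤ X ∧ ∀ x ≥ X, |p x| ≤ C * exp (-x / 2) := by
  have hcont : ContinuousOn p (Ici 1) := fun x hx => (hp x hx).continuousAt.continuousWithinAt
  set P : ℝ → ℝ := fun x => ∫ y in (1:ℝ)..x, p y ^ 2 with hPdef
  set C0 : ℝ := ∫ y in Ioi (1:ℝ), p y ^ 2 with hC0
  have hintg : ∀ x ≥ (1:ℝ), IntervalIntegrable (fun y => p y ^ 2) volume 1 x := by
    intro x hx
    apply ContinuousOn.intervalIntegrable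
    apply ContinuousOn.pow
    apply hcont.mono
    rw [uIcc_of_le hx]
    exact Icc_subset_Ici_self
  have hP : ∀ x > 1, HasDerivAt P (p x ^ 2) x := by
    intro x hx
    apply intervalIntegral.integral_hasDerivAt_right (hintg x hx.le)
    · refine ContinuousOn.stronglyMeasurableAtFilter isOpen_Ioi (s := Ioi 1) ?_ x hx
      exact (hcont.mono Ioi_subset_Ici_self).pow 2
    · exact ((hp x hx.le).continuousAt).pow 2
  have hPb : ∀ x ≥ 1, P x ≤ C0 := by
    intro x hx
    simp only [hPdef, hC0]
    rw [intervalIntegral.integral_of_le hx]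
    apply setIntegral_mono_set hL
    · exact ae_of_all _ (fun y => sq_nonneg _)
    · exact Ioc_subset_Ioi_self.eventuallyLE
  have hP0 : ∀ x ≥ 1, 0 ≤ P x := by
    intro x hx
    exact intervalIntegral.integral_nonneg hx (fun y _ => sq_nonneg _)
  set K := 8 * (c1 + c2 + c3 + l + 1) with hK
  have hKs : ∀ x ≥ K, ∀ c, 0 ≤ c → c ≤ c1 + c2 + c3 + l + 1 → 0 ≤ c / x ∧ c / x ≤ 1 / 8 := by
    intro x hx c hc hc'
    have : 0 < x := by have : x ≥ K := hx; linarith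
    refine ⟨by positivity, ?_⟩
    rw [div_le_iff₀ this]
    have : x ≥ K := hx; linarith
  have hK8 : 8 ≤ K := by rw [hK]; linarith
  -- N = p² + q²
  set N1 : ℝ → ℝ := fun x => 2 * p x * p1 x + 2 * q x * q1 x with hN1
  set N2 : ℝ → ℝ := fun x => 2 * p1 x * p1 x + 2 * p x * (p x - c1 / x * p1 x + q x / x)
    + (2 * q1 x * q1 x + 2 * q x * (q x - c2 / x * q1 x - c3 / x ^ 2 * q x + l / x * p x)) with hN2
  have hN : ∀ x ≥ K, HasDerivAt (fun x => p x ^ 2 + q x ^ 2) (N1 x) x := by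
    intro x hx
    have hx1 : x ≥ 1 := by have : x ≥ K := hx; linarith
    exact (((hp x hx1).pow 2).add ((hq x hx1).pow 2)).congr_deriv (by simp [hN1])
  have hN' : ∀ x ≥ K, HasDerivAt N1 (N2 x) x := by
    intro x hx
    have hx1 : x ≥ 1 := by have : x ≥ K := hx; linarith
    exact ((((hp x hx1).const_mul 2).mul (hp1 x hx1))).add
      (((hq x hx1).const_mul 2).mul (hq1 x hx1))
  have hM : ∀ x ≥ K, HasDerivAt (fun x => 2 * q x * q1 x)
     (2 * q1 x * q1 x + 2 * q x * (q x - c2 / x * q1 x - c3 / x ^ 2 * q x + l / x * p x)) x := by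
    intro x hx
    have hx1 : x ≥ 1 := by have : x ≥ K := hx; linarith
    exact (((hq x hx1).const_mul 2).mul (hq1 x hx1))
  have hMge : ∀ x ≥ K, q x ^ 2 - p x ^ 2 ≤
      2 * q1 x * q1 x + 2 * q x * (q x - c2 / x * q1 x - c3 / x ^ 2 * q x + l / x * p x) := by
    intro x hx
    obtain ⟨a2, b2⟩ := hKs x hx c2 h2 (by linarith)
    obtain ⟨a4, b4⟩ := hKs x hx l hl (by linarith)
    obtain ⟨a3, b3⟩ : 0 ≤ c3 / x ^ 2 ∧ c3 / x ^ 2 ≤ 1 / 8 := by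
      obtain ⟨a, b⟩ := hKs x hx c3 h3 (by linarith)
      have hx1 : 1 ≤ x := by have : x ≥ K := hx; linarith
      refine ⟨by positivity, ?_⟩
      rw [pow_two, ← div_div]
      exact (div_le_self a hx1).trans b
    set A := c2 / x
    set E := l / x
    set D := c3 / x ^ 2
    nlinarith [mul_nonneg a2 (sq_nonneg (q x - q1 x)), mul_nonneg a4 (sq_nonneg (q x + p x)),
      mul_nonneg (sub_nonneg.2 b2) (sq_nonneg (q x)), mul_nonneg (sub_nonneg.2 b2) (sq_nonneg (q1 x)),
      mul_nonneg (sub_nonneg.2 b3) (sq_nonneg (q x)), mul_nonneg (sub_nonneg.2 b4) (sq_nonneg (q x)),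
      mul_nonneg (sub_nonneg.2 b4) (sq_nonneg (p x)), sq_nonneg (p x), sq_nonneg (q x), sq_nonneg (q1 x)]
  have hNge : ∀ x ≥ K, p x ^ 2 + q x ^ 2 ≤ N2 x := by
    intro x hx
    obtain ⟨a1, b1⟩ := hKs x hx c1 h1 (by linarith)
    obtain ⟨a2, b2⟩ := hKs x hx c2 h2 (by linarith)
    obtain ⟨a4, b4⟩ := hKs x hx l hl (by linarith)
    obtain ⟨a5, b5⟩ := hKs x hx 1 (by norm_num) (by linarith)
    obtain ⟨a3, b3⟩ : 0 ≤ c3 / x ^ 2 ∧ c3 / x ^ 2 ≤ 1 / 8 := by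
      obtain ⟨a, b⟩ := hKs x hx c3 h3 (by linarith)
      have hx1 : 1 ≤ x := by have : x ≥ K := hx; linarith
      refine ⟨by positivity, ?_⟩
      rw [pow_two, ← div_div]
      exact (div_le_self a hx1).trans b
    have hqx : q x / x = (1 / x) * q x := by ring
    simp only [hN2, hqx]
    set A := c2 / x
    set A1 := c1 / x
    set E := l / x
    set F := 1 / x
    set D := c3 / x ^ 2
    nlinarith [mul_nonneg a2 (sq_nonneg (q x - q1 x)), mul_nonneg a4 (sq_nonneg (q x + p x)),
      mul_nonneg a1 (sq_nonneg (p x - p1 x)), mul_nonneg a5 (sq_nonneg (q x + p x)),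
      mul_nonneg (sub_nonneg.2 b2) (sq_nonneg (q x)), mul_nonneg (sub_nonneg.2 b2) (sq_nonneg (q1 x)),
      mul_nonneg (sub_nonneg.2 b1) (sq_nonneg (p x)), mul_nonneg (sub_nonneg.2 b1) (sq_nonneg (p1 x)),
      mul_nonneg (sub_nonneg.2 b3) (sq_nonneg (q x)), mul_nonneg (sub_nonneg.2 b4) (sq_nonneg (q x)),
      mul_nonneg (sub_nonneg.2 b4) (sq_nonneg (p x)), 
      mul_nonneg (sub_nonneg.2 b5) (sq_nonneg (q x)),
      mul_nonneg (sub_nonneg.2 b5) (sq_nonneg (p x)), sq_nonneg (p x), sq_nonneg (q x), sq_nonneg (q1 x), sq_nonneg (p1 x)]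
  by_cases hcase : ∃ x1 ≥ K, 0 < N1 x1
  · exfalso
    obtain ⟨x1, hx1, hd⟩ := hcase
    have hx1K : K ≤ x1 := hx1
    set d := N1 x1
    have hN1d : ∀ x ≥ x1, d ≤ N1 x := fun x hx => mono_of hN'
      (fun y hy => by have := hNge y hy; nlinarith [sq_nonneg (p y), sq_nonneg (q y)]) hx1 hx
    have hNd : ∀ x ≥ x1, d * (x - x1) ≤ p x ^ 2 + q x ^ 2 := by
      intro x hx
      have := mono_of (F := fun x => p x ^ 2 + q x ^ 2 - d * x) (F' := fun x => N1 x - d * 1) (X := x1)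
        (fun y hy => (hN y (hx1K.trans hy)).sub ((hasDerivAt_id y).const_mul d))
        (fun y hy => by have := hN1d y hy; linarith) le_rfl hx
      beta_reduce at this
      nlinarith [sq_nonneg (p x1), sq_nonneg (q x1)]
    -- the derivative of M grows
    have hMd : ∀ x ≥ x1, 2 * q x1 * q1 x1 + 2 * P x1 - d * (x1 - x1) ^ 2 / 2 ≤
        2 * q x * q1 x + 2 * P x - d * (x - x1) ^ 2 / 2 := by
      intro x hx
      refine mono_of (F := fun x => 2 * q x * q1 x + 2 * P x - d * (x - x1) ^ 2 / 2)
        (F' := fun x => (2 * q1 x * q1 x + 2 * q x * (q x - c2 / x * q1 x - c3 / x ^ 2 * q x + l / x * p x))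
          + 2 * p x ^ 2 - d * (x - x1)) (X := x1) ?_ ?_ le_rfl hx
      · intro y hy
        have hyK : y ≥ K := hx1K.trans hy
        have e : HasDerivAt (fun x => d * (x - x1) ^ 2 / 2) (d * (y - x1)) y := by
          have := ((((hasDerivAt_id y).sub_const x1).pow 2).const_mul d).div_const 2
          exact this.congr_deriv (by simp; ring)
        exact ((hM y hyK).add ((hP y (by have : y ≥ K := hyK; show (1:ℝ) < y; linarith)).const_mul 2)).sub e
      · intro y hy
        have hyK : y ≥ K := hx1K.trans hy
        have := hMge y hyK
        have := hNd y hy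
        linarith
    -- q² ≥ x² eventually
    set m0 := 2 * q x1 * q1 x1 + 2 * P x1 - d * (x1 - x1) ^ 2 / 2 with hm0
    have hC0' : 0 ≤ C0 := (hP0 x1 (by show (1:ℝ) ≤ x1; linarith)).trans (hPb x1 (by show (1:ℝ) ≤ x1; linarith))
    set S := 8 + 4 * x1 + 2 * C0 + |m0| with hS
    set Y := max (x1 + 1) (x1 + (2 / d) * S) with hY
    have hY1 : x1 + 1 ≤ Y := le_max_left _ _
    have hY2 : x1 + (2 / d) * S ≤ Y := le_max_right _ _
    have hS0 : 0 ≤ |m0| := abs_nonneg _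
    have hMY : ∀ x ≥ Y, 4 * x ≤ 2 * q x * q1 x := by
      intro x hx
      have hxY : Y ≤ x := hx
      have h4 := hMd x (by show x1 ≤ x; linarith)
      have h5 := hPb x (by show (1:ℝ) ≤ x; linarith)
      have ht1 : 1 ≤ x - x1 := by linarith
      have ht2 : (2 / d) * S ≤ x - x1 := by linarith
      have ht3 : S ≤ d / 2 * (x - x1) := by
        have := mul_le_mul_of_nonneg_left ht2 (show 0 ≤ d / 2 by positivity)
        calc S = d / 2 * (2 / d * S) := by field_simp
          _ ≤ _ := this
      have ht4 : S * (x - x1) ≤ d * (x - x1) ^ 2 / 2 := by nlinarith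
      have h6 := neg_abs_le m0
      have h7 : (4 * x1 + 2 * C0 + |m0|) * 1 ≤ (4 * x1 + 2 * C0 + |m0|) * (x - x1) :=
        mul_le_mul_of_nonneg_left ht1 (by linarith)
      have h8 : S * (x - x1) = 8 * (x - x1) + (4 * x1 + 2 * C0 + |m0|) * (x - x1) := by rw [hS]; ring
      clear_value S m0 P C0 d Y
      linarith
    have hqY : ∀ x ≥ Y, q Y ^ 2 - 2 * Y ^ 2 ≤ q x ^ 2 - 2 * x ^ 2 := by
      intro x hx
      refine mono_of (F := fun x => q x ^ 2 - 2 * x ^ 2) (F' := fun x => 2 * q x * q1 x - 4 * x)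
        (X := Y) ?_ ?_ le_rfl hx
      · intro y hy
        have hyY : Y ≤ y := hy
        have e : HasDerivAt (fun x : ℝ => 2 * x ^ 2) (4 * y) y :=
          (((hasDerivAt_id y).pow 2).const_mul 2).congr_deriv (by simp; ring)
        exact (((hq y (by show (1:ℝ) ≤ y; linarith)).pow 2).congr_deriv (by simp)).sub e
      · intro y hy
        have := hMY y hy
        linarith
    set Z := 2 * Y with hZ
    have hqZ : ∀ x ≥ Z, x ^ 2 ≤ q x ^ 2 := by
      intro x hx
      have hxY : 2 * Y ≤ x := hx
      have := hqY x (by show Y ≤ x; linarith)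
      nlinarith [sq_nonneg (q Y)]
    have hZ1 : K ≤ Z := by rw [hZ]; linarith
    have hqcont : ContinuousOn q (Ici Z) := fun x hx => (hq x (by
      have : Z ≤ x := hx
      show (1:ℝ) ≤ x; linarith)).continuousAt.continuousWithinAt
    have hqne : ∀ x ≥ Z, q x ≠ 0 := by
      intro x hx h0
      have hx' : Z ≤ x := hx
      have := hqZ x hx
      rw [h0] at this
      nlinarith
    have hsign : (∀ x ≥ Z, x ≤ q x) ∨ (∀ x ≥ Z, x ≤ -q x) := by
      have hconst : (∀ x ≥ Z, 0 < q x) ∨ (∀ x ≥ Z, q x < 0) := by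
        by_contra! hcon
        obtain ⟨⟨x, hx, hx0⟩, ⟨y, hy, hy0⟩⟩ := hcon
        obtain ⟨z, hz, hz0⟩ := (isPreconnected_Ici (a := Z)).intermediate_value hx hy hqcont ⟨hx0, hy0⟩
        exact hqne z hz hz0
      rcases hconst with h | h
      · left; intro x hx
        exact (abs_le_of_sq_le_sq' (hqZ x hx) (h x hx).le).2
      · right; intro x hx
        have := h x hx
        exact (abs_le_of_sq_le_sq' (by rw [neg_sq]; exact hqZ x hx) (by linarith)).2
    have hZge : ∀ x ≥ Z, (1:ℝ) < x := fun x hx => by have : Z ≤ x := hx; linarith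
    rcases hsign with h | h
    · refine no_growth (p := p) (p1 := p1) (p2 := fun x => p x - c1 / x * p1 x + q x / x) (P := P)
        (X := Z) (c := c1) (C0 := C0) (by linarith) h1 (by linarith)
        (fun x hx => hp x (hZge x hx).le) (fun x hx => hp1 x (hZge x hx).le)
        (fun x hx => hP x (hZge x hx)) (fun x hx => hPb x (hZge x hx).le)
        (fun x hx => hP0 x (hZge x hx).le) ?_
      intro x hx
      have hx0 : 0 < x := by have := hZge x hx; linarith
      have : 1 ≤ q x / x := by rw [le_div_iff₀ hx0]; have := h x hx; linarith
      linarith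
    · refine no_growth (p := fun x => -p x) (p1 := fun x => -p1 x)
        (p2 := fun x => -(p x - c1 / x * p1 x + q x / x)) (P := P)
        (X := Z) (c := c1) (C0 := C0) (by linarith) h1 (by linarith)
        (fun x hx => (hp x (hZge x hx).le).neg) (fun x hx => (hp1 x (hZge x hx).le).neg)
        (fun x hx => (hP x (hZge x hx)).congr_deriv (by ring)) (fun x hx => hPb x (hZge x hx).le)
        (fun x hx => hP0 x (hZge x hx).le) ?_
      intro x hx
      have hx0 : 0 < x := by have := hZge x hx; linarith
      have : 1 ≤ -q x / x := by rw [le_div_iff₀ hx0]; have := h x hx; linarith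
      have h9 : -q x / x = -(q x / x) := by ring
      linarith
  · push Not at hcase
    -- decaying case
    have hmono : ∀ x ≥ K, p x ^ 2 + q x ^ 2 ≤ p K ^ 2 + q K ^ 2 := by
      intro x hx
      have := mono_of (F := fun x => -(p x ^ 2 + q x ^ 2)) (F' := fun x => -N1 x) (X := K)
        (fun y hy => (hN y hy).neg) (fun y hy => by have := hcase y hy; linarith) le_rfl hx
      beta_reduce at this
      linarith
    have hneg : ∀ x ≥ K, N1 x + (p x ^ 2 + q x ^ 2) ≤ 0 := by
      intro x hx
      by_contra! hpos
      set e := N1 x + (p x ^ 2 + q x ^ 2)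
      have hg : ∀ y ≥ x, exp (-x) * e ≤ exp (-y) * (N1 y + (p y ^ 2 + q y ^ 2)) := by
        intro y hy
        refine mono_of (F := fun y => exp (-y) * (N1 y + (p y ^ 2 + q y ^ 2)))
          (F' := fun y => (exp (-y) * (-1)) * (N1 y + (p y ^ 2 + q y ^ 2)) + exp (-y) * (N2 y + N1 y)) (X := K)
          ?_ ?_ hx hy
        · intro z hz
          exact ((hasDerivAt_neg z).exp).mul ((hN' z hz).add (hN z hz))
        · intro z hz
          have := hNge z hz
          have h0 := exp_pos (-z)
          nlinarith
      obtain ⟨y, hyx, hy⟩ : ∃ y ≥ x, p K ^ 2 + q K ^ 2 < e * exp (y - x) := by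
        have ht : Tendsto (fun y : ℝ => e * exp (y - x)) atTop atTop :=
          Tendsto.const_mul_atTop hpos (tendsto_exp_atTop.comp (tendsto_atTop_add_const_right _ (-x) tendsto_id))
        obtain ⟨y, hy⟩ := ((ht.eventually_gt_atTop (p K ^ 2 + q K ^ 2)).and (eventually_ge_atTop x)).exists
        exact ⟨y, hy.2, hy.1⟩
      have hyK : y ≥ K := le_trans hx hyx
      have h1 := hg y hyx
      have h2 := hcase y hyK
      have h3 := hmono y hyK
      have h4 : e * exp (y - x) = exp y * (exp (-x) * e) := by rw [sub_eq_add_neg, exp_add]; ring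
      have h5 : exp y * (exp (-y) * (N1 y + (p y ^ 2 + q y ^ 2))) = N1 y + (p y ^ 2 + q y ^ 2) := by
        rw [← mul_assoc, ← exp_add]; simp
      have h6 := mul_le_mul_of_nonneg_left h1 (exp_pos y).le
      linarith
    refine ⟨sqrt (exp K * (p K ^ 2 + q K ^ 2)), K, by linarith, ?_⟩
    intro x hx
    have h1 := mono_of (F := fun x => -(exp x * (p x ^ 2 + q x ^ 2)))
      (F' := fun x => -(exp x * (p x ^ 2 + q x ^ 2) + exp x * N1 x)) (X := K)
        (fun y hy => ((Real.hasDerivAt_exp y).mul (hN y hy)).neg) (fun y hy => by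
          have := hneg y hy
          have h0 := exp_pos y
          nlinarith) le_rfl hx
    beta_reduce at h1
    have h2 : p x ^ 2 ≤ exp K * (p K ^ 2 + q K ^ 2) * exp (-x) := by
      have h5 : exp x * exp (-x) = 1 := by rw [← exp_add]; simp
      have h6 := exp_pos (-x)
      have h7 : exp x * (p x ^ 2 + q x ^ 2) * exp (-x) ≤ exp K * (p K ^ 2 + q K ^ 2) * exp (-x) :=
        mul_le_mul_of_nonneg_right (by linarith) h6.le
      have h8 : exp x * (p x ^ 2 + q x ^ 2) * exp (-x) = p x ^ 2 + q x ^ 2 := by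
        calc _ = (exp x * exp (-x)) * (p x ^ 2 + q x ^ 2) := by ring
          _ = _ := by rw [h5, one_mul]
      nlinarith [sq_nonneg (q x)]
    have h3 : exp (-x / 2) = sqrt (exp (-x)) := by
      symm
      rw [Real.sqrt_eq_iff_mul_self_eq (exp_pos _).le (exp_pos _).le, ← exp_add]; ring_nf
    rw [h3, ← Real.sqrt_mul (by positivity)]
    exact Real.abs_le_sqrt h2

lemma bj_gamma_ge {p : ℝ} (hp : 0 ≤ p) (m : ℕ) : Gamma (p + 1) ≤ Gamma (m + p + 1) := by
  induction m with
  | zero => simp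
  | succ m ih =>
    have h : Gamma ((m + 1 : ℕ) + p + 1) = (m + p + 1) * Gamma (m + p + 1) := by
      rw [← Gamma_add_one (by positivity)]; push_cast; ring_nf
    rw [h]
    have : 0 < Gamma (m + p + 1) := Gamma_pos_of_pos (by positivity)
    nlinarith [mul_nonneg (show (0:ℝ) ≤ m + p by positivity) this.le]

lemma bj_coef_le {p : ℝ} (hp : 0 ≤ p) (m : ℕ) :
    ‖(-1 : ℝ) ^ m / (m.factorial * Gamma (m + p + 1))‖ ≤ 1 / Gamma (p + 1) * (1 / m.factorial) := by
  have h1 : 0 < Gamma (p + 1) := Gamma_pos_of_pos (by positivity)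
  have h2 := bj_gamma_ge hp m
  have h3 : 0 < Gamma (m + p + 1) := h1.trans_le h2
  rw [norm_div, norm_pow, norm_neg, norm_one, one_pow, Real.norm_of_nonneg (by positivity),
    div_mul_div_comm, one_mul, mul_comm]
  gcongr

lemma bj_summable {p : ℝ} (hp : 0 ≤ p) (x : ℝ) :
    Summable (fun m : ℕ => (-1 : ℝ) ^ m / (m.factorial * Gamma (m + p + 1)) * (x / 2) ^ (2 * m)) := by
  refine Summable.of_norm_bounded
    (g := fun m : ℕ => 1 / Gamma (p + 1) * (((x / 2) ^ 2) ^ m / m.factorial)) ?_ ?_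
  · exact (Real.summable_pow_div_factorial _).mul_left _
  · intro m
    rw [norm_mul]
    calc _ ≤ (1 / Gamma (p + 1) * (1 / m.factorial)) * ‖(x / 2) ^ (2 * m)‖ := by
          gcongr; exact bj_coef_le hp m
      _ = _ := by rw [pow_mul, Real.norm_of_nonneg (by positivity)]; ring

lemma bj_hasSum {p : ℝ} (hp : 0 ≤ p) (x : ℝ) :
    HasSum (fun m : ℕ => (-1 : ℝ) ^ m / (m.factorial * Gamma (m + p + 1)) * (x / 2) ^ (2 * m))
      (besselJt p x) := (bj_summable hp x).hasSum

lemma bj_rec {p : ℝ} (hp : 0 ≤ p) (x : ℝ) :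
    x ^ 2 / 4 * besselJt (p + 2) x = (p + 1) * besselJt (p + 1) x - besselJt p x := by
  have h0 := bj_hasSum hp x
  have h1 := bj_hasSum (p := p + 1) (by linarith) x
  have h2 := (bj_hasSum (p := p + 2) (by linarith) x).mul_left (x ^ 2 / 4)
  have h3 := (h1.mul_left (p + 1)).sub h0
  rw [← hasSum_nat_add_iff' 1] at h3
  have hz : (p + 1) * besselJt (p + 1) x - besselJt p x
     - ∑ i ∈ Finset.range 1, ((p + 1) * ((-1 : ℝ) ^ i / (i.factorial * Gamma (i + (p + 1) + 1)) * (x / 2) ^ (2 * i))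
      - (-1 : ℝ) ^ i / (i.factorial * Gamma (i + p + 1)) * (x / 2) ^ (2 * i))
      = (p + 1) * besselJt (p + 1) x - besselJt p x := by
    have e : Gamma (p + 1 + 1) = (p + 1) * Gamma (p + 1) := Gamma_add_one (by positivity)
    have : Gamma (p + 1) ≠ 0 := (Gamma_pos_of_pos (by positivity)).ne'
    simp [e]; field_simp; simp
  rw [hz] at h3
  refine h2.unique (h3.congr_fun ?_)
  intro k
  have hG : Gamma (((k + 1 : ℕ) : ℝ) + (p + 1) + 1) = (k + 1 + p + 1) * Gamma ((k + 1 : ℕ) + p + 1) := by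
    have := Gamma_add_one (s := (k : ℝ) + 1 + p + 1) (by positivity)
    push_cast
    rw [← this]; ring_nf
  have hG2 : Gamma ((k : ℝ) + (p + 2) + 1) = (k + 1 + p + 1) * Gamma ((k + 1 : ℕ) + p + 1) := by
    have := Gamma_add_one (s := (k : ℝ) + 1 + p + 1) (by positivity)
    push_cast
    rw [← this]; ring_nf
  have : Gamma (((k + 1 : ℕ) : ℝ) + p + 1) ≠ 0 := (Gamma_pos_of_pos (by positivity)).ne'
  rw [hG, hG2, Nat.factorial_succ]
  have hk : (k : ℝ) + 1 + p + 1 ≠ 0 := by positivity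
  have hk' : (k : ℝ) + 1 ≠ 0 := by positivity
  have hf : (k.factorial : ℝ) ≠ 0 := by positivity
  push_cast at this ⊢
  field_simp
  ring

lemma bj_deriv {p : ℝ} (hp : 0 ≤ p) (x : ℝ) :
    HasDerivAt (besselJt p) (-(x / 2) * besselJt (p + 1) x) x := by
  have hs : Summable (fun m : ℕ => 1 / Gamma (p + 1) * (1 / m.factorial)
      * (m * ((|x| + 1) / 2) ^ (2 * m - 1))) := by
    rw [← summable_nat_add_iff 1]
    have := (Real.summable_pow_div_factorial (((|x| + 1) / 2) ^ 2)).mul_left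
      (1 / Gamma (p + 1) * ((|x| + 1) / 2))
    refine this.congr ?_
    intro m
    have hk' : (m : ℝ) + 1 ≠ 0 := by positivity
    have e : 2 * (m + 1) - 1 = 2 * m + 1 := by omega
    rw [e, Nat.factorial_succ, ← pow_mul, pow_succ]; push_cast; field_simp
  have key := hasDerivAt_tsum_of_isPreconnected (𝕜 := ℝ) (F := ℝ)
    (g := fun (m : ℕ) (y : ℝ) => (-1 : ℝ) ^ m / (m.factorial * Gamma (m + p + 1)) * (y / 2) ^ (2 * m))
    (g' := fun (m : ℕ) (y : ℝ) => (-1 : ℝ) ^ m / (m.factorial * Gamma (m + p + 1))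
      * (m * (y / 2) ^ (2 * m - 1)))
    (t := ball 0 (|x| + 1)) (y₀ := x) (y := x) hs isOpen_ball
    (convex_ball _ _).isPreconnected ?_ ?_ ?_ (bj_summable hp x) ?_
  · refine key.congr_deriv ?_
    have h1 := (bj_hasSum (p := p + 1) (by linarith) x).mul_left (-(x / 2))
    rw [← h1.tsum_eq]
    have hsum : Summable (fun m : ℕ => (-1 : ℝ) ^ m / (m.factorial * Gamma (m + p + 1))
      * (m * (x / 2) ^ (2 * m - 1))) := by
      refine Summable.of_norm_bounded hs ?_
      intro m
      rw [norm_mul]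
      gcongr
      · exact bj_coef_le hp m
      · rw [norm_mul, norm_pow, norm_div, Real.norm_natCast]; gcongr <;> simp
    rw [hsum.tsum_eq_zero_add]
    simp only [Nat.cast_zero, zero_mul, mul_zero, zero_add]
    congr 1; ext m
    have e : 2 * (m + 1) - 1 = 2 * m + 1 := by omega
    have hk' : (m : ℝ) + 1 ≠ 0 := by positivity
    rw [e, Nat.factorial_succ]
    have e2 : (((m + 1 : ℕ) : ℝ) + p + 1) = (m : ℝ) + (p + 1) + 1 := by push_cast; ring
    have : Gamma ((m : ℝ) + (p + 1) + 1) ≠ 0 := (Gamma_pos_of_pos (by positivity)).ne'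
    rw [e2]; push_cast; field_simp; ring
  · intro m y _
    have h := ((((hasDerivAt_id y).div_const 2).pow (2 * m))).const_mul
      ((-1 : ℝ) ^ m / (m.factorial * Gamma (m + p + 1)))
    exact h.congr_deriv (by simp only [id]; push_cast; ring)
  · intro m y hy
    have hy' : |y| ≤ |x| + 1 := by simpa using (mem_ball_zero_iff.1 hy).le
    rw [norm_mul]
    gcongr
    · exact bj_coef_le hp m
    · rw [norm_mul, norm_pow, norm_div, Real.norm_natCast]; gcongr <;> simp [hy']
  · simp
  · simp

lemma bj_cont {p : ℝ} (hp : 0 ≤ p) : Continuous (besselJt p) :=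
  continuous_iff_continuousAt.2 fun x => (bj_deriv hp x).continuousAt

lemma bj_zero (p : ℝ) : besselJt p 0 = 1 / Gamma (p + 1) := by
  unfold besselJt
  rw [tsum_eq_single 0]
  · simp
  · intro m hm; simp [hm]

lemma bj_even (p x : ℝ) : besselJt p (-x) = besselJt p x := by
  unfold besselJt
  congr 1; ext m
  rw [neg_div, pow_mul, neg_sq, pow_mul]

lemma bj_bound {p : ℝ} (hp : 0 ≤ p) (x : ℝ) : |besselJt p x| ≤ 1 / Gamma (p + 1) := by
  have hG : 0 < Gamma (p + 1) := Gamma_pos_of_pos (by positivity)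
  have key : ∀ x ≥ 0, |besselJt p x| ≤ 1 / Gamma (p + 1) := by
    intro x hx
    have hE : ∀ y : ℝ, HasDerivAt
        (fun y => besselJt p y ^ 2 + (y / 2 * besselJt (p + 1) y) ^ 2)
        (-(p + 1 / 2) * y * besselJt (p + 1) y ^ 2) y := by
      intro y
      have h1 := (bj_deriv hp y).pow 2
      have h2 := ((((hasDerivAt_id y).div_const 2)).mul (bj_deriv (p := p + 1) (by linarith) y)).pow 2
      refine (h1.add h2).congr_deriv ?_
      have := bj_rec hp y
      have e : p + 1 + 1 = p + 2 := by ring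
      simp only [id, e, Pi.mul_apply]
      push_cast
      linear_combination (-y * besselJt (p + 1) y) * this
    have hanti : AntitoneOn (fun y => besselJt p y ^ 2 + (y / 2 * besselJt (p + 1) y) ^ 2) (Ici 0) := by
      apply antitoneOn_of_deriv_nonpos (convex_Ici 0)
      · exact fun y _ => (hE y).continuousAt.continuousWithinAt
      · exact fun y _ => (hE y).differentiableAt.differentiableWithinAt
      · intro y hy
        rw [interior_Ici] at hy
        rw [(hE y).deriv]
        have : 0 < y := hy
        have : 0 ≤ (p + 1 / 2) * y * besselJt (p + 1) y ^ 2 := by positivity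
        linarith
    have := hanti (mem_Ici.2 le_rfl) hx hx
    simp only [bj_zero, zero_div, zero_mul] at this
    refine abs_le_of_sq_le_sq ?_ (by positivity)
    nlinarith [sq_nonneg (x / 2 * besselJt (p + 1) x)]
  rcases le_total 0 x with h | h
  · exact key x h
  · rw [← bj_even]; exact key (-x) (by linarith)

/-- A cut-off function with a chain of derivatives. -/
lemma exists_cutoff : ∃ (η : ℕ → ℝ → ℝ) (M : ℝ), (∀ i t, HasDerivAt (η i) (η (i + 1) t) t) ∧
    (∀ i ≤ 4, ∀ t, |η i t| ≤ M) ∧ (∀ i t, 2 ≤ |t| → η i t = 0) ∧ η 0 0 = 1 := by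
  let f : ContDiffBump (0 : ℝ) := ⟨1, 2, by norm_num, by norm_num⟩
  have hf : ContDiff ℝ (⊤ : ℕ∞) f := f.contDiff
  have hsupp : HasCompactSupport f := f.hasCompactSupport
  have hcont : ∀ i : ℕ, ContDiff ℝ (⊤ : ℕ∞) (iteratedDeriv i f) := by
    intro i
    rw [iteratedDeriv_eq_iterate]
    exact ContDiff.iterate_deriv i hf
  have hder : ∀ i t, HasDerivAt (iteratedDeriv i f) (iteratedDeriv (i + 1) f t) t := by
    intro i t
    rw [iteratedDeriv_succ]
    exact ((hcont i).differentiable (by simp) t).hasDerivAt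
  have hzero : ∀ i t, 2 < |t| → iteratedDeriv i f t = 0 := by
    intro i
    induction i with
    | zero =>
      intro t ht
      rw [iteratedDeriv_zero]
      apply f.zero_of_le_dist
      simp [f]; linarith
    | succ i ih =>
      intro t ht
      rw [iteratedDeriv_succ]
      have : iteratedDeriv i f =ᶠ[nhds t] fun _ => 0 := by
        filter_upwards [(isOpen_lt continuous_const continuous_abs).mem_nhds ht] with s hs using ih s hs
      rw [this.deriv_eq]; simp
  have hzero' : ∀ i t, 2 ≤ |t| → iteratedDeriv i f t = 0 := by
    intro i t ht
    have hcl : IsClosed {t | iteratedDeriv i f t = 0} :=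
      isClosed_eq (hcont i).continuous continuous_const
    have hsub : closure {t : ℝ | 2 < |t|} ⊆ {t | iteratedDeriv i f t = 0} :=
      closure_minimal (fun t ht => hzero i t ht) hcl
    apply hsub
    rw [Metric.mem_closure_iff]
    intro ε hε
    rcases le_total 0 t with h | h
    · refine ⟨t + ε / 2, ?_, ?_⟩
      · rw [abs_of_nonneg h] at ht
        show 2 < |t + ε / 2|
        rw [abs_of_nonneg (by linarith)]; linarith
      · rw [Real.dist_eq, abs_lt]; constructor <;> linarith
    · refine ⟨t - ε / 2, ?_, ?_⟩
      · rw [abs_of_nonpos h] at ht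
        show 2 < |t - ε / 2|
        rw [abs_of_nonpos (by linarith)]; linarith
      · rw [Real.dist_eq, abs_lt]; constructor <;> linarith
  have hbd : ∀ i : ℕ, ∃ C, ∀ t, |iteratedDeriv i f t| ≤ C := by
    intro i
    obtain ⟨C, hC⟩ := (isCompact_Icc (a := (-2 : ℝ)) (b := 2)).exists_bound_of_continuousOn
      (hcont i).continuous.continuousOn
    refine ⟨max C 0, fun t => ?_⟩
    by_cases ht : t ∈ Icc (-2 : ℝ) 2
    · exact (hC t ht).trans (le_max_left _ _)
    · rw [hzero' i t ?_]; · simp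
      by_contra! h
      exact ht ⟨by linarith [(abs_lt.1 h).1], by linarith [(abs_lt.1 h).2]⟩
  choose C hC using hbd
  refine ⟨fun i => iteratedDeriv i f, ∑ i ∈ Finset.range 5, |C i|, hder, ?_, hzero', ?_⟩
  · intro i hi t
    refine ((hC i t).trans (le_abs_self _)).trans ?_
    exact Finset.single_le_sum (f := fun i => |C i|) (fun _ _ => abs_nonneg _)
      (Finset.mem_range.2 (by omega))
  · simp only [iteratedDeriv_zero]
    exact f.one_of_mem_closedBall (by simp [f])

/-- Weak form for compactly supported test functions. -/
lemma weak_compact (μ ν l R : ℝ) (hR : 0 < R) (U U1 U2 H H1 H2 A0 A1 A2 A3 A4 : ℝ → ℝ)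
    (hU : ∀ t, HasDerivAt U (U1 t) t) (hU1 : ∀ t, HasDerivAt U1 (U2 t) t)
    (hHdef : ∀ t, H t = U2 t + ν * U1 t - exp (2 * t) * U t)
    (hH : ∀ t, HasDerivAt H (H1 t) t) (hH1 : ∀ t, HasDerivAt H1 (H2 t) t)
    (heq : ∀ t, H2 t + (2 * μ + ν) * H1 t + μ * (μ + ν) * H t - exp (2 * t) * H t
      = l * exp (2 * t) * U t)
    (hA0 : ∀ t, HasDerivAt A0 (A1 t) t) (hA1 : ∀ t, HasDerivAt A1 (A2 t) t)
    (hA2 : ∀ t, HasDerivAt A2 (A3 t) t) (hA3 : ∀ t, HasDerivAt A3 (A4 t) t)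
    (hA4 : Continuous A4)
    (hz : ∀ t, R ≤ |t| → A0 t = 0 ∧ A1 t = 0 ∧ A2 t = 0 ∧ A3 t = 0 ∧ A4 t = 0) :
    ∫ t, U t * (
      (A4 t - (2 * μ + ν) * A3 t + (μ * (μ + ν) - exp (2 * t)) * A2 t - 4 * exp (2 * t) * A1 t
        - 4 * exp (2 * t) * A0 t)
      - ν * (A3 t - (2 * μ + ν) * A2 t + (μ * (μ + ν) - exp (2 * t)) * A1 t
        - 2 * exp (2 * t) * A0 t)
      - exp (2 * t) * (A2 t - (2 * μ + ν) * A1 t + (μ * (μ + ν) - exp (2 * t)) * A0 t)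
      - l * exp (2 * t) * A0 t) = 0 := by
  set G : ℝ → ℝ := fun t => U t * (
      (A4 t - (2 * μ + ν) * A3 t + (μ * (μ + ν) - exp (2 * t)) * A2 t - 4 * exp (2 * t) * A1 t
        - 4 * exp (2 * t) * A0 t)
      - ν * (A3 t - (2 * μ + ν) * A2 t + (μ * (μ + ν) - exp (2 * t)) * A1 t
        - 2 * exp (2 * t) * A0 t)
      - exp (2 * t) * (A2 t - (2 * μ + ν) * A1 t + (μ * (μ + ν) - exp (2 * t)) * A0 t)
      - l * exp (2 * t) * A0 t) with hG
  have hexp : ∀ t : ℝ, HasDerivAt (fun t => exp (2 * t)) (2 * exp (2 * t)) t := fun t =>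
    (((hasDerivAt_id t).const_mul 2).exp).congr_deriv (by simp; ring)
  set E : ℝ → ℝ := fun t => A2 t - (2 * μ + ν) * A1 t + (μ * (μ + ν) - exp (2 * t)) * A0 t with hE
  set E1 : ℝ → ℝ := fun t => A3 t - (2 * μ + ν) * A2 t + (μ * (μ + ν) - exp (2 * t)) * A1 t
        - 2 * exp (2 * t) * A0 t with hE1
  have dE : ∀ t, HasDerivAt E (E1 t) t := by
    intro t
    refine (((hA2 t).sub ((hA1 t).const_mul (2 * μ + ν))).add
      (((hexp t).const_sub (μ * (μ + ν))).mul (hA0 t))).congr_deriv ?_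
    simp only [hE1]; ring
  have dE1 : ∀ t, HasDerivAt E1 (A4 t - (2 * μ + ν) * A3 t + (μ * (μ + ν) - exp (2 * t)) * A2 t
      - 4 * exp (2 * t) * A1 t - 4 * exp (2 * t) * A0 t) t := by
    intro t
    refine ((((hA3 t).sub ((hA2 t).const_mul (2 * μ + ν))).add
      (((hexp t).const_sub (μ * (μ + ν))).mul (hA1 t))).sub
      (((hexp t).const_mul 2).mul (hA0 t))).congr_deriv ?_
    ring
  have hW : ∀ t, HasDerivAt (fun t => U t * E1 t - U1 t * E t - ν * (U t * E t)
      + H t * A1 t - H1 t * A0 t - (2 * μ + ν) * (H t * A0 t)) (G t) t := by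
    intro t
    refine (((((((hU t).mul (dE1 t)).sub ((hU1 t).mul (dE t))).sub
      (((hU t).mul (dE t)).const_mul ν)).add ((hH t).mul (hA1 t))).sub
      ((hH1 t).mul (hA0 t))).sub (((hH t).mul (hA0 t)).const_mul (2 * μ + ν))).congr_deriv ?_
    have h1 := hHdef t
    have h2 := heq t
    simp only [hG, hE, hE1]
    linear_combination (A2 t - (2 * μ + ν) * A1 t + (μ * (μ + ν) - exp (2 * t)) * A0 t) * h1
      - A0 t * h2
  have hGc : Continuous G := by
    have c0 : Continuous U := continuous_iff_continuousAt.2 fun t => (hU t).continuousAt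
    have c1 : Continuous A0 := continuous_iff_continuousAt.2 fun t => (hA0 t).continuousAt
    have c2 : Continuous A1 := continuous_iff_continuousAt.2 fun t => (hA1 t).continuousAt
    have c3 : Continuous A2 := continuous_iff_continuousAt.2 fun t => (hA2 t).continuousAt
    have c4 : Continuous A3 := continuous_iff_continuousAt.2 fun t => (hA3 t).continuousAt
    simp only [hG]
    fun_prop
  have hGz : ∀ t, R ≤ |t| → G t = 0 := by
    intro t ht
    obtain ⟨a, b, c, d, e⟩ := hz t ht
    simp [hG, a, b, c, d, e]
  have h1 : ∫ t, G t = ∫ t in (-R)..R, G t := by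
    rw [intervalIntegral.integral_of_le (by linarith)]
    symm
    apply setIntegral_eq_integral_of_forall_compl_eq_zero
    intro t ht
    apply hGz
    by_contra! h
    exact ht ⟨by linarith [(abs_lt.1 h).1], by linarith [(abs_lt.1 h).2]⟩
  rw [h1, intervalIntegral.integral_eq_sub_of_hasDerivAt (fun t _ => hW t)
    (hGc.intervalIntegrable _ _)]
  obtain ⟨a, b, c, d, e⟩ := hz R (le_abs_self R)
  obtain ⟨a', b', c', d', e'⟩ := hz (-R) (by rw [abs_neg]; exact le_abs_self R)
  simp [hE, hE1, a, b, c, d, a', b', c', d']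

lemma weak_full (μ ν l : ℝ) (U U1 U2 H H1 H2 A0 A1 A2 A3 A4 : ℝ → ℝ)
    (hU : ∀ t, HasDerivAt U (U1 t) t) (hU1 : ∀ t, HasDerivAt U1 (U2 t) t)
    (hHdef : ∀ t, H t = U2 t + ν * U1 t - exp (2 * t) * U t)
    (hH : ∀ t, HasDerivAt H (H1 t) t) (hH1 : ∀ t, HasDerivAt H1 (H2 t) t)
    (heq : ∀ t, H2 t + (2 * μ + ν) * H1 t + μ * (μ + ν) * H t - exp (2 * t) * H t
      = l * exp (2 * t) * U t)
    (hA0 : ∀ t, HasDerivAt A0 (A1 t) t) (hA1 : ∀ t, HasDerivAt A1 (A2 t) t)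
    (hA2 : ∀ t, HasDerivAt A2 (A3 t) t) (hA3 : ∀ t, HasDerivAt A3 (A4 t) t)
    (hA4 : Continuous A4)
    (hi : ∀ k : ℕ, Integrable (fun t => U t * exp (2 * t) ^ k * A0 t) ∧
      Integrable (fun t => U t * exp (2 * t) ^ k * A1 t) ∧
      Integrable (fun t => U t * exp (2 * t) ^ k * A2 t) ∧
      Integrable (fun t => U t * exp (2 * t) ^ k * A3 t) ∧
      Integrable (fun t => U t * exp (2 * t) ^ k * A4 t)) :
    ∫ t, U t * (
      (A4 t - (2 * μ + ν) * A3 t + (μ * (μ + ν) - exp (2 * t)) * A2 t - 4 * exp (2 * t) * A1 t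
        - 4 * exp (2 * t) * A0 t)
      - ν * (A3 t - (2 * μ + ν) * A2 t + (μ * (μ + ν) - exp (2 * t)) * A1 t
        - 2 * exp (2 * t) * A0 t)
      - exp (2 * t) * (A2 t - (2 * μ + ν) * A1 t + (μ * (μ + ν) - exp (2 * t)) * A0 t)
      - l * exp (2 * t) * A0 t) = 0 := by
  obtain ⟨η, M, hη, hM, hηz, hη0⟩ := exists_cutoff
  set G0 : ℝ → ℝ := fun t => U t * (
      (A4 t - (2 * μ + ν) * A3 t + (μ * (μ + ν) - exp (2 * t)) * A2 t - 4 * exp (2 * t) * A1 t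
        - 4 * exp (2 * t) * A0 t)
      - ν * (A3 t - (2 * μ + ν) * A2 t + (μ * (μ + ν) - exp (2 * t)) * A1 t
        - 2 * exp (2 * t) * A0 t)
      - exp (2 * t) * (A2 t - (2 * μ + ν) * A1 t + (μ * (μ + ν) - exp (2 * t)) * A0 t)
      - l * exp (2 * t) * A0 t) with hG0
  -- coefficients k4 = 1, k3, k2, k1
  set G1 : ℝ → ℝ := fun t => U t * (4 * A3 t + (-(2 * μ + ν) - ν) * (3 * A2 t)
    + ((μ * (μ + ν) + ν * (2 * μ + ν)) - 2 * exp (2 * t)) * (2 * A1 t)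
    + (-(ν * (μ * (μ + ν))) + (-4 + ν + (2 * μ + ν)) * exp (2 * t)) * A0 t) with hG1
  set G2 : ℝ → ℝ := fun t => U t * (6 * A2 t + (-(2 * μ + ν) - ν) * (3 * A1 t)
    + ((μ * (μ + ν) + ν * (2 * μ + ν)) - 2 * exp (2 * t)) * A0 t) with hG2
  set G3 : ℝ → ℝ := fun t => U t * (4 * A1 t + (-(2 * μ + ν) - ν) * A0 t) with hG3
  set G4 : ℝ → ℝ := fun t => U t * A0 t with hG4
  obtain ⟨a0, b0, c0, d0, e0⟩ := hi 0
  obtain ⟨a1, b1, c1, d1, e1⟩ := hi 1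
  obtain ⟨a2, b2, c2, d2, e2⟩ := hi 2
  simp only [pow_zero, mul_one, pow_one] at a0 b0 c0 d0 e0 a1 b1 c1 d1 e1
  have iG0 : Integrable G0 := by
    refine ((((((((e0.add (d0.const_mul (-(2 * μ + ν) - ν))).add
      (c0.const_mul (μ * (μ + ν) + ν * (2 * μ + ν)))).add (c1.const_mul (-2))).add
      (b0.const_mul (-(ν * (μ * (μ + ν)))))).add (b1.const_mul (-4 + ν + (2 * μ + ν)))).add
      (a1.const_mul (-4 + 2 * ν - μ * (μ + ν) - l))).add a2)).congr (ae_of_all _ fun t => ?_)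
    simp only [hG0, Pi.add_apply]; ring
  have iG1 : Integrable G1 := by
    refine ((((((d0.const_mul 4).add (c0.const_mul ((-(2 * μ + ν) - ν) * 3))).add
      (b0.const_mul ((μ * (μ + ν) + ν * (2 * μ + ν)) * 2))).add (b1.const_mul (-4))).add
      (a0.const_mul (-(ν * (μ * (μ + ν)))))).add (a1.const_mul (-4 + ν + (2 * μ + ν)))).congr
      (ae_of_all _ fun t => ?_)
    simp only [hG1, Pi.add_apply]; ring
  have iG2 : Integrable G2 := by
    refine (((((c0.const_mul 6).add (b0.const_mul ((-(2 * μ + ν) - ν) * 3))).add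
      (a0.const_mul ((μ * (μ + ν) + ν * (2 * μ + ν))))).add (a1.const_mul (-2)))).congr
      (ae_of_all _ fun t => ?_)
    simp only [hG2, Pi.add_apply]; ring
  have iG3 : Integrable G3 := by
    refine ((b0.const_mul 4).add (a0.const_mul ((-(2 * μ + ν) - ν)))).congr
      (ae_of_all _ fun t => ?_)
    simp only [hG3, Pi.add_apply]; ring
  have iG4 : Integrable G4 := a0
  have hηc : ∀ i, Continuous (η i) := fun i =>
    continuous_iff_continuousAt.2 fun t => (hη i t).continuousAt
  set F : ℕ → ℝ → ℝ := fun n t => η 0 (1 / ((n : ℝ) + 1) * t) * G0 t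
    + (1 / ((n : ℝ) + 1)) * (η 1 (1 / ((n : ℝ) + 1) * t) * G1 t)
    + (1 / ((n : ℝ) + 1)) ^ 2 * (η 2 (1 / ((n : ℝ) + 1) * t) * G2 t)
    + (1 / ((n : ℝ) + 1)) ^ 3 * (η 3 (1 / ((n : ℝ) + 1) * t) * G3 t)
    + (1 / ((n : ℝ) + 1)) ^ 4 * (η 4 (1 / ((n : ℝ) + 1) * t) * G4 t) with hF
  have hF0 : ∀ n, ∫ t, F n t = 0 := by
    intro n
    set ε : ℝ := 1 / ((n : ℝ) + 1) with hε
    have hε0 : 0 < ε := by positivity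
    have hηd : ∀ i t, HasDerivAt (fun t => η i (ε * t)) (ε * η (i + 1) (ε * t)) t := by
      intro i t
      have := (hη i (ε * t)).comp t ((hasDerivAt_id t).const_mul ε)
      exact this.congr_deriv (by simp; ring)
    have key := weak_compact μ ν l (2 / ε) (by positivity) U U1 U2 H H1 H2
      (fun t => η 0 (ε * t) * A0 t)
      (fun t => ε * η 1 (ε * t) * A0 t + η 0 (ε * t) * A1 t)
      (fun t => ε ^ 2 * η 2 (ε * t) * A0 t + 2 * (ε * η 1 (ε * t) * A1 t) + η 0 (ε * t) * A2 t)
      (fun t => ε ^ 3 * η 3 (ε * t) * A0 t + 3 * (ε ^ 2 * η 2 (ε * t) * A1 t)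
        + 3 * (ε * η 1 (ε * t) * A2 t) + η 0 (ε * t) * A3 t)
      (fun t => ε ^ 4 * η 4 (ε * t) * A0 t + 4 * (ε ^ 3 * η 3 (ε * t) * A1 t)
        + 6 * (ε ^ 2 * η 2 (ε * t) * A2 t) + 4 * (ε * η 1 (ε * t) * A3 t) + η 0 (ε * t) * A4 t)
      hU hU1 hHdef hH hH1 heq ?_ ?_ ?_ ?_ ?_ ?_
    · rw [← key]
      congr 1; ext t
      simp only [hF, hG0, hG1, hG2, hG3, hG4]
      ring
    · intro t
      exact ((hηd 0 t).mul (hA0 t)).congr_deriv (by ring)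
    · intro t
      exact ((((hηd 1 t).const_mul ε).mul (hA0 t)).add ((hηd 0 t).mul (hA1 t))).congr_deriv (by ring)
    · intro t
      exact (((((hηd 2 t).const_mul (ε ^ 2)).mul (hA0 t)).add
        ((((hηd 1 t).const_mul ε).mul (hA1 t)).const_mul 2)).add
        ((hηd 0 t).mul (hA2 t))).congr_deriv (by ring)
    · intro t
      exact ((((((hηd 3 t).const_mul (ε ^ 3)).mul (hA0 t)).add
        ((((hηd 2 t).const_mul (ε ^ 2)).mul (hA1 t)).const_mul 3)).add
        ((((hηd 1 t).const_mul ε).mul (hA2 t)).const_mul 3)).add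
        ((hηd 0 t).mul (hA3 t))).congr_deriv (by ring)
    · have c1 : Continuous A0 := continuous_iff_continuousAt.2 fun t => (hA0 t).continuousAt
      have c2 : Continuous A1 := continuous_iff_continuousAt.2 fun t => (hA1 t).continuousAt
      have c3 : Continuous A2 := continuous_iff_continuousAt.2 fun t => (hA2 t).continuousAt
      have c4 : Continuous A3 := continuous_iff_continuousAt.2 fun t => (hA3 t).continuousAt
      have := hηc 0; have := hηc 1; have := hηc 2; have := hηc 3; have := hηc 4
      fun_prop
    · intro t ht
      have ht' : 2 ≤ |ε * t| := by
        rw [abs_mul, abs_of_pos hε0]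
        rw [div_le_iff₀ hε0] at ht
        linarith
      simp [hηz _ _ ht']
  have hlim : Tendsto (fun n => ∫ t, F n t) atTop (nhds (∫ t, G0 t)) := by
    have hM0 : 0 ≤ M := (abs_nonneg _).trans (hM 0 (by norm_num) 0)
    have hε0 : ∀ n : ℕ, 0 ≤ 1 / ((n : ℝ) + 1) := fun n => by positivity
    have hε1 : ∀ n : ℕ, 1 / ((n : ℝ) + 1) ≤ 1 := fun n => by
      rw [div_le_one (by positivity)]; linarith [(Nat.cast_nonneg n : (0:ℝ) ≤ n)]
    refine tendsto_integral_of_dominated_convergence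
      (fun t => M * (‖G0 t‖ + ‖G1 t‖ + ‖G2 t‖ + ‖G3 t‖ + ‖G4 t‖)) ?_ ?_ ?_ ?_
    · intro n
      have m : ∀ i, AEStronglyMeasurable (fun t : ℝ => η i (1 / ((n : ℝ) + 1) * t)) volume := fun i =>
        ((hηc i).comp (continuous_const.mul continuous_id)).aestronglyMeasurable
      exact ((((((m 0).mul iG0.1)).add (((m 1).mul iG1.1).const_mul _)).add
        (((m 2).mul iG2.1).const_mul _)).add (((m 3).mul iG3.1).const_mul _)).add
        (((m 4).mul iG4.1).const_mul _)
    · exact ((((iG0.norm.add iG1.norm).add iG2.norm).add iG3.norm).add iG4.norm).const_mul M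
    · intro n
      refine ae_of_all _ fun t => ?_
      have hb : ∀ i ≤ 4, ∀ g : ℝ, ‖(1 / ((n : ℝ) + 1)) ^ i * (η i (1 / ((n : ℝ) + 1) * t) * g)‖ ≤ M * ‖g‖ := by
        intro i hi g
        rw [norm_mul, norm_mul, norm_pow, Real.norm_of_nonneg (hε0 n)]
        calc _ ≤ 1 * (M * ‖g‖) := by
              gcongr
              · exact pow_le_one₀ (hε0 n) (hε1 n)
              · exact hM i hi _
          _ = _ := one_mul _
      have q0 := hb 0 (by norm_num) (G0 t)
      have q1 := hb 1 (by norm_num) (G1 t)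
      have q2 := hb 2 (by norm_num) (G2 t)
      have q3 := hb 3 (by norm_num) (G3 t)
      have q4 := hb 4 (by norm_num) (G4 t)
      rw [pow_zero, one_mul] at q0
      rw [pow_one] at q1
      simp only [hF]
      refine (norm_add_le _ _).trans ?_
      refine (add_le_add_left (norm_add_le _ _) _).trans ?_
      refine (add_le_add_left (add_le_add_left (norm_add_le _ _) _) _).trans ?_
      refine (add_le_add_left (add_le_add_left (add_le_add_left (norm_add_le _ _) _) _) _).trans ?_
      linarith
    · refine ae_of_all _ fun t => ?_
      have hεt : Tendsto (fun n : ℕ => 1 / ((n : ℝ) + 1)) atTop (nhds 0) :=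
        tendsto_one_div_add_atTop_nhds_zero_nat
      have hηt : ∀ i, Tendsto (fun n : ℕ => η i (1 / ((n : ℝ) + 1) * t)) atTop (nhds (η i 0)) := by
        intro i
        have h1 : Tendsto (fun n : ℕ => 1 / ((n : ℝ) + 1) * t) atTop (nhds 0) := by
          simpa using hεt.mul_const t
        exact ((hηc i).tendsto 0).comp h1
      have := ((((((hηt 0).mul_const (G0 t))).add (hεt.mul ((hηt 1).mul_const (G1 t)))).add
        ((hεt.pow 2).mul ((hηt 2).mul_const (G2 t)))).add
        ((hεt.pow 3).mul ((hηt 3).mul_const (G3 t)))).add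
        ((hεt.pow 4).mul ((hηt 4).mul_const (G4 t)))
      simpa [hF, hη0] using this
  simp only [hF0] at hlim
  exact (tendsto_nhds_unique hlim tendsto_const_nhds)

lemma euler_smooth {v : ℝ → ℝ} (hv : ContDiffOn ℝ (⊤ : ℕ∞) v (Ioi 0)) :
    ContDiffOn ℝ (⊤ : ℕ∞) (eulerOp v) (Ioi 0) := by
  have h := hv.deriv_of_isOpen (m := (⊤ : ℕ∞)) isOpen_Ioi (by simp)
  exact contDiffOn_id.mul h

lemma smooth_hasDeriv {v : ℝ → ℝ} (hv : ContDiffOn ℝ (⊤ : ℕ∞) v (Ioi 0)) {x : ℝ} (hx : 0 < x) :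
    HasDerivAt v (eulerOp v x / x) x := by
  have h := ((hv.differentiableOn (by simp)).differentiableAt (Ioi_mem_nhds hx)).hasDerivAt
  exact h.congr_deriv (by unfold eulerOp; field_simp)

lemma smooth_comp_exp {v : ℝ → ℝ} (hv : ContDiffOn ℝ (⊤ : ℕ∞) v (Ioi 0)) (t : ℝ) :
    HasDerivAt (fun t => v (exp t)) (eulerOp v (exp t)) t := by
  have h := (smooth_hasDeriv hv (exp_pos t)).comp t (Real.hasDerivAt_exp t)
  exact h.congr_deriv (by field_simp)

lemma euler_add_mul {v : ℝ → ℝ} (hv : ContDiffOn ℝ (⊤ : ℕ∞) v (Ioi 0)) (c : ℝ) {x : ℝ} (hx : 0 < x) :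
    eulerOp (fun y => eulerOp v y + c * v y) x = eulerOp (eulerOp v) x + c * eulerOp v x := by
  have h := (smooth_hasDeriv (euler_smooth hv) hx).add ((smooth_hasDeriv hv hx).const_mul c)
  have : eulerOp (fun y => eulerOp v y + c * v y) x
      = x * (eulerOp (eulerOp v) x / x + c * (eulerOp v x / x)) := by
    rw [eulerOp]; congr 1; exact h.deriv
  rw [this]; field_simp

lemma besselQ_eq {v : ℝ → ℝ} (hv : ContDiffOn ℝ (⊤ : ℕ∞) v (Ioi 0)) (ν c : ℝ) {x : ℝ} (hx : 0 < x) :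
    besselQ ν c v x = eulerOp (eulerOp v) x + (2 * c + ν) * eulerOp v x + c * (c + ν) * v x
      - x ^ 2 * v x := by
  rw [besselQ, euler_add_mul hv _ hx]; ring

lemma besselQ_smooth {v : ℝ → ℝ} (hv : ContDiffOn ℝ (⊤ : ℕ∞) v (Ioi 0)) (ν c : ℝ) :
    ContDiffOn ℝ (⊤ : ℕ∞) (besselQ ν c v) (Ioi 0) := by
  have h1 := euler_smooth hv
  have h2 := euler_smooth h1
  have : ContDiffOn ℝ (⊤ : ℕ∞) (fun x => eulerOp (eulerOp v) x + (2 * c + ν) * eulerOp v x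
      + c * (c + ν) * v x - x ^ 2 * v x) (Ioi 0) := by fun_prop
  exact this.congr fun x hx => besselQ_eq hv ν c hx

lemma eig_eq {u : ℝ → ℝ} {μ ν l : ℝ} (hu : ContDiffOn ℝ (⊤ : ℕ∞) u (Ioi 0))
    (he : ∀ x > (0 : ℝ), Dop μ ν u x = l * u x) {x : ℝ} (hx : 0 < x) :
    eulerOp (eulerOp (besselQ ν 0 u)) x + (2 * μ + ν) * eulerOp (besselQ ν 0 u) x
      + μ * (μ + ν) * besselQ ν 0 u x - x ^ 2 * besselQ ν 0 u x = l * x ^ 2 * u x := by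
  have h := he x hx
  rw [Dop, besselQ_eq (besselQ_smooth hu ν 0) ν μ hx, div_eq_iff (by positivity)] at h
  linarith

lemma u_decay {u : ℝ → ℝ} {μ ν l : ℝ} (hν : 0 ≤ ν) (hμ : 0 ≤ μ) (hl : 0 ≤ l)
    (hu : ContDiffOn ℝ (⊤ : ℕ∞) u (Ioi 0))
    (hL : IntegrableOn (fun x => u x ^ 2 * x ^ (μ + ν + 1)) (Ioi 0))
    (he : ∀ x > (0 : ℝ), Dop μ ν u x = l * u x) :
    ∃ C X, 1 ≤ X ∧ ∀ x ≥ X, |u x| ≤ C * exp (-x / 2) := by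
  have hh := besselQ_smooth hu ν 0
  set h := besselQ ν 0 u with hdef
  refine decay_aux (ν + 1) (2 * μ + ν + 3) (2 * μ + ν + 1 + μ * (μ + ν)) l
    (by positivity) (by positivity) (by positivity) hl u (fun x => eulerOp u x / x)
    (fun x => h x / x) (fun x => (eulerOp h x - h x) / x ^ 2) ?_ ?_ ?_ ?_ ?_
  · intro x hx
    exact smooth_hasDeriv hu (by have : (1:ℝ) ≤ x := hx; linarith)
  · intro x hx
    have hx0 : 0 < x := by have : (1:ℝ) ≤ x := hx; linarith
    refine ((smooth_hasDeriv (euler_smooth hu) hx0).div (hasDerivAt_id x) hx0.ne').congr_deriv ?_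
    have : h x = _ := besselQ_eq hu ν 0 hx0
    rw [this]; simp only [id]; field_simp; ring
  · intro x hx
    have hx0 : 0 < x := by have : (1:ℝ) ≤ x := hx; linarith
    refine ((smooth_hasDeriv hh hx0).div (hasDerivAt_id x) hx0.ne').congr_deriv ?_
    simp only [id]; field_simp
  · intro x hx
    have hx0 : 0 < x := by have : (1:ℝ) ≤ x := hx; linarith
    refine ((((smooth_hasDeriv (euler_smooth hh) hx0)).sub (smooth_hasDeriv hh hx0)).div
      ((hasDerivAt_id x).pow 2) (by simp [hx0.ne'])).congr_deriv ?_
    have := eig_eq hu he hx0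
    rw [← hdef] at this
    simp only [id, Pi.sub_apply, Pi.pow_apply]; field_simp
    push_cast
    linear_combination x * this
  · refine Integrable.mono' (hL.mono_set (Ioi_subset_Ioi zero_le_one)) ?_ ?_
    · refine (ContinuousOn.aestronglyMeasurable ?_ measurableSet_Ioi)
      exact (hu.continuousOn.mono (Ioi_subset_Ioi zero_le_one)).pow 2
    · refine (ae_restrict_iff' measurableSet_Ioi).2 (ae_of_all _ fun x hx => ?_)
      have hx1 : (1:ℝ) < x := hx
      rw [Real.norm_of_nonneg (sq_nonneg _)]
      exact le_mul_of_one_le_right (sq_nonneg _) (one_le_rpow hx1.le (by positivity))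

lemma u_bound {u : ℝ → ℝ} {μ ν l B : ℝ} (hν : 0 ≤ ν) (hμ : 0 ≤ μ) (hl : 0 ≤ l)
    (hu : ContDiffOn ℝ (⊤ : ℕ∞) u (Ioi 0))
    (hL : IntegrableOn (fun x => u x ^ 2 * x ^ (μ + ν + 1)) (Ioi 0))
    (he : ∀ x > (0 : ℝ), Dop μ ν u x = l * u x)
    (hB : Tendsto (fun x : ℝ => x ^ ν * u x) (nhdsWithin 0 (Ioi 0)) (nhds B)) :
    ∃ C, 0 ≤ C ∧ ∀ x > 0, |u x| ≤ C * (x ^ (-ν) * exp (-x / 4)) := by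
  obtain ⟨C1, X, hX1, hX⟩ := u_decay hν hμ hl hu hL he
  have h0 : ∃ δ > 0, ∀ x, 0 < x → x < δ → |x ^ ν * u x * exp (x / 4)| ≤ |B| * 1 + 1 := by
    have h1 : Tendsto (fun x : ℝ => |x ^ ν * u x * exp (x / 4)|) (nhdsWithin 0 (Ioi 0))
        (nhds (|B * exp (0 / 4)|)) := by
      apply Tendsto.abs
      apply hB.mul
      apply tendsto_nhdsWithin_of_tendsto_nhds
      exact (by fun_prop : Continuous fun x : ℝ => exp (x / 4)).tendsto 0
    have h2 := h1.eventually (gt_mem_nhds (show |B * exp (0 / 4)| < |B| * 1 + 1 by simp))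
    rw [eventually_nhdsWithin_iff, Metric.eventually_nhds_iff] at h2
    obtain ⟨δ, hδ, h3⟩ := h2
    refine ⟨δ, hδ, fun x hx hxd => (h3 ?_ hx).le⟩
    rw [Real.dist_eq, sub_zero, abs_of_pos hx]; exact hxd
  obtain ⟨δ, hδ, hδ'⟩ := h0
  have hinf : ∃ Y ≥ X, ∀ x ≥ Y, x ^ ν * exp (-(1 / 4) * x) ≤ 1 := by
    have h1 := tendsto_rpow_mul_exp_neg_mul_atTop_nhds_zero ν (1 / 4) (by norm_num)
    have h2 := h1.eventually (gt_mem_nhds (show (0:ℝ) < 1 by norm_num))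
    obtain ⟨Y, hY⟩ := eventually_atTop.1 h2
    exact ⟨max X Y, le_max_left _ _, fun x hx => (hY x ((le_max_right _ _).trans hx)).le⟩
  obtain ⟨Y, hYX, hY⟩ := hinf
  obtain ⟨C2, hC2⟩ := (isCompact_Icc (a := δ / 2) (b := Y)).exists_bound_of_continuousOn
    (f := fun x => x ^ ν * u x * exp (x / 4)) (by
      have hsub : Icc (δ / 2) Y ⊆ Ioi 0 := fun x hx => by
        have := hx.1; show 0 < x; linarith
      refine ContinuousOn.mul (ContinuousOn.mul ?_ (hu.continuousOn.mono hsub)) (by fun_prop)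
      intro x hx
      exact (continuousAt_rpow_const x ν (Or.inl (ne_of_gt (hsub hx)))).continuousWithinAt)
  refine ⟨max (|B| * 1 + 1) (max |C1| C2), le_max_of_le_left (by positivity), fun x hx => ?_⟩
  have hx : 0 < x := hx
  have key : |x ^ ν * u x * exp (x / 4)| ≤ max (|B| * 1 + 1) (max |C1| C2) := by
    by_cases h1 : x < δ
    · exact (hδ' x hx h1).trans (le_max_left _ _)
    by_cases h2 : x ≤ Y
    · exact (hC2 x ⟨by linarith, h2⟩).trans ((le_max_right _ _).trans (le_max_right _ _))
    · push Not at h1 h2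
      refine le_trans ?_ ((le_max_left |C1| C2).trans (le_max_right _ _))
      have h3 := hX x (hYX.trans h2.le)
      have h4 := hY x h2.le
      rw [abs_mul, abs_mul, abs_of_pos (exp_pos _), abs_of_pos (rpow_pos_of_pos hx ν)]
      have h5 : exp (-x / 2) * exp (x / 4) = exp (-(1 / 4) * x) := by rw [← exp_add]; ring_nf
      calc x ^ ν * |u x| * exp (x / 4) ≤ x ^ ν * (|C1| * exp (-x / 2)) * exp (x / 4) := by
            gcongr
            exact h3.trans (by gcongr; exact le_abs_self _)
        _ = |C1| * (x ^ ν * exp (-(1 / 4) * x)) := by rw [← h5]; ring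
        _ ≤ |C1| * 1 := by gcongr
        _ = |C1| := mul_one _
  rw [abs_mul, abs_mul, abs_of_pos (exp_pos _), abs_of_pos (rpow_pos_of_pos hx ν)] at key
  have h6 : x ^ ν * x ^ (-ν) = 1 := by rw [← rpow_add hx]; simp
  have h7 : exp (x / 4) * exp (-x / 4) = 1 := by rw [← exp_add]; ring_nf; simp
  calc |u x| = (x ^ ν * |u x| * exp (x / 4)) * (x ^ (-ν) * exp (-x / 4)) := by
        linear_combination (-(|u x|) * (exp (x / 4) * exp (-x / 4))) * h6 - |u x| * h7
    _ ≤ _ := by gcongr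

/-- The basic family of integrals. -/
noncomputable def II (d : ℝ → ℝ) (α β : ℝ) (i p q : ℕ) (a b : ℝ) : ℝ :=
  ∫ x in Ioi (0 : ℝ), d x * x ^ (2 * i) * besselJt (α + p) (a * x) * besselJt (β + q) (b * x)

lemma II_integrable {d : ℝ → ℝ} (hd : ∀ k : ℕ, IntegrableOn (fun x => d x * x ^ k) (Ioi 0))
    {α β : ℝ} (hα : 0 ≤ α) (hβ : 0 ≤ β) (i p q : ℕ) (a b : ℝ) :
    IntegrableOn (fun x => d x * x ^ i * besselJt (α + p) (a * x) * besselJt (β + q) (b * x))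
      (Ioi 0) := by
  have h1 : Continuous (fun x => besselJt (α + p) (a * x)) :=
    (bj_cont (by positivity)).comp (continuous_const.mul continuous_id)
  have h2 : Continuous (fun x => besselJt (β + q) (b * x)) :=
    (bj_cont (by positivity)).comp (continuous_const.mul continuous_id)
  have := (Integrable.mul_bdd (c := 1 / Gamma (α + p + 1)) (hd i) h1.aestronglyMeasurable
    (ae_of_all _ fun x => bj_bound (by positivity) _))
  exact (Integrable.mul_bdd (c := 1 / Gamma (β + q + 1)) this h2.aestronglyMeasurable
    (ae_of_all _ fun x => bj_bound (by positivity) _))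

lemma II_swap (d : ℝ → ℝ) (α β : ℝ) (i p q : ℕ) (a b : ℝ) :
    II d α β i p q a b = II d β α i q p b a := by
  unfold II
  congr 1; ext x; ring

lemma II_rec {d : ℝ → ℝ} (hd : ∀ k : ℕ, IntegrableOn (fun x => d x * x ^ k) (Ioi 0))
    {α β : ℝ} (hα : 0 ≤ α) (hβ : 0 ≤ β) (i p q : ℕ) (a b : ℝ) :
    a ^ 2 / 4 * II d α β (i + 1) (p + 2) q a b
      = (α + p + 1) * II d α β i (p + 1) q a b - II d α β i p q a b := by
  unfold II
  rw [← integral_const_mul, ← integral_const_mul, ← integral_sub]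
  · congr 1; ext x
    have := bj_rec (p := α + p) (by positivity) (a * x)
    have e1 : α + ((p + 2 : ℕ) : ℝ) = α + p + 2 := by push_cast; ring
    have e2 : α + ((p + 1 : ℕ) : ℝ) = α + p + 1 := by push_cast; ring
    rw [e1, e2]
    linear_combination (d x * x ^ (2 * i) * besselJt (β + q) (b * x)) * this
  · exact (II_integrable hd hα hβ _ _ _ _ _).const_mul _
  · exact (II_integrable hd hα hβ _ _ _ _ _)

lemma II_rec' {d : ℝ → ℝ} (hd : ∀ k : ℕ, IntegrableOn (fun x => d x * x ^ k) (Ioi 0))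
    {α β : ℝ} (hα : 0 ≤ α) (hβ : 0 ≤ β) (i p q : ℕ) (a b : ℝ) :
    b ^ 2 / 4 * II d α β (i + 1) p (q + 2) a b
      = (β + q + 1) * II d α β i p (q + 1) a b - II d α β i p q a b := by
  rw [II_swap, II_swap d α β i, II_swap d α β i]
  exact II_rec hd hβ hα _ _ _ _ _

lemma II_hasFDeriv {d : ℝ → ℝ} (hd : ∀ k : ℕ, IntegrableOn (fun x => d x * x ^ k) (Ioi 0))
    {α β : ℝ} (hα : 0 ≤ α) (hβ : 0 ≤ β) (i p q : ℕ) (a b : ℝ) :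
    HasFDerivAt (fun z : ℝ × ℝ => II d α β i p q z.1 z.2)
      ((-(a / 2) * II d α β (i + 1) (p + 1) q a b) • ContinuousLinearMap.fst ℝ ℝ ℝ
       + (-(b / 2) * II d α β (i + 1) p (q + 1) a b) • ContinuousLinearMap.snd ℝ ℝ ℝ) (a, b) := by
  set A : ℝ := 1 / Gamma (α + p + 1) with hA
  set A' : ℝ := 1 / Gamma (α + p + 1 + 1) with hA'
  set B : ℝ := 1 / Gamma (β + q + 1) with hB
  set B' : ℝ := 1 / Gamma (β + q + 1 + 1) with hB'
  have hA0 : 0 ≤ A := by have := Gamma_pos_of_pos (show 0 < α + p + 1 by positivity); positivity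
  have hA'0 : 0 ≤ A' := by
    have := Gamma_pos_of_pos (show 0 < α + p + 1 + 1 by positivity); positivity
  have hB0 : 0 ≤ B := by have := Gamma_pos_of_pos (show 0 < β + q + 1 by positivity); positivity
  have hB'0 : 0 ≤ B' := by
    have := Gamma_pos_of_pos (show 0 < β + q + 1 + 1 by positivity); positivity
  set F' : ℝ × ℝ → ℝ → (ℝ × ℝ →L[ℝ] ℝ) := fun z x =>
    (-(z.1 / 2) * (d x * x ^ (2 * (i + 1)) * besselJt (α + (p + 1 : ℕ)) (z.1 * x)
      * besselJt (β + q) (z.2 * x))) • ContinuousLinearMap.fst ℝ ℝ ℝ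
    + (-(z.2 / 2) * (d x * x ^ (2 * (i + 1)) * besselJt (α + p) (z.1 * x)
      * besselJt (β + (q + 1 : ℕ)) (z.2 * x))) • ContinuousLinearMap.snd ℝ ℝ ℝ with hF'
  have e1 : α + ((p + 1 : ℕ) : ℝ) = α + p + 1 := by push_cast; ring
  have e2 : β + ((q + 1 : ℕ) : ℝ) = β + q + 1 := by push_cast; ring
  have i1 := II_integrable hd hα hβ (2 * (i + 1)) (p + 1) q a b
  have i2 := II_integrable hd hα hβ (2 * (i + 1)) p (q + 1) a b
  have key := hasFDerivAt_integral_of_dominated_of_fderiv_le (𝕜 := ℝ) (μ := volume.restrict (Ioi 0))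
    (F := fun (z : ℝ × ℝ) x => d x * x ^ (2 * i) * besselJt (α + p) (z.1 * x)
      * besselJt (β + q) (z.2 * x)) (F' := F') (x₀ := (a, b)) (s := ball (a, b) 1)
    (bound := fun x => ‖d x * x ^ (2 * (i + 1))‖ * ((|a| + |b| + 1) * (A' * B + A * B')))
    (ball_mem_nhds _ one_pos) ?_ (II_integrable hd hα hβ _ _ _ _ _) ?_ ?_ ?_ ?_
  · refine key.congr_fderiv ?_
    simp only [hF']
    rw [integral_add, integral_smul_const, integral_smul_const]
    · simp only [II, integral_const_mul]
    · exact (i1.const_mul _).smul_const _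
    · exact (i2.const_mul _).smul_const _
  · exact Eventually.of_forall fun z => (II_integrable hd hα hβ _ _ _ _ _).1
  · have j1 := (i1.const_mul (-(a / 2))).smul_const (ContinuousLinearMap.fst ℝ ℝ ℝ)
    have j2 := (i2.const_mul (-(b / 2))).smul_const (ContinuousLinearMap.snd ℝ ℝ ℝ)
    exact j1.1.add j2.1
  · refine ae_of_all _ fun x z hz => ?_
    have hz1 : |z.1 - a| < 1 := by
      have := (le_max_left _ _).trans_lt (mem_ball.1 hz); simpa [Real.dist_eq] using this
    have hz2 : |z.2 - b| < 1 := by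
      have := (le_max_right _ _).trans_lt (mem_ball.1 hz); simpa [Real.dist_eq] using this
    have hz1' : |z.1| ≤ |a| + |b| + 1 := by
      have : |z.1| ≤ |z.1 - a| + |a| := by simpa using abs_add_le (z.1 - a) a
      linarith [abs_nonneg b]
    have hz2' : |z.2| ≤ |a| + |b| + 1 := by
      have : |z.2| ≤ |z.2 - b| + |b| := by simpa using abs_add_le (z.2 - b) b
      linarith [abs_nonneg a]
    have b1 : ‖besselJt (α + (p + 1 : ℕ)) (z.1 * x)‖ ≤ A' := by
      rw [e1]; exact bj_bound (by positivity) _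
    have b2 : ‖besselJt (β + (q + 1 : ℕ)) (z.2 * x)‖ ≤ B' := by
      rw [e2]; exact bj_bound (by positivity) _
    have b3 : ‖besselJt (α + p) (z.1 * x)‖ ≤ A := bj_bound (by positivity) _
    have b4 : ‖besselJt (β + q) (z.2 * x)‖ ≤ B := bj_bound (by positivity) _
    have c1 : ‖-(z.1 / 2)‖ ≤ |a| + |b| + 1 := by
      rw [norm_neg, norm_div, Real.norm_eq_abs, Real.norm_two]; linarith [abs_nonneg z.1]
    have c2 : ‖-(z.2 / 2)‖ ≤ |a| + |b| + 1 := by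
      rw [norm_neg, norm_div, Real.norm_eq_abs, Real.norm_two]; linarith [abs_nonneg z.2]
    have n1 : ‖ContinuousLinearMap.fst ℝ ℝ ℝ‖ ≤ 1 := ContinuousLinearMap.norm_fst_le ℝ ℝ ℝ
    have n2 : ‖ContinuousLinearMap.snd ℝ ℝ ℝ‖ ≤ 1 := ContinuousLinearMap.norm_snd_le ℝ ℝ ℝ
    simp only [hF']
    refine (norm_add_le _ _).trans ?_
    rw [norm_smul, norm_smul, norm_mul (-(z.1 / 2)), norm_mul (-(z.2 / 2)),
      norm_mul _ (besselJt (β + q) (z.2 * x)), norm_mul _ (besselJt (α + (p + 1 : ℕ)) (z.1 * x)),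
      norm_mul _ (besselJt (β + (q + 1 : ℕ)) (z.2 * x)), norm_mul _ (besselJt (α + p) (z.1 * x))]
    calc _ ≤ (|a| + |b| + 1) * (‖d x * x ^ (2 * (i + 1))‖ * A' * B) * 1
          + (|a| + |b| + 1) * (‖d x * x ^ (2 * (i + 1))‖ * A * B') * 1 := by gcongr
      _ = _ := by ring
  · exact ((hd _).norm).mul_const _
  · refine ae_of_all _ fun x z _ => ?_
    have g1 : HasFDerivAt (fun z : ℝ × ℝ => besselJt (α + p) (z.1 * x))
        ((-(z.1 * x / 2) * besselJt (α + p + 1) (z.1 * x)) • (x • ContinuousLinearMap.fst ℝ ℝ ℝ)) z := by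
      have q1 : HasFDerivAt (fun z : ℝ × ℝ => z.1 * x) (x • ContinuousLinearMap.fst ℝ ℝ ℝ) z :=
        (hasFDerivAt_fst (𝕜 := ℝ) (p := z)).mul_const x
      exact (bj_deriv (p := α + p) (by positivity) (z.1 * x)).comp_hasFDerivAt z q1
    have g2 : HasFDerivAt (fun z : ℝ × ℝ => besselJt (β + q) (z.2 * x))
        ((-(z.2 * x / 2) * besselJt (β + q + 1) (z.2 * x)) • (x • ContinuousLinearMap.snd ℝ ℝ ℝ)) z := by
      have q1 : HasFDerivAt (fun z : ℝ × ℝ => z.2 * x) (x • ContinuousLinearMap.snd ℝ ℝ ℝ) z :=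
        (hasFDerivAt_snd (𝕜 := ℝ) (p := z)).mul_const x
      exact (bj_deriv (p := β + q) (by positivity) (z.2 * x)).comp_hasFDerivAt z q1
    have := (g1.const_mul (d x * x ^ (2 * i))).mul g2
    refine this.congr_fderiv ?_
    simp only [hF', e1, e2]
    ext
    · simp; ring
    · simp; ring

lemma II_hasDeriv {d : ℝ → ℝ} (hd : ∀ k : ℕ, IntegrableOn (fun x => d x * x ^ k) (Ioi 0))
    {α β : ℝ} (hα : 0 ≤ α) (hβ : 0 ≤ β) (i p q : ℕ) {a b : ℝ → ℝ} {a' b' τ : ℝ}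
    (ha : HasDerivAt a a' τ) (hb : HasDerivAt b b' τ) :
    HasDerivAt (fun τ => II d α β i p q (a τ) (b τ))
      (-(a τ * a' / 2) * II d α β (i + 1) (p + 1) q (a τ) (b τ)
        - (b τ * b' / 2) * II d α β (i + 1) p (q + 1) (a τ) (b τ)) τ := by
  have h := (II_hasFDeriv hd hα hβ i p q (a τ) (b τ)).comp_hasDerivAt τ (ha.prodMk hb)
  refine h.congr_deriv ?_
  simp; ring

lemma integral_comp_exp' (g : ℝ → ℝ) : ∫ x in Ioi (0:ℝ), g x = ∫ t, exp t * g (exp t) := by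
  have := integral_image_eq_integral_abs_deriv_smul (s := univ) (f := exp) (f' := exp)
    MeasurableSet.univ (fun x _ => (Real.hasDerivAt_exp x).hasDerivWithinAt) (exp_injective.injOn) g
  rw [image_univ, range_exp] at this
  rw [this]
  simp [abs_of_pos (exp_pos _)]

lemma integrable_comp_exp' (g : ℝ → ℝ) :
    IntegrableOn g (Ioi 0) ↔ Integrable (fun t => exp t * g (exp t)) := by
  have := integrableOn_image_iff_integrableOn_abs_deriv_smul (s := univ) (f := exp) (f' := exp)
    MeasurableSet.univ (fun x _ => (Real.hasDerivAt_exp x).hasDerivWithinAt) (exp_injective.injOn) g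
  rw [image_univ, range_exp] at this
  rw [this]
  simp [abs_of_pos (exp_pos _)]

lemma u_integrable {u : ℝ → ℝ} {ν C r : ℝ} (hu : ContinuousOn u (Ioi 0))
    (hC : ∀ x > 0, |u x| ≤ C * (x ^ (-ν) * exp (-x / 4))) (hr : ν - 1 < r) :
    IntegrableOn (fun x => u x * x ^ r) (Ioi 0) := by
  have h1 := (integrableOn_rpow_mul_exp_neg_mul_rpow (p := 1) (s := r - ν) (b := 1 / 4)
    (by linarith) one_pos (by norm_num)).const_mul C
  refine Integrable.mono' h1 ?_ ?_
  · refine ContinuousOn.aestronglyMeasurable (hu.mul ?_) measurableSet_Ioi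
    intro x hx
    exact (continuousAt_rpow_const x r (Or.inl (ne_of_gt hx))).continuousWithinAt
  · refine (ae_restrict_iff' measurableSet_Ioi).2 (ae_of_all _ fun x hx => ?_)
    have hx : 0 < x := hx
    have h2 := rpow_pos_of_pos hx r
    rw [norm_mul, Real.norm_of_nonneg h2.le]
    calc ‖u x‖ * x ^ r ≤ C * (x ^ (-ν) * exp (-x / 4)) * x ^ r := by
          gcongr; exact hC x hx
      _ = C * (x ^ (-ν) * x ^ r * exp (-x / 4)) := by ring
      _ = _ := by rw [← rpow_add hx, rpow_one]; ring_nf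

lemma d_integrable {u : ℝ → ℝ} {μ ν C : ℝ} (hμ : 1 ≤ μ) (hu : ContinuousOn u (Ioi 0))
    (hC : ∀ x > 0, |u x| ≤ C * (x ^ (-ν) * exp (-x / 4))) (k : ℕ) :
    IntegrableOn (fun x => u x * x ^ (μ + ν + 1) * x ^ k) (Ioi 0) := by
  have hk : (0:ℝ) ≤ k := Nat.cast_nonneg k
  have := u_integrable (r := μ + ν + 1 + k) hu hC (by linarith)
  refine this.congr_fun ?_ measurableSet_Ioi
  intro x hx
  have hx : 0 < x := hx
  simp only
  rw [rpow_add hx, rpow_natCast]; ring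

/-- basic functions on the logarithmic scale -/
noncomputable def TT (m a b α β : ℝ) (z : ℕ × ℕ × ℕ) : ℝ → ℝ := fun t =>
  exp (m * t) * exp (2 * t) ^ z.1 * besselJt (α + z.2.1) (a * exp t) * besselJt (β + z.2.2) (b * exp t)

lemma TT_deriv (m a b : ℝ) {α β : ℝ} (hα : 0 ≤ α) (hβ : 0 ≤ β) (k p q : ℕ) (t : ℝ) :
    HasDerivAt (TT m a b α β (k, p, q))
      ((m + 2 * k) * TT m a b α β (k, p, q) t - a ^ 2 / 2 * TT m a b α β (k + 1, p + 1, q) t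
       - b ^ 2 / 2 * TT m a b α β (k + 1, p, q + 1) t) t := by
  have e1 : HasDerivAt (fun t => exp (m * t)) (m * exp (m * t)) t :=
    (((hasDerivAt_id t).const_mul m).exp).congr_deriv (by simp; ring)
  have e2 : HasDerivAt (fun t => exp (2 * t) ^ k) (2 * k * exp (2 * t) ^ k) t := by
    have : HasDerivAt (fun t => exp (2 * k * t)) (2 * k * exp (2 * k * t)) t :=
      (((hasDerivAt_id t).const_mul (2 * k : ℝ)).exp).congr_deriv (by simp; ring)
    have e : ∀ t : ℝ, exp (2 * t) ^ k = exp (2 * k * t) := fun t => by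
      rw [← exp_nat_mul]; ring_nf
    simp only [e]; exact this
  have j1 : HasDerivAt (fun t => besselJt (α + p) (a * exp t))
      (-(a * exp t / 2) * besselJt (α + p + 1) (a * exp t) * (a * exp t)) t :=
    HasDerivAt.comp (h₂ := besselJt (α + p)) t (bj_deriv (p := α + p) (by positivity) (a * exp t)) ((Real.hasDerivAt_exp t).const_mul a)
  have j2 : HasDerivAt (fun t => besselJt (β + q) (b * exp t))
      (-(b * exp t / 2) * besselJt (β + q + 1) (b * exp t) * (b * exp t)) t :=
    HasDerivAt.comp (h₂ := besselJt (β + q)) t (bj_deriv (p := β + q) (by positivity) (b * exp t)) ((Real.hasDerivAt_exp t).const_mul b)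
  refine (((e1.mul e2).mul j1).mul j2).congr_deriv ?_
  have x2 : exp (2 * t) = exp t ^ 2 := by rw [← exp_nat_mul]; norm_num
  simp only [TT, Pi.mul_apply]
  push_cast
  rw [pow_succ, x2, add_assoc α, add_assoc β]
  ring

lemma TT_integrable {U : ℝ → ℝ} {m a b α β : ℝ} (hα : 0 ≤ α) (hβ : 0 ≤ β)
    (hU : ∀ k : ℕ, Integrable (fun t => U t * exp (m * t) * exp (2 * t) ^ k)) (k : ℕ) (z : ℕ × ℕ × ℕ) :
    Integrable (fun t => U t * exp (2 * t) ^ k * TT m a b α β z t) := by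
  have h1 : Continuous (fun x => besselJt (α + z.2.1) (a * exp x)) :=
    (bj_cont (by positivity)).comp (continuous_const.mul continuous_exp)
  have h2 : Continuous (fun x => besselJt (β + z.2.2) (b * exp x)) :=
    (bj_cont (by positivity)).comp (continuous_const.mul continuous_exp)
  have := (Integrable.mul_bdd (c := 1 / Gamma (α + z.2.1 + 1)) (hU (k + z.1)) h1.aestronglyMeasurable
    (ae_of_all _ fun x => bj_bound (by positivity) _))
  have := (Integrable.mul_bdd (c := 1 / Gamma (β + z.2.2 + 1)) this h2.aestronglyMeasurable
    (ae_of_all _ fun x => bj_bound (by positivity) _))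
  refine this.congr (ae_of_all _ fun t => ?_)
  simp only [TT]; ring

lemma span_deriv {m a b α β : ℝ} (hα : 0 ≤ α) (hβ : 0 ≤ β) {F : ℝ → ℝ}
    (hF : F ∈ Submodule.span ℝ (range (TT m a b α β))) :
    ∃ G ∈ Submodule.span ℝ (range (TT m a b α β)), ∀ t, HasDerivAt F (G t) t := by
  have hmem : ∀ z, TT m a b α β z ∈ Submodule.span ℝ (range (TT m a b α β)) := fun z =>
    Submodule.subset_span ⟨z, rfl⟩
  induction hF using Submodule.span_induction with
  | mem F h =>
    obtain ⟨⟨k, p, q⟩, rfl⟩ := h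
    refine ⟨(m + 2 * k) • TT m a b α β (k, p, q) - (a ^ 2 / 2) • TT m a b α β (k + 1, p + 1, q)
       - (b ^ 2 / 2) • TT m a b α β (k + 1, p, q + 1), ?_, fun t => TT_deriv m a b hα hβ k p q t⟩
    exact Submodule.sub_mem _ (Submodule.sub_mem _ (Submodule.smul_mem _ _ (hmem _))
      (Submodule.smul_mem _ _ (hmem _))) (Submodule.smul_mem _ _ (hmem _))
  | zero => exact ⟨0, Submodule.zero_mem _, fun t => hasDerivAt_const t 0⟩
  | add F G _ _ hF hG =>
    obtain ⟨F', h1, h2⟩ := hF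
    obtain ⟨G', h3, h4⟩ := hG
    exact ⟨F' + G', Submodule.add_mem _ h1 h3, fun t => (h2 t).add (h4 t)⟩
  | smul c F _ hF =>
    obtain ⟨F', h1, h2⟩ := hF
    exact ⟨c • F', Submodule.smul_mem _ _ h1, fun t => (h2 t).const_mul c⟩

lemma span_integrable {U : ℝ → ℝ} {m a b α β : ℝ} (hα : 0 ≤ α) (hβ : 0 ≤ β)
    (hU : ∀ k : ℕ, Integrable (fun t => U t * exp (m * t) * exp (2 * t) ^ k)) {F : ℝ → ℝ}
    (hF : F ∈ Submodule.span ℝ (range (TT m a b α β))) (k : ℕ) :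
    Integrable (fun t => U t * exp (2 * t) ^ k * F t) := by
  induction hF using Submodule.span_induction with
  | mem F h => obtain ⟨z, rfl⟩ := h; exact TT_integrable hα hβ hU k z
  | zero => simp
  | add F G _ _ hF hG =>
    refine (hF.add hG).congr (ae_of_all _ fun t => ?_)
    simp only [Pi.add_apply]; ring
  | smul c F _ hF =>
    refine (hF.const_mul c).congr (ae_of_all _ fun t => ?_)
    simp only [Pi.smul_apply, smul_eq_mul]; ring

lemma TT_recp (m a b : ℝ) {α β : ℝ} (hα : 0 ≤ α) (k p q : ℕ) (t : ℝ) :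
    a ^ 2 / 4 * TT m a b α β (k + 1, p + 2, q) t
      = (α + p + 1) * TT m a b α β (k, p + 1, q) t - TT m a b α β (k, p, q) t := by
  have h := bj_rec (p := α + p) (by positivity) (a * exp t)
  have x2 : exp (2 * t) = exp t ^ 2 := by rw [← exp_nat_mul]; norm_num
  simp only [TT]
  push_cast
  rw [pow_succ, ← add_assoc, ← add_assoc]
  linear_combination exp (m * t) * exp (2 * t) ^ k * besselJt (β + q) (b * exp t) * h
    + exp (m * t) * exp (2 * t) ^ k * besselJt (β + q) (b * exp t) *
      besselJt (α + p + 2) (a * exp t) * a ^ 2 / 4 * x2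

lemma TT_recq (m a b : ℝ) {α β : ℝ} (hβ : 0 ≤ β) (k p q : ℕ) (t : ℝ) :
    b ^ 2 / 4 * TT m a b α β (k + 1, p, q + 2) t
      = (β + q + 1) * TT m a b α β (k, p, q + 1) t - TT m a b α β (k, p, q) t := by
  have h := bj_rec (p := β + q) (by positivity) (b * exp t)
  have x2 : exp (2 * t) = exp t ^ 2 := by rw [← exp_nat_mul]; norm_num
  simp only [TT]
  push_cast
  rw [pow_succ, ← add_assoc, ← add_assoc]
  linear_combination exp (m * t) * exp (2 * t) ^ k * besselJt (α + p) (a * exp t) * h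
    + exp (m * t) * exp (2 * t) ^ k * besselJt (α + p) (a * exp t) *
      besselJt (β + q + 2) (b * exp t) * b ^ 2 / 4 * x2

lemma TT_X (m a b α β : ℝ) (k p q : ℕ) (t : ℝ) :
    exp (2 * t) * TT m a b α β (k, p, q) t = TT m a b α β (k + 1, p, q) t := by
  simp only [TT]; rw [pow_succ]; ring

lemma weak_rel {u : ℝ → ℝ} {μ ν l C : ℝ} (hμ : 1 ≤ μ) (hν : 0 ≤ ν)
    (hu : ContDiffOn ℝ (⊤ : ℕ∞) u (Ioi 0))
    (he : ∀ x > (0 : ℝ), Dop μ ν u x = l * u x)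
    (hC : ∀ x > 0, |u x| ≤ C * (x ^ (-ν) * exp (-x / 4))) (a b : ℝ) :
    let I := fun i p q => II (fun x => u x * x ^ (μ + ν + 1)) (μ / 2) (ν / 2) i p q a b
    (-(1 + b ^ 2) * (μ + 2) * (μ + ν + 2) - a ^ 2 * (ν + 2) * (μ + ν + 2)) * I 0 0 0
    + (a ^ 2 * (2 + 4 * b ^ 2 + 2 * a ^ 2 + ν * (1 + a ^ 2 + b ^ 2))) * I 1 1 0
    + (b ^ 2 * (2 + 2 * b ^ 2 + 4 * a ^ 2 + μ * (1 + a ^ 2 + b ^ 2))) * I 1 0 1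
    + (1 + 2 * a ^ 2 + 2 * b ^ 2 + a ^ 4 + b ^ 4 + 6 * a ^ 2 * b ^ 2) * I 1 0 0
    + (-(a ^ 2 * b ^ 2 * (1 + a ^ 2 + b ^ 2))) * I 2 1 1 = l * I 0 0 0 := by
  intro I
  have hα : 0 ≤ μ / 2 := by linarith
  have hβ : 0 ≤ ν / 2 := by linarith
  set m := μ + ν with hm
  have hd : ∀ k : ℕ, IntegrableOn (fun x => (u x * x ^ (μ + ν + 1)) * x ^ k) (Ioi 0) :=
    d_integrable hμ hu.continuousOn hC
  have hU : ∀ k : ℕ, Integrable (fun t => u (exp t) * exp (m * t) * exp (2 * t) ^ k) := by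
    intro k
    have hk : (0:ℝ) ≤ k := Nat.cast_nonneg k
    have := u_integrable (r := m - 1 + 2 * k) hu.continuousOn hC (by linarith)
    rw [integrable_comp_exp'] at this
    refine this.congr (ae_of_all _ fun t => ?_)
    simp only
    rw [← exp_mul, ← exp_nat_mul]
    rw [mul_left_comm, ← exp_add, mul_assoc, ← exp_add]
    ring_nf
  set T := TT m a b (μ / 2) (ν / 2) with hT
  have hmem : ∀ z, T z ∈ Submodule.span ℝ (range T) := fun z =>
    Submodule.subset_span ⟨z, rfl⟩
  obtain ⟨A1, s1, hA0⟩ := span_deriv hα hβ (hmem (0, 0, 0))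
  obtain ⟨A2, s2, hA1⟩ := span_deriv hα hβ s1
  obtain ⟨A3, s3, hA2⟩ := span_deriv hα hβ s2
  obtain ⟨A4, s4, hA3⟩ := span_deriv hα hβ s3
  obtain ⟨A5, s5, hA4⟩ := span_deriv hα hβ s4
  have hh := besselQ_smooth hu ν 0
  have key := weak_full μ ν l (fun t => u (exp t)) (fun t => eulerOp u (exp t))
    (fun t => eulerOp (eulerOp u) (exp t)) (fun t => besselQ ν 0 u (exp t))
    (fun t => eulerOp (besselQ ν 0 u) (exp t)) (fun t => eulerOp (eulerOp (besselQ ν 0 u)) (exp t))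
    (T (0, 0, 0)) A1 A2 A3 A4 (smooth_comp_exp hu) (smooth_comp_exp (euler_smooth hu))
    (fun t => by
      rw [besselQ_eq hu ν 0 (exp_pos t)]
      have x2 : exp (2 * t) = exp t ^ 2 := by rw [← exp_nat_mul]; norm_num
      rw [x2]; ring)
    (smooth_comp_exp hh) (smooth_comp_exp (euler_smooth hh))
    (fun t => by
      have x2 : exp (2 * t) = exp t ^ 2 := by rw [← exp_nat_mul]; norm_num
      rw [x2]; exact eig_eq hu he (exp_pos t))
    hA0 hA1 hA2 hA3
    (continuous_iff_continuousAt.2 fun t => (hA4 t).continuousAt)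
    (fun k => ⟨span_integrable hα hβ hU (hmem _) k, span_integrable hα hβ hU s1 k,
      span_integrable hα hβ hU s2 k, span_integrable hα hβ hU s3 k, span_integrable hα hβ hU s4 k⟩)
  have D := fun k p q t => TT_deriv m a b hα hβ k p q t
  have Rp := fun k p q t => TT_recp m a b (β := ν / 2) hα k p q t
  have Rq := fun k p q t => TT_recq m a b (α := μ / 2) hβ k p q t
  have RX := fun k p q t => TT_X m a b (μ / 2) (ν / 2) k p q t
  rw [← hT] at D Rp Rq RX
  -- A1
  have eA1 : ∀ t, A1 t = m * T (0, 0, 0) t - a ^ 2 / 2 * T (1, 1, 0) t - b ^ 2 / 2 * T (1, 0, 1) t := by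
    intro t
    have := (hA0 t).unique (D 0 0 0 t)
    rw [this]; push_cast; ring
  have eA2 : ∀ t, A2 t = m * A1 t
      - a ^ 2 / 2 * ((m + 2) * T (1, 1, 0) t - a ^ 2 / 2 * T (2, 2, 0) t - b ^ 2 / 2 * T (2, 1, 1) t)
      - b ^ 2 / 2 * ((m + 2) * T (1, 0, 1) t - a ^ 2 / 2 * T (2, 1, 1) t - b ^ 2 / 2 * T (2, 0, 2) t) := by
    intro t
    have h := ((D 0 0 0 t).const_mul m).sub ((D 1 1 0 t).const_mul (a ^ 2 / 2)) |>.sub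
      ((D 1 0 1 t).const_mul (b ^ 2 / 2))
    have h2 : HasDerivAt A1 _ t := h.congr_of_eventuallyEq (Eventually.of_forall eA1)
    rw [(hA1 t).unique h2, eA1]; push_cast; ring
  have eE : ∀ t, A2 t - (2 * μ + ν) * A1 t + (μ * (μ + ν) - exp (2 * t)) * T (0, 0, 0) t
      = -(1 + a ^ 2 + b ^ 2) * T (1, 0, 0) t + (μ - ν) * (a ^ 2 / 2) * T (1, 1, 0) t
        + a ^ 2 * b ^ 2 / 2 * T (2, 1, 1) t := by
    intro t
    have r1 := Rp 1 0 0 t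
    have r2 := Rq 1 0 0 t
    have r3 := RX 0 0 0 t
    norm_num at r1 r2 r3
    rw [eA2, eA1, hm]
    linear_combination a ^ 2 * r1 + b ^ 2 * r2 - r3
  have dE : ∀ t, HasDerivAt (fun t => A2 t - (2 * μ + ν) * A1 t + (μ * (μ + ν) - exp (2 * t)) * T (0, 0, 0) t)
     (A3 t - (2 * μ + ν) * A2 t + (μ * (μ + ν) - exp (2 * t)) * A1 t
        - 2 * exp (2 * t) * T (0, 0, 0) t) t := by
    intro t
    have e1 : HasDerivAt (fun t => exp (2 * t)) (2 * exp (2 * t)) t :=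
      (((hasDerivAt_id t).const_mul 2).exp).congr_deriv (by simp; ring)
    refine (((hA2 t).sub ((hA1 t).const_mul (2 * μ + ν))).add
      ((e1.const_sub (μ * (μ + ν))).mul (hA0 t))).congr_deriv ?_
    ring
  have dE2 : ∀ t, HasDerivAt (fun t => A3 t - (2 * μ + ν) * A2 t + (μ * (μ + ν) - exp (2 * t)) * A1 t
        - 2 * exp (2 * t) * T (0, 0, 0) t)
     (A4 t - (2 * μ + ν) * A3 t + (μ * (μ + ν) - exp (2 * t)) * A2 t - 4 * exp (2 * t) * A1 t
        - 4 * exp (2 * t) * T (0, 0, 0) t) t := by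
    intro t
    have e1 : HasDerivAt (fun t => exp (2 * t)) (2 * exp (2 * t)) t :=
      (((hasDerivAt_id t).const_mul 2).exp).congr_deriv (by simp; ring)
    refine ((((hA3 t).sub ((hA2 t).const_mul (2 * μ + ν))).add
      ((e1.const_sub (μ * (μ + ν))).mul (hA1 t))).sub ((e1.const_mul 2).mul (hA0 t))).congr_deriv ?_
    ring
  have eE1 : ∀ t, A3 t - (2 * μ + ν) * A2 t + (μ * (μ + ν) - exp (2 * t)) * A1 t
        - 2 * exp (2 * t) * T (0, 0, 0) t
      = (-(1 + a ^ 2 + b ^ 2) * (m + 2) + (μ - ν) * a ^ 2 / 2 * 2) * T (1, 0, 0) t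
       + ((1 + a ^ 2 + b ^ 2) * a ^ 2 / 2 + a ^ 2 * b ^ 2) * T (2, 1, 0) t
       + ((1 + a ^ 2 + b ^ 2) * b ^ 2 / 2 + a ^ 2 * b ^ 2) * T (2, 0, 1) t
       + (μ - ν) * (a ^ 2 / 2) * ν * T (1, 1, 0) t
       + (-((μ - ν) * (a ^ 2 / 2) * b ^ 2 / 2)) * T (2, 1, 1) t := by
    intro t
    have h := (((D 1 0 0 t).const_mul (-(1 + a ^ 2 + b ^ 2))).add
      ((D 1 1 0 t).const_mul ((μ - ν) * (a ^ 2 / 2)))).add ((D 2 1 1 t).const_mul (a ^ 2 * b ^ 2 / 2))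
    have h2 := (dE t).unique (h.congr_of_eventuallyEq (Eventually.of_forall eE))
    rw [h2]
    have r1 := Rp 1 0 0 t
    have r2 := Rp 2 0 1 t
    have r3 := Rq 2 1 0 t
    norm_num at r1 r2 r3
    push_cast
    norm_num
    rw [hm]
    linear_combination - (μ - ν) * a ^ 2 * r1 - a ^ 2 * b ^ 2 * r2 - a ^ 2 * b ^ 2 * r3
  have eE2 : ∀ t, (A4 t - (2 * μ + ν) * A3 t + (μ * (μ + ν) - exp (2 * t)) * A2 t - 4 * exp (2 * t) * A1 t
        - 4 * exp (2 * t) * T (0, 0, 0) t)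
      - ν * (A3 t - (2 * μ + ν) * A2 t + (μ * (μ + ν) - exp (2 * t)) * A1 t
        - 2 * exp (2 * t) * T (0, 0, 0) t)
      - exp (2 * t) * (A2 t - (2 * μ + ν) * A1 t + (μ * (μ + ν) - exp (2 * t)) * T (0, 0, 0) t)
      - l * exp (2 * t) * T (0, 0, 0) t
      = ((-(1 + b ^ 2) * (μ + 2) * (μ + ν + 2) - a ^ 2 * (ν + 2) * (μ + ν + 2)) - l) * T (1, 0, 0) t
    + (a ^ 2 * (2 + 4 * b ^ 2 + 2 * a ^ 2 + ν * (1 + a ^ 2 + b ^ 2))) * T (2, 1, 0) t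
    + (b ^ 2 * (2 + 2 * b ^ 2 + 4 * a ^ 2 + μ * (1 + a ^ 2 + b ^ 2))) * T (2, 0, 1) t
    + (1 + 2 * a ^ 2 + 2 * b ^ 2 + a ^ 4 + b ^ 4 + 6 * a ^ 2 * b ^ 2) * T (2, 0, 0) t
    + (-(a ^ 2 * b ^ 2 * (1 + a ^ 2 + b ^ 2))) * T (3, 1, 1) t := by
    intro t
    have h := (((((D 1 0 0 t).const_mul (-(1 + a ^ 2 + b ^ 2) * (m + 2) + (μ - ν) * a ^ 2 / 2 * 2)).add
      ((D 2 1 0 t).const_mul ((1 + a ^ 2 + b ^ 2) * a ^ 2 / 2 + a ^ 2 * b ^ 2))).add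
      ((D 2 0 1 t).const_mul ((1 + a ^ 2 + b ^ 2) * b ^ 2 / 2 + a ^ 2 * b ^ 2))).add
      ((D 1 1 0 t).const_mul ((μ - ν) * (a ^ 2 / 2) * ν))).add
      ((D 2 1 1 t).const_mul (-((μ - ν) * (a ^ 2 / 2) * b ^ 2 / 2)))
    have h2 := (dE2 t).unique (h.congr_of_eventuallyEq (Eventually.of_forall eE1))
    rw [h2, eE1, eE]
    have r1 := Rp 2 0 0 t
    have r2 := Rq 2 0 0 t
    have r3 := Rp 1 0 0 t
    have r4 := Rp 2 0 1 t
    have r5 := Rq 2 1 0 t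
    have x1 := RX 1 0 0 t
    have x2 := RX 1 1 0 t
    have x3 := RX 2 1 1 t
    have x4 := RX 0 0 0 t
    norm_num at r1 r2 r3 r4 r5 x1 x2 x3 x4
    push_cast
    norm_num
    rw [hm]
    linear_combination - 2 * ((1 + a ^ 2 + b ^ 2) * a ^ 2 / 2 + a ^ 2 * b ^ 2) * r1
      - 2 * ((1 + a ^ 2 + b ^ 2) * b ^ 2 / 2 + a ^ 2 * b ^ 2) * r2
      - 2 * ((μ - ν) * (a ^ 2 / 2) * ν) * r3
      - 2 * (-((μ - ν) * (a ^ 2 / 2) * b ^ 2 / 2)) * (r4 + r5)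
      + (1 + a ^ 2 + b ^ 2) * x1 - (μ - ν) * (a ^ 2 / 2) * x2 - a ^ 2 * b ^ 2 / 2 * x3 - l * x4
  have hI : ∀ k p q, Integrable (fun t => u (exp t) * T (k, p, q) t) ∧
      (∫ t, u (exp t) * T (k + 1, p, q) t) = I k p q := by
    intro k p q
    constructor
    · have := TT_integrable (a := a) (b := b) hα hβ hU 0 (k, p, q)
      simpa using this
    · simp only [I, II]
      rw [integral_comp_exp']
      refine integral_congr_ae (ae_of_all _ fun t => ?_)
      simp only [T, TT]
      have x2 : exp (2 * t) = exp t ^ 2 := by rw [← exp_nat_mul]; norm_num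
      have x3 : exp t ^ (m + 1) = exp (m * t) * exp t := by
        rw [← exp_mul, ← exp_add]; ring_nf
      rw [x2, x3, ← pow_mul]
      ring
  rw [integral_congr_ae (g := fun t =>
      ((-(1 + b ^ 2) * (μ + 2) * (μ + ν + 2) - a ^ 2 * (ν + 2) * (μ + ν + 2)) - l) * (u (exp t) * T (1, 0, 0) t)
    + (a ^ 2 * (2 + 4 * b ^ 2 + 2 * a ^ 2 + ν * (1 + a ^ 2 + b ^ 2))) * (u (exp t) * T (2, 1, 0) t)
    + (b ^ 2 * (2 + 2 * b ^ 2 + 4 * a ^ 2 + μ * (1 + a ^ 2 + b ^ 2))) * (u (exp t) * T (2, 0, 1) t)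
    + (1 + 2 * a ^ 2 + 2 * b ^ 2 + a ^ 4 + b ^ 4 + 6 * a ^ 2 * b ^ 2) * (u (exp t) * T (2, 0, 0) t)
    + (-(a ^ 2 * b ^ 2 * (1 + a ^ 2 + b ^ 2))) * (u (exp t) * T (3, 1, 1) t))
    (ae_of_all _ fun t => by simp only; rw [eE2]; ring)] at key
  have i1 := (hI 1 0 0).1
  have i2 := (hI 2 1 0).1
  have i3 := (hI 2 0 1).1
  have i4 := (hI 2 0 0).1
  have i5 := (hI 3 1 1).1
  rw [integral_add (by fun_prop) (by fun_prop), integral_add (by fun_prop) (by fun_prop),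
    integral_add (by fun_prop) (by fun_prop), integral_add (by fun_prop) (by fun_prop)] at key
  simp only [integral_const_mul] at key
  rw [(hI 0 0 0).2, (hI 1 1 0).2, (hI 1 0 1).2, (hI 1 0 0).2, (hI 2 1 1).2] at key
  linarith

/-- The relation satisfied by the integrals. -/
def WRel (d : ℝ → ℝ) (μ ν l : ℝ) : Prop := ∀ a b : ℝ,
    (-(1 + b ^ 2) * (μ + 2) * (μ + ν + 2) - a ^ 2 * (ν + 2) * (μ + ν + 2)) * II d (μ / 2) (ν / 2) 0 0 0 a b
    + (a ^ 2 * (2 + 4 * b ^ 2 + 2 * a ^ 2 + ν * (1 + a ^ 2 + b ^ 2))) * II d (μ / 2) (ν / 2) 1 1 0 a b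
    + (b ^ 2 * (2 + 2 * b ^ 2 + 4 * a ^ 2 + μ * (1 + a ^ 2 + b ^ 2))) * II d (μ / 2) (ν / 2) 1 0 1 a b
    + (1 + 2 * a ^ 2 + 2 * b ^ 2 + a ^ 4 + b ^ 4 + 6 * a ^ 2 * b ^ 2) * II d (μ / 2) (ν / 2) 1 0 0 a b
    + (-(a ^ 2 * b ^ 2 * (1 + a ^ 2 + b ^ 2))) * II d (μ / 2) (ν / 2) 2 1 1 a b
    = l * II d (μ / 2) (ν / 2) 0 0 0 a b

lemma WRel_swap {d : ℝ → ℝ} {μ ν l : ℝ} (h : WRel d μ ν l) :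
    WRel d ν μ (l + (μ - ν) * (μ + ν + 2)) := by
  intro a b
  have := h b a
  rw [II_swap d (μ / 2) (ν / 2) 0 0 0 b a, II_swap d (μ / 2) (ν / 2) 1 1 0 b a,
    II_swap d (μ / 2) (ν / 2) 1 0 1 b a, II_swap d (μ / 2) (ν / 2) 1 0 0 b a,
    II_swap d (μ / 2) (ν / 2) 2 1 1 b a] at this
  linear_combination this

lemma ode_theta {d : ℝ → ℝ} {μ ν l : ℝ} (hμ : 0 ≤ μ) (hν : 0 ≤ ν)
    (hd : ∀ k : ℕ, IntegrableOn (fun x => d x * x ^ k) (Ioi 0)) (hr : WRel d μ ν l) (φ : ℝ) :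
    ∃ G G' : ℝ → ℝ, ∀ ϑ, 0 < cos ϑ + cos φ →
      HasDerivAt (fun ϑ => (cos ϑ + cos φ) ^ (-((μ + ν + 2) / 2)) *
        II d (μ / 2) (ν / 2) 0 0 0 (sin ϑ / (cos ϑ + cos φ)) (sin φ / (cos ϑ + cos φ))) (G ϑ) ϑ ∧
      HasDerivAt G (G' ϑ) ϑ ∧
      sin ϑ * G' ϑ + (μ + 1) * cos ϑ * G ϑ + l / 4 * sin ϑ *
        ((cos ϑ + cos φ) ^ (-((μ + ν + 2) / 2)) *
        II d (μ / 2) (ν / 2) 0 0 0 (sin ϑ / (cos ϑ + cos φ)) (sin φ / (cos ϑ + cos φ))) = 0 ∧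
      (sin ϑ = 0 → G ϑ = 0) := by
  have hα : 0 ≤ μ / 2 := by linarith
  have hβ : 0 ≤ ν / 2 := by linarith
  set s := (μ + ν + 2) / 2 with hs
  set a : ℝ → ℝ := fun ϑ => sin ϑ / (cos ϑ + cos φ) with ha
  set b : ℝ → ℝ := fun ϑ => sin φ / (cos ϑ + cos φ) with hb
  set I : ℕ → ℕ → ℕ → ℝ → ℝ := fun i p q ϑ => II d (μ / 2) (ν / 2) i p q (a ϑ) (b ϑ) with hI
  set w : ℝ → ℝ := fun ϑ => (1 + a ϑ ^ 2 + b ϑ ^ 2) / 2 with hw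
  set c : ℝ → ℝ := fun ϑ => (cos ϑ + cos φ) ^ (-s) with hc
  set K : ℝ → ℝ := fun ϑ => s * a ϑ * I 0 0 0 ϑ - a ϑ * w ϑ / 2 * I 1 1 0 ϑ - a ϑ * b ϑ ^ 2 / 2 * I 1 0 1 ϑ with hK
  set K' : ℝ → ℝ := fun ϑ => s * w ϑ * I 0 0 0 ϑ
      + s * a ϑ * (-(a ϑ * w ϑ / 2) * I 1 1 0 ϑ - (b ϑ * (a ϑ * b ϑ) / 2) * I 1 0 1 ϑ)
      - (w ϑ ^ 2 + a ϑ ^ 2 * (w ϑ + b ϑ ^ 2)) / 2 * I 1 1 0 ϑ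
      - a ϑ * w ϑ / 2 * (-(a ϑ * w ϑ / 2) * I 2 2 0 ϑ - (b ϑ * (a ϑ * b ϑ) / 2) * I 2 1 1 ϑ)
      - (w ϑ * b ϑ ^ 2 + 2 * a ϑ ^ 2 * b ϑ ^ 2) / 2 * I 1 0 1 ϑ
      - a ϑ * b ϑ ^ 2 / 2 * (-(a ϑ * w ϑ / 2) * I 2 1 1 ϑ - (b ϑ * (a ϑ * b ϑ) / 2) * I 2 0 2 ϑ) with hK'
  refine ⟨fun ϑ => c ϑ * K ϑ, fun ϑ => c ϑ * (s * a ϑ * K ϑ + K' ϑ), fun ϑ hpos => ?_⟩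
  have hne : cos ϑ + cos φ ≠ 0 := hpos.ne'
  have dc0 : HasDerivAt (fun ϑ => cos ϑ + cos φ) (-sin ϑ) ϑ := (hasDerivAt_cos ϑ).add_const _
  have hsc := sin_sq_add_cos_sq ϑ
  have hsc' := sin_sq_add_cos_sq φ
  have cosid : cos ϑ = (cos ϑ + cos φ) * ((1 - a ϑ ^ 2 + b ϑ ^ 2) / 2) := by
    simp only [ha, hb]
    field_simp
    linear_combination hsc - hsc'
  have sinid : sin ϑ = (cos ϑ + cos φ) * a ϑ := by
    simp only [ha]; field_simp
  have da : HasDerivAt a (w ϑ) ϑ := by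
    refine ((hasDerivAt_sin ϑ).div dc0 hne).congr_deriv ?_
    simp only [hw, ha, hb]
    field_simp
    linear_combination hsc - hsc'
  have db : HasDerivAt b (a ϑ * b ϑ) ϑ := by
    refine ((hasDerivAt_const ϑ (sin φ)).div dc0 hne).congr_deriv ?_
    simp only [ha, hb]
    field_simp
    ring
  have dc : HasDerivAt c (s * a ϑ * c ϑ) ϑ := by
    refine (dc0.rpow_const (p := -s) (Or.inl hne)).congr_deriv ?_
    simp only [hc, ha]
    rw [rpow_sub_one hne]; field_simp
  have dI : ∀ i p q, HasDerivAt (I i p q) (-(a ϑ * w ϑ / 2) * I (i + 1) (p + 1) q ϑ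
      - (b ϑ * (a ϑ * b ϑ) / 2) * I (i + 1) p (q + 1) ϑ) ϑ := fun i p q =>
    II_hasDeriv hd hα hβ i p q da db
  have dw : HasDerivAt w (a ϑ * (w ϑ + b ϑ ^ 2)) ϑ := by
    refine ((((da.pow 2).const_add 1).add (db.pow 2)).div_const 2).congr_deriv ?_
    simp; ring
  have dK : HasDerivAt K (K' ϑ) ϑ := by
    refine ((((da.const_mul s).mul (dI 0 0 0)).sub (((da.mul dw).div_const 2).mul (dI 1 1 0))).sub
      (((da.mul (db.pow 2)).div_const 2).mul (dI 1 0 1))).congr_deriv ?_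
    simp only [hK', Pi.mul_apply, Pi.pow_apply]
    norm_num
    ring
  refine ⟨?_, ?_, ?_, ?_⟩
  · refine (dc.mul (dI 0 0 0)).congr_deriv ?_
    simp only [hK]; norm_num; ring
  · refine (dc.mul dK).congr_deriv ?_
    ring
  · have h := hr (a ϑ) (b ϑ)
    have r1 : a ϑ ^ 2 / 4 * I 2 2 0 ϑ = (μ / 2 + (0:ℕ) + 1) * I 1 1 0 ϑ - I 1 0 0 ϑ :=
      II_rec hd hα hβ 1 0 0 (a ϑ) (b ϑ)
    have r2 : b ϑ ^ 2 / 4 * I 2 0 2 ϑ = (ν / 2 + (0:ℕ) + 1) * I 1 0 1 ϑ - I 1 0 0 ϑ :=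
      II_rec' hd hα hβ 1 0 0 (a ϑ) (b ϑ)
    change (-(1 + b ϑ ^ 2) * (μ + 2) * (μ + ν + 2) - a ϑ ^ 2 * (ν + 2) * (μ + ν + 2)) * I 0 0 0 ϑ
      + (a ϑ ^ 2 * (2 + 4 * b ϑ ^ 2 + 2 * a ϑ ^ 2 + ν * (1 + a ϑ ^ 2 + b ϑ ^ 2))) * I 1 1 0 ϑ
      + (b ϑ ^ 2 * (2 + 2 * b ϑ ^ 2 + 4 * a ϑ ^ 2 + μ * (1 + a ϑ ^ 2 + b ϑ ^ 2))) * I 1 0 1 ϑ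
      + (1 + 2 * a ϑ ^ 2 + 2 * b ϑ ^ 2 + a ϑ ^ 4 + b ϑ ^ 4 + 6 * a ϑ ^ 2 * b ϑ ^ 2) * I 1 0 0 ϑ
      + (-(a ϑ ^ 2 * b ϑ ^ 2 * (1 + a ϑ ^ 2 + b ϑ ^ 2))) * I 2 1 1 ϑ = l * I 0 0 0 ϑ at h
    have key : a ϑ * (s * a ϑ * K ϑ + K' ϑ) + (μ + 1) * ((1 - a ϑ ^ 2 + b ϑ ^ 2) / 2) * K ϑ
        + l / 4 * a ϑ * I 0 0 0 ϑ = 0 := by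
      simp only [hK, hK', hw]
      rw [hs]
      push_cast at r1 r2
      linear_combination (-a ϑ / 4) * h + a ϑ * ((1 + a ϑ ^ 2 + b ϑ ^ 2) / 2) ^ 2 * r1
        + a ϑ * (a ϑ ^ 2 * b ϑ ^ 2) * r2
    have : (cos ϑ + cos φ) * c ϑ * (a ϑ * (s * a ϑ * K ϑ + K' ϑ) + (μ + 1) * ((1 - a ϑ ^ 2 + b ϑ ^ 2) / 2) * K ϑ
        + l / 4 * a ϑ * I 0 0 0 ϑ) = 0 := by rw [key, mul_zero]
    change sin ϑ * (c ϑ * (s * a ϑ * K ϑ + K' ϑ)) + (μ + 1) * cos ϑ * (c ϑ * K ϑ)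
      + l / 4 * sin ϑ * (c ϑ * I 0 0 0 ϑ) = 0
    linear_combination this + (c ϑ * (s * a ϑ * K ϑ + K' ϑ) + l / 4 * (c ϑ * I 0 0 0 ϑ)) * sinid
      + (μ + 1) * (c ϑ * K ϑ) * cosid
  · intro h0
    have : a ϑ = 0 := by simp only [ha, h0, zero_div]
    simp only [hK, this]; ring

lemma ode_uniq {m κ T : ℝ} (hm : 0 ≤ m) (hT0 : 0 < T) (hTp : T < π) {Z W W' : ℝ → ℝ}
    (h : ∀ x ∈ Icc 0 T, HasDerivAt Z (W x) x ∧ HasDerivAt W (W' x) x ∧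
      sin x * W' x + m * cos x * W x + κ * sin x * Z x = 0)
    (hZ : Z 0 = 0) (hW : W 0 = 0) : Z T = 0 := by
  have hsT : 0 < sin T := sin_pos_of_pos_of_lt_pi hT0 hTp
  set M := 1 / sin T with hM
  set L := 2 * m * M + |κ| + 1 with hL
  set E : ℝ → ℝ := fun x => exp (-L * x) * (W x ^ 2 + Z x ^ 2) with hE
  have dE : ∀ x ∈ Icc 0 T, HasDerivAt E (exp (-L * x) * (2 * W x * W' x + 2 * Z x * W x
      - L * (W x ^ 2 + Z x ^ 2))) x := by
    intro x hx
    obtain ⟨h1, h2, h3⟩ := h x hx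
    have e1 : HasDerivAt (fun x => exp (-L * x)) (-L * exp (-L * x)) x :=
      (((hasDerivAt_id x).const_mul (-L)).exp).congr_deriv (by simp; ring)
    refine (e1.mul ((h2.pow 2).add (h1.pow 2))).congr_deriv ?_
    simp; ring
  have hanti : AntitoneOn E (Icc 0 T) := by
    refine antitoneOn_of_deriv_nonpos (convex_Icc 0 T)
      (fun x hx => (dE x hx).continuousAt.continuousWithinAt) ?_ ?_
    · intro x hx
      rw [interior_Icc] at hx
      exact (dE x (Ioo_subset_Icc_self hx)).differentiableAt.differentiableWithinAt
    · intro x hx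
      rw [interior_Icc] at hx
      have hx' := Ioo_subset_Icc_self hx
      rw [(dE x hx').deriv]
      obtain ⟨h1, h2, h3⟩ := h x hx'
      have hs : 0 < sin x := sin_pos_of_pos_of_lt_pi hx.1 (hx.2.trans hTp)
      have hcot : -cos x ≤ M * sin x := by
        have h4 : 0 ≤ sin (T - x) := sin_nonneg_of_nonneg_of_le_pi (by linarith [hx.2]) (by linarith [hx.1])
        rw [sin_sub] at h4
        rw [hM, one_div, inv_mul_eq_div, le_div_iff₀ hsT]
        nlinarith [cos_le_one T, neg_one_le_cos T]
      have h5 : W x * W' x ≤ m * M * W x ^ 2 + |κ| / 2 * (W x ^ 2 + Z x ^ 2) := by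
        have e : sin x * (W x * W' x) = m * (-cos x) * W x ^ 2 - κ * (sin x * (Z x * W x)) := by
          linear_combination W x * h3
        have f : m * (-cos x) * W x ^ 2 ≤ m * (M * sin x) * W x ^ 2 := by gcongr
        have g : -(κ * (Z x * W x)) ≤ |κ| / 2 * (W x ^ 2 + Z x ^ 2) := by
          have g1 : -(κ * (Z x * W x)) ≤ |κ| * |Z x * W x| := by
            rw [← abs_mul]; exact neg_le_abs _
          have g2 : |Z x * W x| ≤ (W x ^ 2 + Z x ^ 2) / 2 := by
            rw [abs_le]; constructor <;> nlinarith [sq_nonneg (Z x + W x), sq_nonneg (Z x - W x)]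
          nlinarith [abs_nonneg κ]
        have : sin x * (W x * W' x) ≤ sin x * (m * M * W x ^ 2 + |κ| / 2 * (W x ^ 2 + Z x ^ 2)) := by
          rw [e]
          nlinarith
        exact le_of_mul_le_mul_left this hs
      have h6 : 2 * Z x * W x ≤ W x ^ 2 + Z x ^ 2 := by nlinarith [sq_nonneg (Z x - W x)]
      have h7 : 0 ≤ m * M * Z x ^ 2 := by positivity
      refine mul_nonpos_of_nonneg_of_nonpos (exp_pos _).le ?_
      rw [hL]; nlinarith
  have := hanti (left_mem_Icc.2 hT0.le) (right_mem_Icc.2 hT0.le) hT0.le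
  simp only [hE, hZ, hW] at this
  have hp := exp_pos (-L * T)
  have h8 : W T ^ 2 + Z T ^ 2 ≤ 0 := by
    by_contra hh
    push Not at hh
    have := mul_pos hp hh
    norm_num at *
    linarith
  nlinarith [sq_nonneg (W T), sq_nonneg (Z T)]

/-- `(2x)^z/z!`, zero for negative `z`. -/
noncomputable def ee (z : ℤ) (x : ℝ) : ℝ := if z < 0 then 0 else (2 * x) ^ z.toNat / z.toNat.factorial

lemma ee_deriv (z : ℤ) (x : ℝ) : HasDerivAt (ee z) (2 * ee (z - 1) x) x := by
  rcases lt_trichotomy z 0 with h | h | h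
  · have e : ee z = fun _ => 0 := by ext y; simp [ee, h]
    rw [e]
    have : ee (z - 1) x = 0 := by simp [ee]; omega
    rw [this]; simpa using hasDerivAt_const x (0:ℝ)
  · subst h
    have e : ee 0 = fun _ => 1 := by ext y; simp [ee]
    rw [e]
    have : ee (0 - 1) x = 0 := by simp [ee]
    rw [this]; simpa using hasDerivAt_const x (1:ℝ)
  · obtain ⟨k, rfl⟩ : ∃ k : ℕ, z = k + 1 := ⟨(z - 1).toNat, by omega⟩
    have e1 : ee ((k:ℤ) + 1) = fun y : ℝ => (2 * y) ^ (k + 1) / ((k + 1).factorial : ℝ) := by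
      ext y; simp only [ee]
      rw [if_neg (by omega)]; norm_cast
    have e2 : ee ((k:ℤ) + 1 - 1) x = (2 * x) ^ k / k.factorial := by
      simp [ee]
    rw [e1, e2]
    refine (((((hasDerivAt_id x).const_mul 2).pow (k + 1))).div_const _).congr_deriv ?_
    rw [Nat.factorial_succ]; push_cast
    have : (k.factorial : ℝ) ≠ 0 := by positivity
    simp; field_simp

lemma ee_mul (z : ℤ) (x : ℝ) : 2 * x * ee (z - 1) x = z * ee z x := by
  rcases lt_trichotomy z 0 with h | h | h
  · simp [ee, h]; intro; omega
  · subst h; simp [ee]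
  · obtain ⟨k, rfl⟩ : ∃ k : ℕ, z = k + 1 := ⟨(z - 1).toNat, by omega⟩
    have e1 : ee ((k:ℤ) + 1) x = (2 * x) ^ (k + 1) / (k + 1).factorial := by
      simp only [ee]
      rw [if_neg (by omega)]; norm_cast
    have e2 : ee ((k:ℤ) + 1 - 1) x = (2 * x) ^ k / k.factorial := by
      simp [ee]
    rw [e1, e2, Nat.factorial_succ]; push_cast
    have : (k.factorial : ℝ) ≠ 0 := by positivity
    field_simp
    ring

lemma geg_eq (n N : ℕ) (hN : n < 2 * N) (l x : ℝ) : gegenbauerCt n l x =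
    ∑ k ∈ Finset.range N, (-1) ^ k * Gamma (l + n - k) / k.factorial * ee (n - 2 * k) x := by
  rw [gegenbauerCt]
  have : Finset.range (n / 2 + 1) ⊆ Finset.range N := by
    intro k; simp only [Finset.mem_range]; omega
  rw [← Finset.sum_subset this]
  · refine Finset.sum_congr rfl fun k hk => ?_
    have hk : k < n / 2 + 1 := Finset.mem_range.1 hk
    rw [ee, if_neg (by omega)]
    have : ((n:ℤ) - 2 * k).toNat = n - 2 * k := by omega
    rw [this]
    have h1 : (k.factorial : ℝ) ≠ 0 := by positivity
    have h2 : ((n - 2 * k).factorial : ℝ) ≠ 0 := by positivity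
    field_simp
  · intro k hk1 hk2
    simp only [Finset.mem_range] at hk1 hk2
    rw [ee, if_pos (by omega)]; ring

lemma geg_deriv (n : ℕ) (l x : ℝ) :
    HasDerivAt (gegenbauerCt (n + 1) l) (2 * gegenbauerCt n (l + 1) x) x := by
  rw [geg_eq n (n + 2) (by omega)]
  have : gegenbauerCt (n + 1) l = fun x => ∑ k ∈ Finset.range (n + 2),
      (-1) ^ k * Gamma (l + (n + 1 : ℕ) - k) / k.factorial * ee ((n + 1 : ℕ) - 2 * k) x := by
    ext y; exact geg_eq _ _ (by omega) _ _
  rw [this]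
  refine (HasDerivAt.fun_sum (fun k _ => (ee_deriv _ x).const_mul _)).congr_deriv ?_
  rw [Finset.mul_sum]
  refine Finset.sum_congr rfl fun k _ => ?_
  have e1 : l + ((n + 1 : ℕ):ℝ) - k = l + 1 + n - k := by push_cast; ring
  have e2 : (((n + 1 : ℕ):ℤ) - 2 * k - 1) = n - 2 * k := by push_cast; ring
  rw [e1, e2]; ring

lemma geg_zero (l x : ℝ) : gegenbauerCt 0 l x = Gamma l := by
  simp [gegenbauerCt]

lemma geg_ode (n : ℕ) {l : ℝ} (hl : 0 < l) : ∃ y1 y2 : ℝ → ℝ,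
    (∀ x, HasDerivAt (gegenbauerCt n l) (y1 x) x) ∧ (∀ x, HasDerivAt y1 (y2 x) x) ∧
    ∀ x, (1 - x ^ 2) * y2 x - (2 * l + 1) * x * y1 x + n * (n + 2 * l) * gegenbauerCt n l x = 0 := by
  set N := n / 2 + 1 with hN
  set g : ℕ → ℝ := fun k => (-1) ^ k * Gamma (l + n - k) / k.factorial with hg
  have hG : gegenbauerCt n l = fun x => ∑ k ∈ Finset.range N, g k * ee (n - 2 * k) x := by
    ext x; exact geg_eq n N (by omega) l x
  refine ⟨fun x => ∑ k ∈ Finset.range N, g k * (2 * ee (n - 2 * k - 1) x),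
    fun x => ∑ k ∈ Finset.range N, g k * (2 * (2 * ee (n - 2 * k - 1 - 1) x)), ?_, ?_, ?_⟩
  · intro x; rw [hG]
    exact HasDerivAt.fun_sum (fun k _ => (ee_deriv _ x).const_mul _)
  · intro x
    exact HasDerivAt.fun_sum (fun k _ => ((ee_deriv _ x).const_mul 2).const_mul _)
  · intro x
    rw [hG]
    simp only
    rw [Finset.mul_sum, Finset.mul_sum, Finset.mul_sum, ← Finset.sum_sub_distrib, ← Finset.sum_add_distrib]
    have key : ∀ k ∈ Finset.range N, (1 - x ^ 2) * (g k * (2 * (2 * ee (n - 2 * k - 1 - 1) x)))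
        - (2 * l + 1) * x * (g k * (2 * ee (n - 2 * k - 1) x)) + n * (n + 2 * l) * (g k * ee (n - 2 * k) x)
        = (fun k : ℕ => -(4 * k * (l + n - k) * g k * ee (n - 2 * k) x)) (k + 1)
          - (fun k : ℕ => -(4 * k * (l + n - k) * g k * ee (n - 2 * k) x)) k := by
      intro k hk
      have hk : k < n / 2 + 1 := Finset.mem_range.1 hk
      have m1 := ee_mul (n - 2 * k) x
      have m2 := ee_mul (n - 2 * k - 1) x
      have hz : (n:ℤ) - 2 * ((k + 1 : ℕ) : ℤ) = n - 2 * k - 1 - 1 := by push_cast; ring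
      have gr : ((k + 1 : ℕ) : ℝ) * (l + n - (k + 1 : ℕ)) * g (k + 1) * ee (n - 2 * k - 1 - 1) x = - g k * ee (n - 2 * k - 1 - 1) x := by
        by_cases hkn : k + 1 ≤ n
        · congr 1
          simp only [hg]
          have hkn' : (k:ℝ) + 1 ≤ n := by exact_mod_cast hkn
          have e : l + n - k = (l + n - (k + 1 : ℕ)) + 1 := by push_cast; ring
          rw [e, Gamma_add_one (by push_cast; linarith), Nat.factorial_succ]
          have : (k.factorial : ℝ) ≠ 0 := by positivity
          have h3 : (k:ℝ) + 1 ≠ 0 := by positivity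
          push_cast
          field_simp
          ring
        · have : ee (n - 2 * k - 1 - 1) x = 0 := by rw [ee, if_pos (by omega)]
          rw [this]; ring
      simp only
      rw [hz]
      push_cast at m1 m2 gr ⊢
      linear_combination 4 * gr - g k * (2 * l + 1) * m1 - g k * (2 * x) * m2 - g k * (n - 2 * k - 1) * m1
    rw [Finset.sum_congr rfl key, Finset.sum_range_sub (fun k : ℕ => -(4 * k * (l + n - k) * g k * ee (n - 2 * k) x))]
    have : ee (n - 2 * (N : ℕ)) x = 0 := by rw [ee, if_pos (by omega)]
    simp only [this]; simp

lemma geg_one (n : ℕ) : ∀ {l : ℝ}, 0 < l →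
    gegenbauerCt n l 1 = Gamma l * Gamma (n + 2 * l) / (n.factorial * Gamma (2 * l)) := by
  induction n with
  | zero =>
    intro l hl
    have := (Gamma_pos_of_pos (show 0 < 2 * l by linarith)).ne'
    rw [geg_zero]; simp; field_simp
  | succ n ih =>
    intro l hl
    obtain ⟨y1, y2, h1, h2, h3⟩ := geg_ode (n + 1) hl
    have h4 := h3 1
    rw [(h1 1).unique (geg_deriv n l 1), ih (by linarith)] at h4
    have e1 : Gamma (l + 1) = l * Gamma l := Gamma_add_one hl.ne'
    have e2 : Gamma (2 * (l + 1)) = (2 * l + 1) * (2 * l * Gamma (2 * l)) := by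
      rw [show 2 * (l + 1) = 2 * l + 1 + 1 by ring, Gamma_add_one (by positivity), Gamma_add_one (by positivity)]
    have e3 : Gamma (n + 2 * (l + 1)) = (n + 1 + 2 * l) * Gamma ((n + 1 : ℕ) + 2 * l) := by
      have := Gamma_add_one (s := n + 1 + 2 * l) (by positivity)
      push_cast
      rw [← this]; ring_nf
    rw [e1, e2, e3] at h4
    have p1 := (Gamma_pos_of_pos (show 0 < 2 * l by linarith)).ne'
    have p2 : (n.factorial : ℝ) ≠ 0 := by positivity
    set G := Gamma ((n + 1 : ℕ) + 2 * l)
    have p3 : (n:ℝ) + 1 + 2 * l ≠ 0 := by positivity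
    have p4 : (n:ℝ) + 1 ≠ 0 := by positivity
    have p5 : 2 * l + 1 ≠ 0 := by positivity
    have h5 : (2 * l + 1) * 1 * (2 * (l * Gamma l * ((n + 1 + 2 * l) * G) /
        (n.factorial * ((2 * l + 1) * (2 * l * Gamma (2 * l))))))
        = (n + 1) * (n + 1 + 2 * l) * (Gamma l * G / ((n + 1) * n.factorial * Gamma (2 * l))) := by
      field_simp
    rw [h5] at h4
    rw [Nat.factorial_succ]
    push_cast at h4 ⊢
    refine mul_left_cancel₀ (mul_ne_zero p4 p3) ?_
    linear_combination h4

lemma geg_one_pos (n : ℕ) {l : ℝ} (hl : 0 < l) : 0 < gegenbauerCt n l 1 := by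
  rw [geg_one n hl]
  have p1 := (Gamma_pos_of_pos (show 0 < 2 * l by linarith))
  have p2 := (Gamma_pos_of_pos (show 0 < n + 2 * l by positivity))
  have p3 := Gamma_pos_of_pos hl
  positivity

lemma geg_taylor (n : ℕ) : ∀ (l x : ℝ), gegenbauerCt n l x =
    ∑ i ∈ Finset.range (n + 1), 2 ^ i * gegenbauerCt (n - i) (l + i) 1 * (x - 1) ^ i / i.factorial := by
  induction n with
  | zero => intro l x; simp [geg_zero]
  | succ n ih =>
    intro l x
    set R : ℝ → ℝ := fun x => ∑ i ∈ Finset.range (n + 1 + 1),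
      2 ^ i * gegenbauerCt (n + 1 - i) (l + i) 1 * (x - 1) ^ i / i.factorial with hR
    have dR : ∀ x, HasDerivAt R (2 * gegenbauerCt n (l + 1) x) x := by
      intro x
      have : R = fun x => (∑ i ∈ Finset.range (n + 1),
        2 ^ (i + 1) * gegenbauerCt (n - i) (l + (i + 1 : ℕ)) 1 * (x - 1) ^ (i + 1) / (i + 1).factorial)
          + gegenbauerCt (n + 1) l 1 := by
        ext y; simp only [hR]; rw [Finset.sum_range_succ']; simp
      rw [this]
      refine ((HasDerivAt.fun_sum (fun i _ => ((((hasDerivAt_id x).sub_const 1).pow (i + 1)).const_mul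
        (2 ^ (i + 1) * gegenbauerCt (n - i) (l + (i + 1 : ℕ)) 1)).div_const _)).add_const _).congr_deriv ?_
      rw [ih, Finset.mul_sum]
      refine Finset.sum_congr rfl fun i _ => ?_
      have e : l + ((i + 1 : ℕ) : ℝ) = l + 1 + i := by push_cast; ring
      rw [e, Nat.factorial_succ]
      have : (i.factorial : ℝ) ≠ 0 := by positivity
      have h3 : (i:ℝ) + 1 ≠ 0 := by positivity
      push_cast
      simp
      field_simp
      ring
    have hc := is_const_of_deriv_eq_zero (f := fun x => gegenbauerCt (n + 1) l x - R x)
      (fun x => ((geg_deriv n l x).sub (dR x)).differentiableAt)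
      (fun x => (((geg_deriv n l x).sub (dR x)).deriv).trans (by ring)) x 1
    have h1 : R 1 = gegenbauerCt (n + 1) l 1 := by
      simp only [hR]; rw [Finset.sum_range_succ']; simp
    simp only [h1, sub_self] at hc
    linarith

lemma geg_prop (n : ℕ) {m κ T : ℝ} (hm : 0 < m) (hκ : κ = n * (n + m)) (hT0 : 0 ≤ T) (hTp : T < π)
    {F G G' : ℝ → ℝ}
    (h : ∀ x ∈ Icc 0 T, HasDerivAt F (G x) x ∧ HasDerivAt G (G' x) x ∧
      sin x * G' x + m * cos x * G x + κ * sin x * F x = 0) (hG : G 0 = 0) :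
    F T * gegenbauerCt n (m / 2) 1 = F 0 * gegenbauerCt n (m / 2) (cos T) := by
  rcases hT0.eq_or_lt with rfl | hT
  · simp
  obtain ⟨y1, y2, h1, h2, h3⟩ := geg_ode n (show 0 < m / 2 by linarith)
  set c := gegenbauerCt n (m / 2) 1
  have dY : ∀ x, HasDerivAt (fun x => gegenbauerCt n (m / 2) (cos x)) (-(sin x * y1 (cos x))) x :=
    fun x => ((h1 (cos x)).comp x (hasDerivAt_cos x)).congr_deriv (by ring)
  have dY1 : ∀ x, HasDerivAt (fun x => -(sin x * y1 (cos x)))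
      (-(cos x * y1 (cos x) - sin x ^ 2 * y2 (cos x))) x := fun x =>
    (((hasDerivAt_sin x).mul ((h2 (cos x)).comp x (hasDerivAt_cos x))).neg).congr_deriv (by
      simp only [Function.comp]; ring)
  have := ode_uniq (κ := κ) (Z := fun x => c * F x - F 0 * gegenbauerCt n (m / 2) (cos x))
    (W := fun x => c * G x - F 0 * (-(sin x * y1 (cos x))))
    (W' := fun x => c * G' x - F 0 * (-(cos x * y1 (cos x) - sin x ^ 2 * y2 (cos x))))
    hm.le hT hTp (fun x hx => by
      obtain ⟨k1, k2, k3⟩ := h x hx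
      refine ⟨(k1.const_mul c).sub ((dY x).const_mul _), (k2.const_mul c).sub ((dY1 x).const_mul _), ?_⟩
      have k4 := h3 (cos x)
      have k5 := sin_sq_add_cos_sq x
      rw [hκ] at k3 ⊢
      linear_combination c * k3 - F 0 * sin x * k4 - F 0 * sin x * y2 (cos x) * k5)
    (by simp [c]; ring) (by simp [hG])
  linarith

lemma full_prop {d : ℝ → ℝ} {μ ν : ℝ} {j n : ℕ} (hμ : 0 ≤ μ) (hν : 0 ≤ ν) (hn : (n : ℝ) = j + (μ - ν) / 2)
    (hd : ∀ k : ℕ, IntegrableOn (fun x => d x * x ^ k) (Ioi 0))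
    (hr : WRel d μ ν (4 * j * (j + μ + 1))) {ϑ φ : ℝ} (hϑ : ϑ ∈ Icc 0 π) (hφ : φ ∈ Icc 0 π)
    (hpos : 0 < cos ϑ + cos φ) :
    II d (μ / 2) (ν / 2) 0 0 0 (sin ϑ / (cos ϑ + cos φ)) (sin φ / (cos ϑ + cos φ))
      * gegenbauerCt j ((μ + 1) / 2) 1 * gegenbauerCt n ((ν + 1) / 2) 1
    = II d (μ / 2) (ν / 2) 0 0 0 0 0 * ((cos ϑ + cos φ) / 2) ^ ((μ + ν + 2) / 2)
      * gegenbauerCt j ((μ + 1) / 2) (cos ϑ) * gegenbauerCt n ((ν + 1) / 2) (cos φ) := by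
  have lt_pi : ∀ ϑ φ : ℝ, ϑ ∈ Icc 0 π → 0 < cos ϑ + cos φ → ϑ < π := by
    intro ϑ φ h1 h2
    refine lt_of_le_of_ne h1.2 ?_
    rintro rfl
    rw [cos_pi] at h2
    linarith [cos_le_one φ]
  have hϑp := lt_pi ϑ φ hϑ hpos
  have hφp := lt_pi φ ϑ hφ (by linarith)
  obtain ⟨G, G', h⟩ := ode_theta hμ hν hd hr φ
  have p1 := geg_prop j (m := μ + 1) (κ := j * (j + (μ + 1))) (T := ϑ) (by linarith) rfl hϑ.1 hϑp
    (F := fun ϑ => (cos ϑ + cos φ) ^ (-((μ + ν + 2) / 2)) *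
        II d (μ / 2) (ν / 2) 0 0 0 (sin ϑ / (cos ϑ + cos φ)) (sin φ / (cos ϑ + cos φ)))
    (G := G) (G' := G') (fun x hx => by
      have hc : cos ϑ ≤ cos x := cos_le_cos_of_nonneg_of_le_pi hx.1 hϑp.le hx.2
      obtain ⟨k1, k2, k3, k4⟩ := h x (by linarith)
      refine ⟨k1, k2, ?_⟩
      linear_combination k3) ((h 0 (by
        have hc : cos ϑ ≤ cos 0 := cos_le_cos_of_nonneg_of_le_pi le_rfl hϑp.le hϑ.1
        linarith)).2.2.2 sin_zero)
  obtain ⟨H, H', h'⟩ := ode_theta hν hμ hd (WRel_swap hr) 0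
  have hc1 : ∀ x ∈ Icc 0 φ, 0 < cos x + cos 0 := by
    intro x hx
    have hc : cos φ ≤ cos x := cos_le_cos_of_nonneg_of_le_pi hx.1 hφp.le hx.2
    have := cos_le_one ϑ
    rw [cos_zero]; linarith
  have p2 := geg_prop n (m := ν + 1) (κ := n * (n + (ν + 1))) (T := φ) (by linarith) rfl hφ.1 hφp
    (F := fun φ => (cos φ + cos 0) ^ (-((ν + μ + 2) / 2)) *
        II d (ν / 2) (μ / 2) 0 0 0 (sin φ / (cos φ + cos 0)) (sin 0 / (cos φ + cos 0)))
    (G := H) (G' := H') (fun x hx => by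
      obtain ⟨k1, k2, k3, k4⟩ := h' x (hc1 x hx)
      refine ⟨k1, k2, ?_⟩
      rw [hn]
      linear_combination k3) ((h' 0 (hc1 0 ⟨le_rfl, hφ.1⟩)).2.2.2 sin_zero)
  simp only [cos_zero, sin_zero, zero_div] at p1 p2
  rw [II_swap, II_swap d (ν / 2)] at p2
  set I0 := II d (μ / 2) (ν / 2) 0 0 0 0 0
  rw [add_comm (cos φ) 1, add_comm ν μ] at p2
  rw [div_rpow hpos.le (by norm_num)]
  rw [rpow_neg hpos.le, rpow_neg (by linarith [hc1 φ ⟨hφ.1, le_rfl⟩, cos_zero])] at p1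
  rw [rpow_neg (by linarith [hc1 φ ⟨hφ.1, le_rfl⟩, cos_zero]), rpow_neg (by norm_num)] at p2
  have q1 : 0 < (cos ϑ + cos φ) ^ ((μ + ν + 2) / 2) := rpow_pos_of_pos hpos _
  have q2 : 0 < (1 + cos φ) ^ ((μ + ν + 2) / 2) := rpow_pos_of_pos (by linarith [hc1 φ ⟨hφ.1, le_rfl⟩, cos_zero]) _
  have q3 : (0:ℝ) < 2 ^ ((μ + ν + 2) / 2) := by positivity
  rw [show (1:ℝ) + 1 = 2 by norm_num] at p2
  set P := (cos ϑ + cos φ) ^ ((μ + ν + 2) / 2)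
  set Q := (1 + cos φ) ^ ((μ + ν + 2) / 2)
  set R := (2:ℝ) ^ ((μ + ν + 2) / 2)
  set I1 := II d (μ / 2) (ν / 2) 0 0 0 (sin ϑ / (cos ϑ + cos φ)) (sin φ / (cos ϑ + cos φ))
  set I2 := II d (μ / 2) (ν / 2) 0 0 0 0 (sin φ / (1 + cos φ))
  set c1 := gegenbauerCt j ((μ + 1) / 2) 1
  set c2 := gegenbauerCt n ((ν + 1) / 2) 1
  calc I1 * c1 * c2 = P * (P⁻¹ * I1 * c1) * c2 := by field_simp
    _ = P * gegenbauerCt j ((μ + 1) / 2) (cos ϑ) * (Q⁻¹ * I2 * c2) := by rw [p1]; ring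
    _ = _ := by rw [p2]; field_simp

lemma chu {j : ℕ} : ∀ {X Y : ℝ}, 0 < X → 0 < Y →
    ∑ i ∈ Finset.range (j + 1), (-1) ^ i * (j.choose i) * (Gamma (X + i) / Gamma (Y + i))
      = Gamma X / Gamma (Y + j) * ∏ k ∈ Finset.range j, (Y - X + k) := by
  induction j with
  | zero => intro X Y hX hY; simp
  | succ j ih =>
    intro X Y hX hY
    have h1 := ih hX hY
    have h2 := ih (X := X + 1) (Y := Y + 1) (by linarith) (by linarith)
    have e : ∑ i ∈ Finset.range (j + 1 + 1), (-1) ^ i * ((j + 1).choose i : ℝ) * (Gamma (X + i) / Gamma (Y + i))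
        = (∑ i ∈ Finset.range (j + 1), (-1) ^ i * (j.choose i : ℝ) * (Gamma (X + i) / Gamma (Y + i)))
         - ∑ i ∈ Finset.range (j + 1), (-1) ^ i * (j.choose i : ℝ) * (Gamma (X + 1 + i) / Gamma (Y + 1 + i)) := by
      rw [Finset.sum_range_succ']
      have : ∑ i ∈ Finset.range (j + 1), (-1) ^ (i + 1) * ((j + 1).choose (i + 1) : ℝ) * (Gamma (X + (i + 1 : ℕ)) / Gamma (Y + (i + 1 : ℕ)))
         = (∑ i ∈ Finset.range (j + 1), (-1) ^ (i + 1) * (j.choose (i + 1) : ℝ) * (Gamma (X + (i + 1 : ℕ)) / Gamma (Y + (i + 1 : ℕ))))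
         - ∑ i ∈ Finset.range (j + 1), (-1) ^ i * (j.choose i : ℝ) * (Gamma (X + 1 + i) / Gamma (Y + 1 + i)) := by
        rw [← Finset.sum_sub_distrib]
        refine Finset.sum_congr rfl fun i _ => ?_
        have e1 : X + ((i + 1 : ℕ) : ℝ) = X + 1 + i := by push_cast; ring
        have e2 : Y + ((i + 1 : ℕ) : ℝ) = Y + 1 + i := by push_cast; ring
        rw [e1, e2, Nat.choose_succ_succ]; push_cast; ring
      rw [this]
      have h3 := Finset.sum_range_succ' (fun i => (-1) ^ i * (j.choose i : ℝ) * (Gamma (X + i) / Gamma (Y + i))) (j + 1)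
      rw [Finset.sum_range_succ] at h3
      simp only [Nat.choose_succ_self, Nat.cast_zero, mul_zero, zero_mul, add_zero] at h3
      rw [h3]
      simp
      ring
    rw [e, h1, h2, Finset.prod_range_succ]
    have e3 : Gamma (X + 1) = X * Gamma X := Gamma_add_one hX.ne'
    have e4 : Gamma (Y + 1 + j) = (Y + j) * Gamma (Y + j) := by
      rw [← Gamma_add_one (by positivity)]; ring_nf
    have e5 : Y + ((j + 1 : ℕ) : ℝ) = Y + 1 + j := by push_cast; ring
    have e6 : ∀ k : ℕ, Y + 1 - (X + 1) + (k:ℝ) = Y - X + k := fun k => by ring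
    simp only [e6]
    rw [e5, e4, e3]
    have : Gamma (Y + j) ≠ 0 := (Gamma_pos_of_pos (by positivity)).ne'
    have h' : Y + j ≠ 0 := by positivity
    field_simp
    ring

lemma beta_real {p q : ℝ} (hp : 0 < p) (hq : 0 < q) :
    IntegrableOn (fun v : ℝ => v ^ (p - 1) * (1 - v) ^ (q - 1)) (Ioo 0 1) ∧
    ∫ v in Ioo (0:ℝ) 1, v ^ (p - 1) * (1 - v) ^ (q - 1) = Gamma p * Gamma q / Gamma (p + q) := by
  have hc := Complex.betaIntegral_convergent (u := p) (v := q) (by simpa) (by simpa)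
  rw [intervalIntegrable_iff_integrableOn_Ioo_of_le zero_le_one] at hc
  have hpt : ∀ v ∈ Ioo (0:ℝ) 1, ((v:ℂ) ^ ((p:ℂ) - 1) * (1 - (v:ℂ)) ^ ((q:ℂ) - 1))
      = ((v ^ (p - 1) * (1 - v) ^ (q - 1) : ℝ) : ℂ) := by
    intro v hv
    push_cast
    rw [Complex.ofReal_cpow hv.1.le, Complex.ofReal_cpow (by linarith [hv.2])]
    push_cast; rfl
  have hi : IntegrableOn (fun v : ℝ => v ^ (p - 1) * (1 - v) ^ (q - 1)) (Ioo 0 1) := by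
    refine (hc.congr_fun hpt measurableSet_Ioo).re.congr (ae_of_all _ fun v => ?_)
    simp only [RCLike.re_to_complex, Complex.ofReal_re]
  refine ⟨hi, ?_⟩
  have h := Complex.betaIntegral_eq_Gamma_mul_div p q (by simpa) (by simpa)
  rw [Complex.betaIntegral, intervalIntegral.integral_of_le zero_le_one, integral_Ioc_eq_integral_Ioo,
    setIntegral_congr_fun measurableSet_Ioo hpt, integral_complex_ofReal, ← Complex.ofReal_add,
    Complex.Gamma_ofReal, Complex.Gamma_ofReal, Complex.Gamma_ofReal] at h
  exact_mod_cast h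

lemma beta_Ioi {p q : ℝ} (hp : 0 < p) (hq : 0 < q) :
    IntegrableOn (fun a : ℝ => a ^ (2 * p - 1) * (1 + a ^ 2) ^ (-(p + q))) (Ioi 0) ∧
    ∫ a in Ioi (0:ℝ), a ^ (2 * p - 1) * (1 + a ^ 2) ^ (-(p + q))
      = 1 / 2 * (Gamma p * Gamma q / Gamma (p + q)) := by
  obtain ⟨h1, h2⟩ := beta_real hp hq
  set f : ℝ → ℝ := fun a => a ^ 2 / (1 + a ^ 2)
  set f' : ℝ → ℝ := fun a => 2 * a / (1 + a ^ 2) ^ 2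
  have hder : ∀ a ∈ Ioi (0:ℝ), HasDerivWithinAt f (f' a) (Ioi 0) a := by
    intro a _
    have : (1 + a ^ 2) ≠ 0 := by positivity
    have := ((hasDerivAt_pow 2 a).div ((hasDerivAt_pow 2 a).const_add 1) this)
    refine (this.congr_deriv ?_).hasDerivWithinAt
    simp only [f']; field_simp; norm_num; ring
  have hinj : InjOn f (Ioi 0) := by
    intro a ha b hb hab
    have ha : 0 < a := ha
    have hb : 0 < b := hb
    simp only [f] at hab
    rw [div_eq_div_iff (by positivity) (by positivity)] at hab
    have : a ^ 2 = b ^ 2 := by linarith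
    exact (pow_left_inj₀ ha.le hb.le (by norm_num)).1 this
  have himg : f '' (Ioi 0) = Ioo 0 1 := by
    ext v; constructor
    · rintro ⟨a, ha, rfl⟩
      have ha : 0 < a := ha
      exact ⟨by simp only [f]; positivity, by simp only [f]; rw [div_lt_one (by positivity)]; linarith⟩
    · rintro ⟨h0, h1⟩
      have h3 : 0 < 1 - v := by linarith
      refine ⟨√(v / (1 - v)), sqrt_pos.2 (by positivity), ?_⟩
      simp only [f]
      rw [sq_sqrt (by positivity)]; field_simp; ring
  have hpt : ∀ a ∈ Ioi (0:ℝ), |f' a| • (f a ^ (p - 1) * (1 - f a) ^ (q - 1))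
      = 2 * (a ^ (2 * p - 1) * (1 + a ^ 2) ^ (-(p + q))) := by
    intro a ha
    have ha : 0 < a := ha
    have e1 : 1 - f a = (1 + a ^ 2)⁻¹ := by simp only [f]; field_simp; ring
    have hs : 0 < 1 + a ^ 2 := by positivity
    rw [abs_of_pos (by simp only [f']; positivity), smul_eq_mul, e1]
    simp only [f, f']
    rw [div_rpow (by positivity) hs.le, inv_rpow hs.le, ← rpow_neg hs.le, ← rpow_natCast a 2,
      ← rpow_mul ha.le]
    push_cast
    rw [div_eq_mul_inv (a ^ (2 * (p - 1))), ← rpow_neg (by positivity), ← rpow_natCast _ 2, div_eq_mul_inv (2 * a),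
      ← rpow_neg (by positivity)]
    rw [show a ^ (2 * p - 1) = a ^ (2 * (p - 1)) * a by rw [← rpow_add_one ha.ne']; ring_nf]
    rw [show -(p + q) = -((2:ℕ):ℝ) + -(p - 1) + -(q - 1) by push_cast; ring, rpow_add (by positivity),
      rpow_add (by positivity)]
    ring
  rw [← himg] at h1 h2
  rw [integrableOn_image_iff_integrableOn_abs_deriv_smul measurableSet_Ioi hder hinj] at h1
  rw [integral_image_eq_integral_abs_deriv_smul measurableSet_Ioi hder hinj,
    setIntegral_congr_fun measurableSet_Ioi hpt, integral_const_mul] at h2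
  refine ⟨?_, by linarith⟩
  refine ((h1.congr_fun hpt measurableSet_Ioi).const_mul (1 / 2)).congr (ae_of_all _ fun a => ?_)
  simp only; ring

lemma gauss_mom {k r : ℝ} (hk : 0 < k) (hr : 0 < r) :
    IntegrableOn (fun a : ℝ => a ^ (2 * r - 1) * exp (-k * a ^ 2)) (Ioi 0) ∧
    ∫ a in Ioi (0:ℝ), a ^ (2 * r - 1) * exp (-k * a ^ 2) = 1 / 2 * Gamma r * k ^ (-r) := by
  constructor
  · exact integrableOn_rpow_mul_exp_neg_mul_sq hk (by linarith)
  · have := integral_rpow_mul_exp_neg_mul_rpow (p := 2) (q := 2 * r - 1) (b := k) (by norm_num)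
      (by linarith) hk
    rw [show -(2 * r - 1 + 1) / 2 = -r by ring, show (2 * r - 1 + 1) / 2 = r by ring] at this
    simp only [rpow_two] at this
    rw [this]; ring

lemma exp_hs (z : ℝ) : HasSum (fun m : ℕ => z ^ m / m.factorial) (exp z) := by
  have h := NormedSpace.expSeries_div_hasSum_exp z
  rw [Real.exp_eq_exp_ℝ]
  exact h

lemma bessel_gauss {α k : ℝ} (hα : 0 ≤ α) (hk : 0 < k) (x : ℝ) :
    ∫ a in Ioi (0:ℝ), besselJt α (a * x) * (a ^ (2 * α + 1) * exp (-k * a ^ 2))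
      = 1 / 2 * k ^ (-(α + 1)) * exp (-(x ^ 2 / (4 * k))) := by
  set c : ℕ → ℝ := fun m => (-1) ^ m / (m.factorial * Gamma (m + α + 1)) * (x / 2) ^ (2 * m)
  obtain ⟨F, hFd⟩ : ∃ F : ℕ → ℝ → ℝ, F = fun m a => c m * (a ^ (2 * (m + α + 1) - 1) * exp (-k * a ^ 2)) := ⟨_, rfl⟩
  have hg : ∀ m : ℕ, 0 < Gamma (m + α + 1) := fun m => Gamma_pos_of_pos (by positivity)
  have hF : ∀ m, IntegrableOn (F m) (Ioi 0) := fun m => hFd ▸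
    (gauss_mom hk (by positivity : (0:ℝ) < m + α + 1)).1.const_mul _
  have hkm : ∀ m : ℕ, k ^ (-(m + α + 1)) = k ^ (-(α + 1)) / k ^ m := by
    intro m
    rw [show -((m:ℝ) + α + 1) = -(α + 1) - m by ring, rpow_sub hk, rpow_natCast]
  have hxp : ∀ m : ℕ, (x / 2) ^ (2 * m) = (x ^ 2 / (4 * k)) ^ m * k ^ m := by
    intro m
    rw [pow_mul, ← mul_pow]; congr 1; field_simp; norm_num
  have hI : ∀ m, ∫ a in Ioi (0:ℝ), F m a
      = 1 / 2 * k ^ (-(α + 1)) * ((-(x ^ 2 / (4 * k))) ^ m / m.factorial) := by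
    intro m
    simp only [hFd]
    rw [integral_const_mul, (gauss_mom hk (by positivity : (0:ℝ) < m + α + 1)).2, hkm]
    simp only [c]
    have := (hg m).ne'
    rw [hxp m, neg_pow (x ^ 2 / (4 * k))]
    field_simp
  have hN : ∀ m, ∫ a in Ioi (0:ℝ), ‖F m a‖
      = 1 / 2 * k ^ (-(α + 1)) * ((x ^ 2 / (4 * k)) ^ m / m.factorial) := by
    intro m
    have : ∀ a ∈ Ioi (0:ℝ), ‖F m a‖ = |c m| * (a ^ (2 * (m + α + 1) - 1) * exp (-k * a ^ 2)) := by
      intro a ha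
      have ha : 0 < a := ha
      simp only [hFd]
      rw [norm_mul, norm_eq_abs, norm_eq_abs, abs_of_pos (a := a ^ _ * _) (by positivity)]
    rw [setIntegral_congr_fun measurableSet_Ioi this,
      integral_const_mul, (gauss_mom hk (by positivity : (0:ℝ) < m + α + 1)).2, hkm]
    simp only [c]
    have := hg m
    have h2 := this.ne'
    rw [abs_mul, abs_div, abs_pow, abs_neg, abs_one, one_pow,
      abs_of_pos (by positivity : 0 < (m.factorial : ℝ) * Gamma (m + α + 1)), hxp m,
      abs_of_nonneg (by positivity : 0 ≤ (x ^ 2 / (4 * k)) ^ m * k ^ m)]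
    field_simp
  have hsm : Summable fun m => ∫ a in Ioi (0:ℝ), ‖F m a‖ := by
    have h0 := (Real.summable_pow_div_factorial (x ^ 2 / (4 * k))).mul_left
      (1 / 2 * k ^ (-(α + 1)))
    exact h0.congr fun m => (hN m).symm
  have hs : HasSum (fun m => ∫ a in Ioi (0:ℝ), F m a) (∫ a in Ioi (0:ℝ), ∑' m, F m a) :=
    hasSum_integral_of_summable_integral_norm hF hsm
  have hs2 : HasSum (fun m : ℕ => 1 / 2 * k ^ (-(α + 1)) * ((-(x ^ 2 / (4 * k))) ^ m / m.factorial))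
      (1 / 2 * k ^ (-(α + 1)) * exp (-(x ^ 2 / (4 * k)))) := by
    exact (exp_hs (-(x ^ 2 / (4 * k)))).mul_left _
  simp only [hI] at hs
  rw [← hs.unique hs2]
  refine setIntegral_congr_fun measurableSet_Ioi fun a ha => ?_
  have ha : 0 < a := ha
  have h3 := (bj_hasSum hα (a * x)).mul_right (a ^ (2 * α + 1) * exp (-k * a ^ 2))
  rw [← h3.tsum_eq]
  refine tsum_congr fun m => ?_
  simp only [hFd, c]
  rw [show 2 * ((m:ℝ) + α + 1) - 1 = (2 * α + 1) + (2 * m : ℕ) by push_cast; ring,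
    rpow_add_natCast ha.ne', mul_div_assoc, mul_pow]
  ring

lemma fub {d : ℝ → ℝ} {α k : ℝ} (hα : 0 ≤ α) (hk : 0 < k) (hd : IntegrableOn d (Ioi 0)) :
    ∫ a in Ioi (0:ℝ), (∫ x in Ioi (0:ℝ), d x * besselJt α (a * x)) * (a ^ (2 * α + 1) * exp (-k * a ^ 2))
      = ∫ x in Ioi (0:ℝ), d x * (1 / 2 * k ^ (-(α + 1)) * exp (-(x ^ 2 / (4 * k)))) := by
  have hg : IntegrableOn (fun a : ℝ => a ^ (2 * α + 1) * exp (-k * a ^ 2)) (Ioi 0) :=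
    integrableOn_rpow_mul_exp_neg_mul_sq hk (by linarith)
  have hp := Integrable.mul_prod hg hd
  have hJ : Continuous fun z : ℝ × ℝ => besselJt α (z.1 * z.2) :=
    (bj_cont hα).comp (continuous_fst.mul continuous_snd)
  have hi := hp.bdd_mul (c := 1 / Gamma (α + 1)) hJ.aestronglyMeasurable
    (ae_of_all _ fun z => by rw [norm_eq_abs]; exact bj_bound hα _)
  have hsw := integral_integral_swap (f := fun a x => besselJt α (a * x) *
    (a ^ (2 * α + 1) * exp (-k * a ^ 2) * d x)) hi
  calc _ = ∫ a in Ioi (0:ℝ), ∫ x in Ioi (0:ℝ), besselJt α (a * x) *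
    (a ^ (2 * α + 1) * exp (-k * a ^ 2) * d x) := by
        congr 1; ext a
        rw [← integral_mul_const]; congr 1; ext x; ring
    _ = ∫ x in Ioi (0:ℝ), ∫ a in Ioi (0:ℝ), besselJt α (a * x) *
    (a ^ (2 * α + 1) * exp (-k * a ^ 2) * d x) := hsw
    _ = _ := by
        congr 1; ext x
        rw [← bessel_gauss hα hk x, ← integral_const_mul]; congr 1; ext a; ring

lemma lim_left {G : ℝ → ℝ} (hG : IntegrableOn G (Ioi 0)) :
    Tendsto (fun e : ℝ => ∫ a in Ioi (0:ℝ), G a * exp (-(e ^ 2 / 4) * a ^ 2))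
      (nhdsWithin 0 (Ioi 0)) (nhds (∫ a in Ioi (0:ℝ), G a)) := by
  refine tendsto_integral_filter_of_dominated_convergence (fun a => ‖G a‖) ?_ ?_ hG.norm ?_
  · refine Eventually.of_forall fun e => hG.1.mul ?_
    exact (by fun_prop : Continuous fun a : ℝ => exp (-(e ^ 2 / 4) * a ^ 2)).aestronglyMeasurable
  · refine Eventually.of_forall fun e => ae_of_all _ fun a => ?_
    rw [norm_mul]
    have : ‖exp (-(e ^ 2 / 4) * a ^ 2)‖ ≤ 1 := by
      rw [norm_eq_abs, abs_of_pos (exp_pos _), exp_le_one_iff]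
      have : 0 ≤ e ^ 2 / 4 * a ^ 2 := by positivity
      linarith
    exact mul_le_of_le_one_right (norm_nonneg _) this
  · refine ae_of_all _ fun a => ?_
    have : ContinuousAt (fun e : ℝ => G a * exp (-(e ^ 2 / 4) * a ^ 2)) 0 := by fun_prop
    have h := this.tendsto.mono_left (nhdsWithin_le_nhds (s := Ioi 0))
    simpa using h

lemma scale {u : ℝ → ℝ} {μ ν e : ℝ} (he : 0 < e) :
    ∫ x in Ioi (0:ℝ), (u x * x ^ (μ + ν + 1)) *
      (1 / 2 * (e ^ 2 / 4) ^ (-(μ / 2 + 1)) * exp (-(x ^ 2 / (4 * (e ^ 2 / 4)))))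
    = 1 / 2 * 4 ^ (μ / 2 + 1) * ∫ y in Ioi (0:ℝ), ((e * y) ^ ν * u (e * y)) *
      (y ^ (2 * (μ / 2 + 1) - 1) * exp (-1 * y ^ 2)) := by
  have h := integral_comp_mul_left_Ioi (fun x => (u x * x ^ (μ + ν + 1)) *
      (1 / 2 * (e ^ 2 / 4) ^ (-(μ / 2 + 1)) * exp (-(x ^ 2 / (4 * (e ^ 2 / 4)))))) 0 he
  rw [mul_zero, smul_eq_mul, eq_inv_mul_iff_mul_eq₀ he.ne'] at h
  rw [← h, ← integral_const_mul, ← integral_const_mul]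
  refine setIntegral_congr_fun measurableSet_Ioi fun y hy => ?_
  have hy : 0 < y := hy
  have e1 : (e ^ 2 / 4) ^ (-(μ / 2 + 1)) = 4 ^ (μ / 2 + 1) * e ^ (-(μ + 1)) / e := by
    rw [rpow_neg (by positivity), ← inv_rpow (by positivity), inv_div, div_rpow (by norm_num) (by positivity),
      ← rpow_natCast, ← rpow_mul he.le, mul_div_assoc, div_eq_mul_inv, ← rpow_neg he.le,
      ← rpow_sub_one he.ne']
    congr 2; push_cast; ring
  have e2 : (e * y) ^ (μ + ν + 1) = (e * y) ^ ν * (e ^ (μ + 1) * y ^ (μ + 1)) := by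
    rw [← mul_rpow he.le hy.le, ← rpow_add (by positivity)]; ring_nf
  rw [e1, e2, show 2 * (μ / 2 + 1) - 1 = μ + 1 by ring, rpow_neg he.le,
    show -((e * y) ^ 2 / (4 * (e ^ 2 / 4))) = -1 * y ^ 2 by field_simp]
  have : 0 < e ^ (μ + 1) := rpow_pos_of_pos he _
  field_simp

lemma lim_right {u : ℝ → ℝ} {μ ν C B : ℝ} (hμ : 0 ≤ μ) (hu : ContinuousOn u (Ioi 0))
    (hC0 : 0 ≤ C)
    (hC : ∀ x > 0, |u x| ≤ C * (x ^ (-ν) * exp (-x / 4)))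
    (hB : Tendsto (fun x : ℝ => x ^ ν * u x) (nhdsWithin 0 (Ioi 0)) (nhds B)) :
    Tendsto (fun e : ℝ => ∫ x in Ioi (0:ℝ), (u x * x ^ (μ + ν + 1)) *
      (1 / 2 * (e ^ 2 / 4) ^ (-(μ / 2 + 1)) * exp (-(x ^ 2 / (4 * (e ^ 2 / 4))))))
      (nhdsWithin 0 (Ioi 0)) (nhds (4 ^ (μ / 2) * Gamma (μ / 2 + 1) * B)) := by
  have hm := gauss_mom (k := 1) (r := μ / 2 + 1) one_pos (by positivity)
  have key : Tendsto (fun e : ℝ => ∫ y in Ioi (0:ℝ), ((e * y) ^ ν * u (e * y)) *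
      (y ^ (2 * (μ / 2 + 1) - 1) * exp (-1 * y ^ 2))) (nhdsWithin 0 (Ioi 0))
      (nhds (∫ y in Ioi (0:ℝ), B * (y ^ (2 * (μ / 2 + 1) - 1) * exp (-1 * y ^ 2)))) := by
    refine tendsto_integral_filter_of_dominated_convergence
      (fun y => C * (y ^ (2 * (μ / 2 + 1) - 1) * exp (-1 * y ^ 2))) ?_ ?_ (hm.1.const_mul C) ?_
    · filter_upwards [self_mem_nhdsWithin] with e he
      have he : 0 < e := he
      refine AEStronglyMeasurable.mul ?_ hm.1.1
      refine ContinuousOn.aestronglyMeasurable ?_ measurableSet_Ioi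
      have hmap : MapsTo (fun y => e * y) (Ioi 0) (Ioi 0) := fun y hy => mul_pos he hy
      have hc : ContinuousOn (fun y : ℝ => e * y) (Ioi 0) := by fun_prop
      refine ContinuousOn.mul (hc.rpow_const fun y hy => Or.inl (hmap hy).ne') (hu.comp hc hmap)
    · filter_upwards [self_mem_nhdsWithin] with e he
      refine (ae_restrict_iff' measurableSet_Ioi).2 (ae_of_all _ fun y hy => ?_)
      have hx : 0 < e * y := mul_pos he hy
      have hy : 0 < y := hy
      rw [norm_mul, norm_eq_abs, norm_eq_abs, abs_of_pos (a := y ^ _ * _) (by positivity)]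
      refine mul_le_mul_of_nonneg_right ?_ (by positivity)
      rw [abs_mul, abs_of_pos (rpow_pos_of_pos hx _)]
      calc (e * y) ^ ν * |u (e * y)| ≤ (e * y) ^ ν * (C * ((e * y) ^ (-ν) * exp (-(e * y) / 4))) :=
            mul_le_mul_of_nonneg_left (hC _ hx) (by positivity)
        _ = C * exp (-(e * y) / 4) := by
            rw [rpow_neg hx.le]
            have := (rpow_pos_of_pos hx ν).ne'
            field_simp
        _ ≤ C := mul_le_of_le_one_right hC0 (by rw [exp_le_one_iff]; linarith)
    · refine (ae_restrict_iff' measurableSet_Ioi).2 (ae_of_all _ fun y hy => ?_)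
      refine Tendsto.mul_const _ ?_
      refine hB.comp ?_
      have hy : 0 < y := hy
      refine tendsto_nhdsWithin_iff.2 ⟨?_, ?_⟩
      · have : ContinuousAt (fun e : ℝ => e * y) 0 := by fun_prop
        have h := this.tendsto.mono_left (nhdsWithin_le_nhds (s := Ioi 0))
        simpa using h
      · filter_upwards [self_mem_nhdsWithin] with e he
        exact mul_pos he hy
  have h2 := key.const_mul (1 / 2 * 4 ^ (μ / 2 + 1))
  rw [integral_const_mul, hm.2, one_rpow] at h2
  rw [show 4 ^ (μ / 2) * Gamma (μ / 2 + 1) * B = 1 / 2 * 4 ^ (μ / 2 + 1) * (B * (1 / 2 * Gamma (μ / 2 + 1) * 1)) by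
    rw [rpow_add_one (by norm_num)]; ring]
  refine h2.congr' ?_
  filter_upwards [self_mem_nhdsWithin] with e he
  exact (scale he).symm

lemma moment {u : ℝ → ℝ} {μ ν C B : ℝ} (hμ : 0 ≤ μ) (hu : ContinuousOn u (Ioi 0))
    (hC0 : 0 ≤ C)
    (hC : ∀ x > 0, |u x| ≤ C * (x ^ (-ν) * exp (-x / 4)))
    (hB : Tendsto (fun x : ℝ => x ^ ν * u x) (nhdsWithin 0 (Ioi 0)) (nhds B))
    (hd : IntegrableOn (fun x => u x * x ^ (μ + ν + 1)) (Ioi 0))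
    (hG : IntegrableOn (fun a => (∫ x in Ioi (0:ℝ), u x * x ^ (μ + ν + 1) * besselJt (μ / 2) (a * x))
      * a ^ (μ + 1)) (Ioi 0)) :
    ∫ a in Ioi (0:ℝ), (∫ x in Ioi (0:ℝ), u x * x ^ (μ + ν + 1) * besselJt (μ / 2) (a * x)) * a ^ (μ + 1)
      = 4 ^ (μ / 2) * Gamma (μ / 2 + 1) * B := by
  refine tendsto_nhds_unique (lim_left hG) ((lim_right hμ hu hC0 hC hB).congr' ?_)
  filter_upwards [self_mem_nhdsWithin] with e he
  have he : 0 < e := he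
  rw [← fub (by positivity) (by positivity) hd]
  congr 1; ext a
  rw [show 2 * (μ / 2) + 1 = μ + 1 by ring]; ring

lemma prod_desc (j m : ℕ) :
    ∏ k ∈ Finset.range j, (-((j:ℝ) + m) + k) = (-1) ^ j * ((j + m).factorial / m.factorial) := by
  have h1 : ∏ k ∈ Finset.range j, (-((j:ℝ) + m) + k) = (-1) ^ j * ((j + m).descFactorial j : ℝ) := by
    rw [Nat.descFactorial_eq_prod_range]
    push_cast
    rw [← Finset.card_range j, ← Finset.prod_const, Finset.card_range, ← Finset.prod_mul_distrib]
    refine Finset.prod_congr rfl fun k hk => ?_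
    have := Finset.mem_range.1 hk
    rw [Nat.cast_sub (by omega)]; push_cast; ring
  have h2 := Nat.factorial_mul_descFactorial (Nat.le_add_right j m)
  rw [Nat.add_sub_cancel_left] at h2
  rw [h1, ← h2]
  push_cast
  have : (m.factorial : ℝ) ≠ 0 := by positivity
  field_simp

lemma geg_int_term {j i : ℕ} (hij : i ≤ j) {μ ν : ℝ} (hμ : 0 ≤ μ) (hν : 0 < ν) :
    2 ^ i * gegenbauerCt (j - i) ((μ + 1) / 2 + i) 1 * (-2) ^ i / i.factorial *
      (1 / 2 * (Gamma (μ / 2 + 1 + i) * Gamma (ν / 2) / Gamma (μ / 2 + 1 + i + ν / 2)))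
    = 2 ^ (-(μ + 1)) * √π * Gamma (ν / 2) / j.factorial *
      ((-1) ^ i * (j.choose i) * (Gamma (j + μ + 1 + i) / Gamma ((μ + ν + 2) / 2 + i))) := by
  rw [geg_one _ (by positivity)]
  have hd := Real.Gamma_mul_Gamma_add_half ((μ + 1) / 2 + i)
  rw [show (μ + 1) / 2 + i + 1 / 2 = μ / 2 + 1 + i by ring] at hd
  have hG : 0 < Gamma (2 * ((μ + 1) / 2 + i)) := Gamma_pos_of_pos (by positivity)
  have hG2 : 0 < Gamma ((μ + ν + 2) / 2 + i) := Gamma_pos_of_pos (by positivity)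
  rw [Nat.cast_sub hij, show (j:ℝ) - i + 2 * ((μ + 1) / 2 + i) = j + μ + 1 + i by ring,
    show μ / 2 + 1 + (i:ℝ) + ν / 2 = (μ + ν + 2) / 2 + i by ring, Nat.cast_choose ℝ hij]
  have hp : (2:ℝ) ^ (1 - 2 * ((μ + 1) / 2 + (i:ℝ))) = 2 * 2 ^ (-(μ + 1)) / 4 ^ i := by
    rw [show 1 - 2 * ((μ + 1) / 2 + (i:ℝ)) = -(μ + 1) + 1 - (2 * i : ℕ) by push_cast; ring,
      rpow_sub_natCast (by norm_num), rpow_add_one (by norm_num), pow_mul]; norm_num; ring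
  rw [hp] at hd
  have e4 : (2:ℝ) ^ i * (-2) ^ i = (-1) ^ i * 4 ^ i := by
    rw [← mul_pow, ← mul_pow]; norm_num
  have f1 : (i.factorial : ℝ) ≠ 0 := by positivity
  have f2 : ((j - i).factorial : ℝ) ≠ 0 := by positivity
  have f3 : (j.factorial : ℝ) ≠ 0 := by positivity
  calc _ = (2 ^ i * (-2) ^ i) * (Gamma ((μ + 1) / 2 + i) * Gamma (μ / 2 + 1 + i)) *
        (Gamma (j + μ + 1 + i) * Gamma (ν / 2) /
        (2 * (j - i).factorial * i.factorial * Gamma (2 * ((μ + 1) / 2 + i)) * Gamma ((μ + ν + 2) / 2 + i))) := by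
        field_simp
    _ = _ := by
        rw [e4, hd]; field_simp

lemma geg_int {j m : ℕ} {μ ν : ℝ} (hν : 0 < ν) (hm : μ = ν + 2 * m) :
    IntegrableOn (fun a : ℝ => (1 / (1 + a ^ 2)) ^ ((μ + ν + 2) / 2) *
      gegenbauerCt j ((μ + 1) / 2) ((1 - a ^ 2) / (1 + a ^ 2)) * a ^ (μ + 1)) (Ioi 0) ∧
    ∫ a in Ioi (0:ℝ), (1 / (1 + a ^ 2)) ^ ((μ + ν + 2) / 2) *
      gegenbauerCt j ((μ + 1) / 2) ((1 - a ^ 2) / (1 + a ^ 2)) * a ^ (μ + 1)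
    = 2 ^ (-(μ + 1)) * √π * Gamma (ν / 2) / j.factorial *
      (Gamma (j + μ + 1) / Gamma ((μ + ν + 2) / 2 + j) * ((-1) ^ j * ((j + m).factorial / m.factorial))) := by
  have hμ : 0 ≤ μ := by rw [hm]; positivity
  obtain ⟨c, hc⟩ : ∃ c : ℕ → ℝ, c = fun i => 2 ^ i * gegenbauerCt (j - i) ((μ + 1) / 2 + i) 1 * (-2) ^ i / i.factorial :=
    ⟨_, rfl⟩
  obtain ⟨F, hF⟩ : ∃ F : ℕ → ℝ → ℝ, F = fun (i : ℕ) (a : ℝ) =>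
    a ^ (2 * (μ / 2 + 1 + i) - 1) * (1 + a ^ 2) ^ (-(μ / 2 + 1 + i + ν / 2)) := ⟨_, rfl⟩
  have hb : ∀ i : ℕ, IntegrableOn (F i) (Ioi 0) ∧ ∫ a in Ioi (0:ℝ), F i a =
      1 / 2 * (Gamma (μ / 2 + 1 + i) * Gamma (ν / 2) / Gamma (μ / 2 + 1 + i + ν / 2)) := by
    intro i; rw [hF]
    exact beta_Ioi (by positivity) (by positivity)
  have hpt : ∀ a ∈ Ioi (0:ℝ), ∑ i ∈ Finset.range (j + 1), c i * F i a =
      (1 / (1 + a ^ 2)) ^ ((μ + ν + 2) / 2) *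
      gegenbauerCt j ((μ + 1) / 2) ((1 - a ^ 2) / (1 + a ^ 2)) * a ^ (μ + 1) := by
    intro a ha
    have ha : 0 < a := ha
    have hs : 0 < 1 + a ^ 2 := by positivity
    rw [geg_taylor, Finset.mul_sum, Finset.sum_mul]
    refine Finset.sum_congr rfl fun i _ => ?_
    have hx : (1 - a ^ 2) / (1 + a ^ 2) - 1 = (-2) * a ^ 2 / (1 + a ^ 2) := by field_simp; ring
    rw [hx, hc, hF]
    simp only
    rw [show 2 * (μ / 2 + 1 + (i:ℝ)) - 1 = μ + 1 + (2 * i : ℕ) by push_cast; ring,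
      rpow_add_natCast ha.ne', show -(μ / 2 + 1 + (i:ℝ) + ν / 2) = -((μ + ν + 2) / 2) - (i : ℕ) by ring,
      rpow_sub_natCast hs.ne', div_pow, mul_pow, one_div, inv_rpow hs.le, ← rpow_neg hs.le, ← pow_mul a]
    ring
  have hintg : ∀ i ∈ Finset.range (j + 1), IntegrableOn (fun a => c i * F i a) (Ioi 0) := fun i _ =>
    (hb i).1.const_mul _
  constructor
  · exact IntegrableOn.congr_fun (integrable_finsetSum _ hintg) hpt measurableSet_Ioi
  · rw [← setIntegral_congr_fun measurableSet_Ioi hpt, integral_finsetSum _ hintg]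
    have hX : 0 < (j:ℝ) + μ + 1 := by positivity
    have hY : 0 < (μ + ν + 2) / 2 := by positivity
    have hch := chu (j := j) hX hY
    rw [show ∏ k ∈ Finset.range j, ((μ + ν + 2) / 2 - (j + μ + 1) + (k:ℝ)) = ∏ k ∈ Finset.range j, (-((j:ℝ) + m) + k) from
      Finset.prod_congr rfl fun k _ => by rw [hm]; ring, prod_desc] at hch
    rw [← hch, Finset.mul_sum]
    refine Finset.sum_congr rfl fun i hi => ?_
    rw [integral_const_mul, (hb i).2, hc]
    exact geg_int_term (by have := Finset.mem_range.1 hi; omega) hμ hν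

lemma II_a0 {d : ℝ → ℝ} {α β : ℝ} (a : ℝ) :
    II d α β 0 0 0 a 0 = (∫ x in Ioi (0:ℝ), d x * besselJt α (a * x)) * (1 / Gamma (β + 1)) := by
  rw [II, ← integral_mul_const]
  refine setIntegral_congr_fun measurableSet_Ioi fun x _ => ?_
  simp [bj_zero]

/-- Value of the profile along the line `b = 0`. -/
lemma line_val {d : ℝ → ℝ} {μ ν : ℝ} {j n : ℕ} {I0 : ℝ}
    (hν : 0 ≤ ν)
    (hfull : ∀ ϑ ∈ Icc (0:ℝ) π, ∀ φ ∈ Icc (0:ℝ) π, 0 < cos ϑ + cos φ →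
      II d (μ/2) (ν/2) 0 0 0 (sin ϑ/(cos ϑ+cos φ)) (sin φ/(cos ϑ+cos φ)) *
        gegenbauerCt j ((μ+1)/2) 1 * gegenbauerCt n ((ν+1)/2) 1
      = I0 * ((cos ϑ+cos φ)/2)^((μ+ν+2)/2) * gegenbauerCt j ((μ+1)/2) (cos ϑ)
        * gegenbauerCt n ((ν+1)/2) (cos φ)) {a : ℝ} (ha : 0 < a) :
    (∫ x in Ioi (0:ℝ), d x * besselJt (μ / 2) (a * x)) * (1 / Gamma (ν / 2 + 1)) *
      gegenbauerCt j ((μ+1)/2) 1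
      = I0 * (1 / (1 + a ^ 2)) ^ ((μ + ν + 2) / 2) *
        gegenbauerCt j ((μ+1)/2) ((1 - a ^ 2) / (1 + a ^ 2)) := by
  have h0 : 0 < arctan a := arctan_pos.2 ha
  have h1 := arctan_lt_pi_div_two a
  have hs : 0 < 1 + a ^ 2 := by positivity
  have hc : cos (2 * arctan a) = (1 - a ^ 2) / (1 + a ^ 2) := by
    rw [cos_two_mul, cos_sq_arctan]; field_simp; ring
  have hsn : sin (2 * arctan a) = 2 * a / (1 + a ^ 2) := by
    rw [sin_two_mul, sin_arctan, cos_arctan]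
    have := sq_sqrt hs.le
    have h3 : 0 < √(1 + a ^ 2) := sqrt_pos.2 hs
    field_simp; rw [this]
  have hsum : (1 - a ^ 2) / (1 + a ^ 2) + 1 = 2 / (1 + a ^ 2) := by field_simp; ring
  have h := hfull (2 * arctan a) ⟨by linarith, by linarith⟩ 0 ⟨le_rfl, pi_pos.le⟩
    (by rw [hc, cos_zero, hsum]; positivity)
  rw [hc, hsn, cos_zero, sin_zero, hsum, zero_div,
    show 2 * a / (1 + a ^ 2) / (2 / (1 + a ^ 2)) = a by field_simp,
    show 2 / (1 + a ^ 2) / 2 = 1 / (1 + a ^ 2) by field_simp] at h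
  have h2 := mul_right_cancel₀ (geg_one_pos n (by positivity : 0 < (ν + 1) / 2)).ne' h
  rw [← h2, II_a0]

theorem main_real {u : ℝ → ℝ} {μ ν B : ℝ} {j m : ℕ} (hν : 1 ≤ ν) (hm : μ = ν + 2 * m)
    (hu : ContDiffOn ℝ (⊤ : ℕ∞) u (Ioi 0))
    (hL : IntegrableOn (fun x => u x ^ 2 * x ^ (μ + ν + 1)) (Ioi 0))
    (he : ∀ x > (0 : ℝ), Dop μ ν u x = 4 * j * (j + μ + 1) * u x)
    (hB : Tendsto (fun x : ℝ => x ^ ν * u x) (nhdsWithin 0 (Ioi 0)) (nhds B))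
    {ϑ φ : ℝ} (hϑ : ϑ ∈ Icc (0:ℝ) π) (hφ : φ ∈ Icc (0:ℝ) π) (hpos : 0 < cos ϑ + cos φ) :
    ∫ x in Ioi (0 : ℝ), u x * besselJt (μ / 2) (sin ϑ / (cos ϑ + cos φ) * x)
            * besselJt (ν / 2) (sin φ / (cos ϑ + cos φ) * x) * x ^ (μ + ν + 1)
    = ((-1) ^ j * (j.factorial * (2 : ℝ) ^ (2 * μ + ν) * Gamma ((μ + 2) / 2) * Gamma ((μ - ν + 2) / 2)
                * Gamma (j + (μ - ν + 2) / 2))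
              / (Gamma (j + (μ - ν + 2) / 2) * π * Gamma (j + μ + 1)) * (2 / Gamma (ν / 2)) * B)
            * ((cos ϑ + cos φ) / 2) ^ ((μ + ν + 2) / 2)
            * gegenbauerCt j ((μ + 1) / 2) (cos ϑ)
            * gegenbauerCt (j + m) ((ν + 1) / 2) (cos φ) := by
  have hμ : 1 ≤ μ := by
    have : (0:ℝ) ≤ m := by positivity
    linarith
  have hμ0 : 0 ≤ μ := by linarith
  have hν0 : 0 < ν := by linarith
  have hl : 0 ≤ 4 * (j:ℝ) * (j + μ + 1) := by positivity
  obtain ⟨C, hC0, hC⟩ := u_bound hν0.le hμ0 hl hu hL he hB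
  have hn : ((j + m : ℕ) : ℝ) = j + (μ - ν) / 2 := by rw [hm]; push_cast; ring
  obtain ⟨d, hd⟩ : ∃ d : ℝ → ℝ, d = fun x => u x * x ^ (μ + ν + 1) := ⟨_, rfl⟩
  have hdi : ∀ k : ℕ, IntegrableOn (fun x => d x * x ^ k) (Ioi 0) := fun k => by
    rw [hd]; exact d_integrable hμ hu.continuousOn hC k
  have hr : WRel d μ ν (4 * j * (j + μ + 1)) := by
    rw [hd]; exact fun a b => weak_rel hμ hν0.le hu he hC a b
  obtain ⟨I0, hI0⟩ : ∃ I0, I0 = II d (μ / 2) (ν / 2) 0 0 0 0 0 := ⟨_, rfl⟩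
  have hfull : ∀ ϑ ∈ Icc (0:ℝ) π, ∀ φ ∈ Icc (0:ℝ) π, 0 < cos ϑ + cos φ →
      II d (μ/2) (ν/2) 0 0 0 (sin ϑ/(cos ϑ+cos φ)) (sin φ/(cos ϑ+cos φ)) *
        gegenbauerCt j ((μ+1)/2) 1 * gegenbauerCt (j + m) ((ν+1)/2) 1
      = I0 * ((cos ϑ+cos φ)/2)^((μ+ν+2)/2) * gegenbauerCt j ((μ+1)/2) (cos ϑ)
        * gegenbauerCt (j + m) ((ν+1)/2) (cos φ) := by
    intro ϑ h1 φ h2 h3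
    rw [hI0]
    exact full_prop hμ0 hν0.le hn hdi hr h1 h2 h3
  have hline := fun (a : ℝ) (ha : 0 < a) => line_val hν0.le hfull ha
  obtain ⟨Cj, hCj⟩ : ∃ Cj, Cj = gegenbauerCt j ((μ+1)/2) 1 := ⟨_, rfl⟩
  obtain ⟨Cn, hCn⟩ : ∃ Cn, Cn = gegenbauerCt (j + m) ((ν+1)/2) 1 := ⟨_, rfl⟩
  have hCj0 : 0 < Cj := hCj ▸ geg_one_pos j (by positivity)
  have hCn0 : 0 < Cn := hCn ▸ geg_one_pos (j + m) (by positivity)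
  have hg1 : 0 < Gamma (ν / 2 + 1) := Gamma_pos_of_pos (by positivity)
  obtain ⟨hGi, hGv⟩ := geg_int (j := j) hν0 hm
  have hpt : ∀ a ∈ Ioi (0:ℝ), Gamma (ν / 2 + 1) / Cj * I0 * ((1 / (1 + a ^ 2)) ^ ((μ + ν + 2) / 2) *
      gegenbauerCt j ((μ + 1) / 2) ((1 - a ^ 2) / (1 + a ^ 2)) * a ^ (μ + 1))
      = (∫ x in Ioi (0:ℝ), u x * x ^ (μ + ν + 1) * besselJt (μ / 2) (a * x)) * a ^ (μ + 1) := by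
    intro a ha
    have h := hline a ha
    rw [← hCj] at h
    simp only [hd] at h
    calc _ = Gamma (ν / 2 + 1) / Cj * (I0 * (1 / (1 + a ^ 2)) ^ ((μ + ν + 2) / 2) *
      gegenbauerCt j ((μ + 1) / 2) ((1 - a ^ 2) / (1 + a ^ 2))) * a ^ (μ + 1) := by ring
      _ = _ := by rw [← h]; field_simp
  have hmom := moment hμ0 hu.continuousOn hC0 hC hB (by have := hdi 0; simpa [hd] using this)
    (IntegrableOn.congr_fun (hGi.const_mul _) hpt measurableSet_Ioi)
  rw [← setIntegral_congr_fun measurableSet_Ioi hpt, integral_const_mul, hGv] at hmom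
  have hdup := Real.Gamma_mul_Gamma_add_half ((ν + 1) / 2)
  rw [show (ν + 1) / 2 + 1 / 2 = ν / 2 + 1 by ring, show 2 * ((ν + 1) / 2) = ν + 1 by ring,
    show 1 - (ν + 1) = -ν by ring] at hdup
  have hCnv : Cn = Gamma ((ν + 1) / 2) * Gamma ((μ + ν + 2) / 2 + j) / ((j + m).factorial * Gamma (ν + 1)) := by
    rw [hCn, geg_one _ (by positivity), hn]
    congr 2
    · congr 1; ring
    · congr 2; ring
  have hGm : Gamma ((μ - ν + 2) / 2) = m.factorial := by
    rw [show (μ - ν + 2) / 2 = m + 1 by rw [hm]; ring, Gamma_nat_eq_factorial]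
  have hI : ∫ x in Ioi (0 : ℝ), u x * besselJt (μ / 2) (sin ϑ / (cos ϑ + cos φ) * x)
            * besselJt (ν / 2) (sin φ / (cos ϑ + cos φ) * x) * x ^ (μ + ν + 1)
      = II d (μ/2) (ν/2) 0 0 0 (sin ϑ/(cos ϑ+cos φ)) (sin φ/(cos ϑ+cos φ)) := by
    rw [II]
    refine setIntegral_congr_fun measurableSet_Ioi fun x _ => ?_
    simp only [hd, Nat.cast_zero, add_zero, mul_zero, pow_zero]; ring
  have hK : I0 = ((-1) ^ j * (j.factorial * (2 : ℝ) ^ (2 * μ + ν) * Gamma ((μ + 2) / 2) * Gamma ((μ - ν + 2) / 2)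
                * Gamma (j + (μ - ν + 2) / 2))
              / (Gamma (j + (μ - ν + 2) / 2) * π * Gamma (j + μ + 1)) * (2 / Gamma (ν / 2)) * B) * (Cj * Cn) := by
    have g1 : 0 < Gamma (j + (μ - ν + 2) / 2) := Gamma_pos_of_pos (by
      rw [show (μ - ν + 2) / 2 = m + 1 by rw [hm]; ring]; positivity)
    have g2 : 0 < Gamma (j + μ + 1) := Gamma_pos_of_pos (by positivity)
    have g3 : 0 < Gamma (ν / 2) := Gamma_pos_of_pos (by positivity)
    have g4 : 0 < Gamma ((μ + ν + 2) / 2 + j) := Gamma_pos_of_pos (by positivity)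
    have g5 : 0 < Gamma ((ν + 1) / 2) := Gamma_pos_of_pos (by positivity)
    have g6 : 0 < Gamma (ν + 1) := Gamma_pos_of_pos (by positivity)
    have p1 : (2:ℝ) ^ (2 * μ + ν) = 2 ^ μ * 2 ^ μ * 2 ^ ν := by
      rw [← rpow_add (by norm_num), ← rpow_add (by norm_num)]; ring_nf
    have p2 : (2:ℝ) ^ (-(μ + 1)) = (2 ^ μ)⁻¹ / 2 := by
      rw [show -(μ + 1) = -μ - 1 by ring, rpow_sub_one (by norm_num), rpow_neg (by norm_num)]
    have p3 : (4:ℝ) ^ (μ / 2) = 2 ^ μ := by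
      rw [show (4:ℝ) = 2 ^ (2:ℝ) by norm_num, ← rpow_mul (by norm_num)]; ring_nf
    have p4 : (2:ℝ) ^ (-ν) = (2 ^ ν)⁻¹ := rpow_neg (by norm_num) _
    have q1 : (0:ℝ) < 2 ^ μ := by positivity
    have q2 : (0:ℝ) < 2 ^ ν := by positivity
    have hsp : √π * √π = π := mul_self_sqrt pi_pos.le
    have hsp0 : 0 < √π := sqrt_pos.2 pi_pos
    have hs1 : ((-1:ℝ)) ^ j * (-1) ^ j = 1 := by rw [← mul_pow]; norm_num
    have hs0 : ((-1:ℝ)) ^ j ≠ 0 := by intro h; rw [h] at hs1; norm_num at hs1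
    rw [p2, p3] at hmom
    rw [p4] at hdup
    rw [hGm, p1, show (μ + 2) / 2 = μ / 2 + 1 by ring]
    -- solve hdup for the half-integer Gamma value
    have hCn2 : Cn * Gamma (ν / 2 + 1) = (2 ^ ν)⁻¹ * √π * Gamma ((μ + ν + 2) / 2 + j) / (j + m).factorial := by
      rw [hCnv]
      calc _ = (Gamma ((ν + 1) / 2) * Gamma (ν / 2 + 1)) * (Gamma ((μ + ν + 2) / 2 + j) / ((j + m).factorial * Gamma (ν + 1))) := by
            field_simp
        _ = _ := by rw [hdup]; field_simp
    have f1 : (0:ℝ) < (j + m).factorial := by positivity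
    have f2 : (0:ℝ) < m.factorial := by positivity
    have f3 : (0:ℝ) < j.factorial := by positivity
    have hB2 : 2 ^ μ * Gamma (μ / 2 + 1) * B = I0 / (Cj * Cn) * ((-1) ^ j * π * Gamma (ν / 2) * Gamma (j + μ + 1) /
        (2 * 2 ^ μ * 2 ^ ν * j.factorial * m.factorial)) := by
      rw [← hmom]
      calc _ = (Cn * Gamma (ν / 2 + 1)) * (I0 / (Cj * Cn) * ((2 ^ μ)⁻¹ / 2 * √π * Gamma (ν / 2) / j.factorial *
            (Gamma (j + μ + 1) / Gamma ((μ + ν + 2) / 2 + j) * ((-1) ^ j * ((j + m).factorial / m.factorial))))) := by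
              field_simp
        _ = I0 / (Cj * Cn) * ((-1) ^ j * (√π * √π) * Gamma (ν / 2) * Gamma (j + μ + 1) /
        (2 * 2 ^ μ * 2 ^ ν * j.factorial * m.factorial)) := by
              rw [hCn2]; field_simp
        _ = _ := by rw [hsp]
    symm
    generalize Gamma (j + (μ - ν + 2) / 2) = gg at g1 ⊢
    calc _ = (2 ^ μ * Gamma (μ / 2 + 1) * B) * ((-1) ^ j * (2 * 2 ^ μ * 2 ^ ν * j.factorial * m.factorial) /
          (π * Gamma (ν / 2) * Gamma (j + μ + 1)) * (Cj * Cn)) := by field_simp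
      _ = ((-1) ^ j * (-1) ^ j) * I0 := by rw [hB2]; field_simp
      _ = I0 := by rw [hs1, one_mul]
  have hfin := hfull ϑ hϑ φ hφ hpos
  rw [← hCj, ← hCn, hK] at hfin
  rw [hI]
  apply mul_right_cancel₀ hCj0.ne'
  apply mul_right_cancel₀ hCn0.ne'
  rw [hfin]
  ring

/-- **Theorem B, case `ν > 0`.** -/
theorem theoremB_nu_pos (μ ν : ℤ) (hcond : IntCond μ ν) (hν : 0 < ν) (j : ℕ) (u : ℝ → ℝ)
    (hu_smooth : ContDiffOn ℝ (⊤ : ℕ∞) u (Set.Ioi 0))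
    (hu_L2 : MeasureTheory.IntegrableOn
      (fun x => u x ^ 2 * x ^ ((μ : ℝ) + ν + 1)) (Set.Ioi 0))
    (hu_eig : ∀ x > (0 : ℝ), Dop μ ν u x = 4 * j * (j + (μ : ℝ) + 1) * u x)
    (B : ℝ) (hB : Filter.Tendsto (fun x : ℝ => x ^ (ν : ℝ) * u x)
      (nhdsWithin 0 (Set.Ioi 0)) (nhds B)) :
    ∀ ϑ ∈ Set.Icc (0 : ℝ) Real.pi, ∀ φ ∈ Set.Icc (0 : ℝ) Real.pi,
      Real.cos ϑ + Real.cos φ > 0 →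
      ∫ x in Set.Ioi (0 : ℝ),
          u x * besselJt ((μ : ℝ) / 2) (Real.sin ϑ / (Real.cos ϑ + Real.cos φ) * x)
            * besselJt ((ν : ℝ) / 2) (Real.sin φ / (Real.cos ϑ + Real.cos φ) * x)
            * x ^ ((μ : ℝ) + ν + 1)
        = ((-1) ^ j * (j.factorial * (2 : ℝ) ^ (2 * (μ : ℝ) + ν)
                * Real.Gamma (((μ : ℝ) + 2) / 2) * Real.Gamma (((μ : ℝ) - ν + 2) / 2)
                * Real.Gamma (j + ((μ : ℝ) - ν + 2) / 2))
              / (Real.Gamma (j + ((μ : ℝ) - ν + 2) / 2) * Real.pi * Real.Gamma (j + (μ : ℝ) + 1))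
              * (2 / Real.Gamma ((ν : ℝ) / 2)) * B)
            * ((Real.cos ϑ + Real.cos φ) / 2) ^ (((μ : ℝ) + ν + 2) / 2)
            * gegenbauerCt j (((μ : ℝ) + 1) / 2) (Real.cos ϑ)
            * gegenbauerCt (j + ((μ - ν) / 2).toNat) (((ν : ℝ) + 1) / 2) (Real.cos φ) := by
  obtain ⟨h1, h2, h3, h4⟩ := hcond
  intro ϑ hϑ φ hφ hpos
  obtain ⟨r, hr⟩ := h3
  have hm : (μ - ν) / 2 = (((μ - ν) / 2).toNat : ℤ) := by
    rw [Int.toNat_of_nonneg]; omega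
  have hmu : μ = ν + 2 * (((μ - ν) / 2).toNat : ℤ) := by omega
  have hmr : (μ : ℝ) = ν + 2 * (((μ - ν) / 2).toNat : ℝ) := by exact_mod_cast hmu
  have hν1 : (1 : ℝ) ≤ ν := by exact_mod_cast hν
  exact main_real hν1 hmr hu_smooth hu_L2 hu_eig hB hϑ hφ hpos
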